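/- arXiv:2207.12017 — 5 statements merged into one kernel-verified Lean document; each statement's English description precedes it below -/
import Mathlib

section
/- Let 𝓜 = (M_k) be a regular sequence, m_k = M_k/k!, and let c > 1 be a constant with c > (m_{k+1}/m_k)^{1/k} for every k ≥ 1. Then for every j ∈ ℕ and every r > 0 one has h₁(r)/r^j ≤ c^{j(j+1)/2} · h₁(c^j r). -/
open scoped BigOperators

/-- `m_k = M_k / k!` -/
noncomputable def DCm (M : ℕ → ℝ) (k : ℕ) : ℝ := M k / (Nat.factorial k)

/-- A sequence `M` of non-negative reals is regular if, with `m_k = M_k/k!`: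
(a) `m_0 = m_1 = 1`; (b) `m_k² ≤ m_{k-1} m_{k+1}` for `k ≥ 1`;
(c) `sup_{k≥1} (m_{k+1}/m_k)^{1/k} < ∞`; (d) `m_k^{1/k} → ∞`. -/
def DCRegular (M : ℕ → ℝ) : Prop :=
  (∀ k, 0 ≤ M k) ∧
  DCm M 0 = 1 ∧ DCm M 1 = 1 ∧
  (∀ k : ℕ, 1 ≤ k → (DCm M k) ^ 2 ≤ DCm M (k - 1) * DCm M (k + 1)) ∧
  (∃ B : ℝ, ∀ k : ℕ, 1 ≤ k → (DCm M (k + 1) / DCm M k) ^ ((1 : ℝ) / k) ≤ B) ∧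
  Filter.Tendsto (fun k : ℕ => (DCm M k) ^ ((1 : ℝ) / k)) Filter.atTop Filter.atTop

/-- `h(r) = inf { m_k r^k : k ∈ ℕ }`. -/
noncomputable def DCh (M : ℕ → ℝ) (r : ℝ) : ℝ :=
  sInf {x : ℝ | ∃ k : ℕ, x = DCm M k * r ^ k}

/-- `h₁(r) = inf { m_k r^{k-1} : k ≥ 1 }`. -/
noncomputable def DCh1 (M : ℕ → ℝ) (r : ℝ) : ℝ :=
  sInf {x : ℝ | ∃ k : ℕ, 1 ≤ k ∧ x = DCm M k * r ^ (k - 1)}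

/-! Log-convexity makes every `m_k` positive, so the hypothesis on `c` says `m_{k+1} ≤ c^k m_k`.
Iterating it `j` times from `k = n + 1` multiplies the bound by
`c^{(n+1) + ⋯ + (n+j)} = c^{jn} c^{j(j+1)/2}`, and `c^{jn}` is exactly what replacing `r` by
`c^j r` contributes to `r^n`. Hence each term of the infimum `h₁(c^j r)`, multiplied by
`r^j c^{j(j+1)/2}`, dominates the term of `h₁(r)` lying `j` places further on.
-/

section OrderedSemiring

variable {R : Type*}

theorem pos_succ_of_sq_le_mul [Semiring R] [LinearOrder R] [IsStrictOrderedRing R] {a : ℕ → R}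
    (h₀ : 0 ≤ a 0) (h₁ : 0 < a 1) (ha : ∀ n, a (n + 1) ^ 2 ≤ a n * a (n + 2)) (n : ℕ) :
    0 < a (n + 1) := by
  suffices h : 0 ≤ a n ∧ 0 < a (n + 1) from h.2
  induction n with
  | zero => exact ⟨h₀, h₁⟩
  | succ n ih =>
    obtain ⟨hn, hn₁⟩ := ih
    have hmul : 0 < a n * a (n + 2) := (pow_pos hn₁ 2).trans_le (ha n)
    exact ⟨hn₁.le, pos_of_mul_pos_right hmul hn⟩

theorem le_pow_mul_of_forall_succ_le [CommSemiring R] [PartialOrder R] [IsOrderedRing R]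
    {a : ℕ → R} {c : R} (hc : 0 ≤ c) (ha : ∀ n, a (n + 1) ≤ c ^ (n + 1) * a n) (n j : ℕ) :
    a (n + j) ≤ c ^ (j * n + j * (j + 1) / 2) * a n := by
  induction j with
  | zero => simp
  | succ j ih =>
    have htriangle : (j + 1) * (j + 1 + 1) / 2 = j * (j + 1) / 2 + (j + 1) := by
      simpa only [Nat.add_sub_cancel, mul_comm] using Nat.triangle_succ (j + 1)
    calc a (n + (j + 1))
        ≤ c ^ (n + j + 1) * a (n + j) := ha (n + j)
      _ ≤ c ^ (n + j + 1) * (c ^ (j * n + j * (j + 1) / 2) * a n) := by gcongr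
      _ = c ^ ((j + 1) * n + (j + 1) * (j + 1 + 1) / 2) * a n := by
        rw [htriangle]
        ring

end OrderedSemiring

theorem iInf_mul_pow_le {a : ℕ → ℝ} {c r : ℝ} (ha₀ : ∀ n, 0 ≤ a n) (hc : 0 ≤ c)
    (ha : ∀ n, a (n + 1) ≤ c ^ (n + 1) * a n) (hr : 0 ≤ r) (j : ℕ) :
    ⨅ n, a n * r ^ n ≤ r ^ j * c ^ (j * (j + 1) / 2) * ⨅ n, a n * (c ^ j * r) ^ n := by
  have hbdd : BddBelow (Set.range fun n => a n * r ^ n) :=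
    ⟨0, Set.forall_mem_range.2 fun n => mul_nonneg (ha₀ n) (pow_nonneg hr n)⟩
  rw [Real.mul_iInf_of_nonneg (by positivity)]
  refine le_ciInf fun n => ?_
  calc ⨅ n, a n * r ^ n
      ≤ a (n + j) * r ^ (n + j) := ciInf_le hbdd (n + j)
    _ ≤ c ^ (j * n + j * (j + 1) / 2) * a n * r ^ (n + j) := by
      gcongr
      exact le_pow_mul_of_forall_succ_le hc ha n j
    _ = r ^ j * c ^ (j * (j + 1) / 2) * (a n * (c ^ j * r) ^ n) := by ring

theorem le_pow_mul_of_div_rpow_one_div_le {x y c : ℝ} {k : ℕ} (hk : k ≠ 0) (hx : 0 ≤ x)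
    (hy : 0 < y) (h : (x / y) ^ ((1 : ℝ) / k) ≤ c) : x ≤ c ^ k * y := by
  have hxy : 0 ≤ x / y := div_nonneg hx hy.le
  have hc : 0 ≤ c := (Real.rpow_nonneg hxy _).trans h
  rw [one_div, Real.rpow_inv_le_iff_of_pos hxy hc (by positivity), Real.rpow_natCast] at h
  exact (div_le_iff₀ hy).1 h

theorem DCh1_eq_iInf (M : ℕ → ℝ) (r : ℝ) : DCh1 M r = ⨅ n : ℕ, DCm M (n + 1) * r ^ n := by
  refine congrArg sInf (Set.ext fun x => ⟨?_, ?_⟩)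
  · rintro ⟨k, hk, rfl⟩
    exact ⟨k - 1, by simp only [Nat.sub_add_cancel hk]⟩
  · rintro ⟨n, rfl⟩
    exact ⟨n + 1, Nat.le_add_left 1 n, rfl⟩

theorem DCRegular.DCm_succ_pos {M : ℕ → ℝ} (hreg : DCRegular M) (n : ℕ) : 0 < DCm M (n + 1) := by
  obtain ⟨-, h₀, h₁, hlog, -, -⟩ := hreg
  exact pos_succ_of_sq_le_mul (h₀ ▸ zero_le_one) (h₁ ▸ zero_lt_one)
    (fun n => hlog (n + 1) (Nat.le_add_left 1 n)) n

theorem DCRegular.DCm_succ_le {M : ℕ → ℝ} (hreg : DCRegular M) {c : ℝ} {k : ℕ} (hk : 1 ≤ k)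
    (hc : (DCm M (k + 1) / DCm M k) ^ ((1 : ℝ) / k) ≤ c) : DCm M (k + 1) ≤ c ^ k * DCm M k := by
  have hpos : 0 < DCm M k := Nat.sub_add_cancel hk ▸ hreg.DCm_succ_pos (k - 1)
  exact le_pow_mul_of_div_rpow_one_div_le (Nat.ne_of_gt hk) (hreg.DCm_succ_pos k).le hpos hc

theorem stmt4_general {M : ℕ → ℝ} (hM : ∀ k, 0 ≤ M k) {c : ℝ} (hc₀ : 0 ≤ c)
    (hc : ∀ k : ℕ, 1 ≤ k → DCm M (k + 1) ≤ c ^ k * DCm M k) (j : ℕ) {r : ℝ} (hr : 0 < r) :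
    DCh1 M r / r ^ j ≤ c ^ ((j * (j + 1)) / 2) * DCh1 M (c ^ j * r) := by
  have hm (n : ℕ) : 0 ≤ DCm M (n + 1) := div_nonneg (hM _) (Nat.cast_nonneg _)
  have hstep (n : ℕ) : DCm M (n + 1 + 1) ≤ c ^ (n + 1) * DCm M (n + 1) :=
    hc (n + 1) (Nat.le_add_left 1 n)
  rw [div_le_iff₀' (pow_pos hr j), ← mul_assoc, DCh1_eq_iInf, DCh1_eq_iInf]
  exact iInf_mul_pow_le hm hc₀ hstep hr.le j

/-- For a regular sequence and a constant `c > 1` with `c > (m_{k+1}/m_k)^{1/k}` for all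
`k ≥ 1`: for every `j ∈ ℕ` and every `r > 0`, `h₁(r)/r^j ≤ c^{j(j+1)/2} h₁(c^j r)`. -/
theorem stmt4 (M : ℕ → ℝ) (hreg : DCRegular M) (c : ℝ) (hc1 : 1 < c)
    (hc : ∀ k : ℕ, 1 ≤ k → (DCm M (k + 1) / DCm M k) ^ ((1 : ℝ) / k) < c) :
    ∀ (j : ℕ) (r : ℝ), 0 < r →
      DCh1 M r / r ^ j ≤ c ^ ((j * (j + 1)) / 2) * DCh1 M (c ^ j * r) :=
  fun j _ hr => stmt4_general hreg.1 (zero_le_one.trans hc1.le)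
    (fun k hk => hreg.DCm_succ_le hk (hc k hk).le) j hr
end

section
/- Let ψ : ℂ^m → ℝ be a C^∞ compactly supported function. For every n ∈ ℕ there exists a constant C > 0 such that for every z ∈ ℂ^m and every v ∈ ℂ^m with v ≠ 0, the n-th (real Fréchet) derivative with respect to v of the function v ↦ ψ((z − v)/‖v‖)/‖v‖^{2m} satisfies ‖D_v^n [ψ((z − v)/‖v‖)/‖v‖^{2m}]‖ ≤ C / ‖v‖^{2m + n}; the constant C depends only on ψ, m and n (not on z or v). -/
open scoped BigOperators

/-!
The function `(z, v) ↦ ψ ((z - v) / ‖v‖) / ‖v‖ ^ a` is positively homogeneous of degree `-a` in the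
pair `(z, v)`, so its `n`-th derivative in the pair is homogeneous of degree `-a - n`. It is thus
enough to bound that derivative on `‖v‖ = 1`. There it is continuous, and it vanishes for large `z`
because a bounded support for `ψ` forces `‖z‖ ≤ (R + 1) * ‖v‖` wherever the function is nonzero.
Restricting a derivative in `(z, v)` to the directions `(0, w)` does not increase its norm.
-/

section IteratedFDeriv

variable {𝕜 E F G : Type*} [NontriviallyNormedField 𝕜]
  [NormedAddCommGroup E] [NormedSpace 𝕜 E] [NormedAddCommGroup F] [NormedSpace 𝕜 F]
  [NormedAddCommGroup G] [NormedSpace 𝕜 G] {n : ℕ}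

lemma iteratedFDeriv_comp_smul_of_ne_zero {c : 𝕜} (hc : c ≠ 0) (f : E → F) (x : E) :
    iteratedFDeriv 𝕜 n (fun y => f (c • y)) x = c ^ n • iteratedFDeriv 𝕜 n f (c • x) := by
  have h := (ContinuousLinearEquiv.smulLeft (R₁ := 𝕜) (M₁ := E)
    (Units.mk0 c hc)).iteratedFDerivWithin_comp_right f uniqueDiffOn_univ (Set.mem_univ (c • x)) n
  rw [Set.preimage_univ, iteratedFDerivWithin_univ, iteratedFDerivWithin_univ] at h
  refine h.trans ?_
  ext m
  exact ((iteratedFDeriv 𝕜 n f (c • x)).map_smul_univ (fun _ => c) m).trans (by simp)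

lemma iteratedFDeriv_comp_continuousLinearMap {f : E → F} (L : G →L[𝕜] E) {x : G}
    (hf : ContDiffAt 𝕜 n f (L x)) :
    iteratedFDeriv 𝕜 n (f ∘ L) x =
      (iteratedFDeriv 𝕜 n f (L x)).compContinuousLinearMap fun _ => L := by
  obtain ⟨u, hu, hxu, hfu⟩ := hf.contDiffWithinAt.contDiffOn' le_rfl (by simp)
  rw [Set.insert_eq_of_mem (Set.mem_univ _), Set.univ_inter] at hfu
  have hLu : IsOpen (L ⁻¹' u) := hu.preimage L.continuous
  rw [← iteratedFDerivWithin_of_isOpen n hu hxu, ← iteratedFDerivWithin_of_isOpen n hLu hxu]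
  exact L.iteratedFDerivWithin_comp_right hfu hu.uniqueDiffOn hLu.uniqueDiffOn hxu le_rfl

lemma norm_iteratedFDeriv_comp_prodMk_left_le {f : E × G → F} {z : E} {v : G}
    (hf : ContDiffAt 𝕜 n f (z, v)) :
    ‖iteratedFDeriv 𝕜 n (fun w => f (z, w)) v‖ ≤ ‖iteratedFDeriv 𝕜 n f (z, v)‖ := by
  let inr := ContinuousLinearMap.inr 𝕜 E G
  let g : E × G → F := fun p => f ((z, 0) + p)
  have hg : ContDiffAt 𝕜 n g (inr v) :=
    ContDiffAt.comp (inr v) (by simpa [inr] using hf) (contDiffAt_const.add contDiffAt_id)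
  have hslice : (fun w => f (z, w)) = g ∘ inr := by
    ext w
    simp [g, inr]
  calc ‖iteratedFDeriv 𝕜 n (fun w => f (z, w)) v‖
      = ‖(iteratedFDeriv 𝕜 n g (inr v)).compContinuousLinearMap fun _ => inr‖ := by
        rw [hslice, iteratedFDeriv_comp_continuousLinearMap inr hg]
    _ ≤ ‖iteratedFDeriv 𝕜 n g (inr v)‖ * ∏ _i : Fin n, ‖inr‖ :=
        ContinuousMultilinearMap.norm_compContinuousLinearMap_le _ _
    _ ≤ ‖iteratedFDeriv 𝕜 n g (inr v)‖ * 1 := by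
        gcongr
        exact Finset.prod_le_one (fun _ _ => norm_nonneg _)
          fun _ _ => ContinuousLinearMap.norm_inr_le_one 𝕜 E G
    _ = ‖iteratedFDeriv 𝕜 n f (z, v)‖ := by
        simp [g, inr, iteratedFDeriv_comp_add_left]

end IteratedFDeriv

section PosHomogeneous

variable {E F V : Type*} [NormedAddCommGroup E] [NormedSpace ℝ E]
  [NormedAddCommGroup F] [NormedSpace ℝ F] [NormedAddCommGroup V] [NormedSpace ℝ V]
  {d : ℝ} {n : ℕ}

/-- Positive homogeneity of real degree `d`: multiplying the argument by `r > 0` multiplies the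
value by `r ^ d`. -/
def IsPosHomogeneous (d : ℝ) (f : E → F) : Prop :=
  ∀ r : ℝ, 0 < r → ∀ x, f (r • x) = r ^ d • f x

lemma IsPosHomogeneous.norm_iteratedFDeriv_smul {f : E → F} (hf : IsPosHomogeneous d f) {r : ℝ}
    (hr : 0 < r) {x : E} (hfx : ContDiffAt ℝ n f x) :
    ‖iteratedFDeriv ℝ n f (r • x)‖ = r ^ (d - n) * ‖iteratedFDeriv ℝ n f x‖ := by
  have hderiv : r ^ n • iteratedFDeriv ℝ n f (r • x) = r ^ d • iteratedFDeriv ℝ n f x := by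
    rw [← iteratedFDeriv_comp_smul_of_ne_zero hr.ne', funext (hf r hr),
      iteratedFDeriv_const_smul_apply' hfx]
  have hnorm := congrArg norm hderiv
  rw [norm_smul, norm_smul, Real.norm_of_nonneg (by positivity),
    Real.norm_of_nonneg (by positivity)] at hnorm
  rw [Real.rpow_sub hr, Real.rpow_natCast, div_mul_eq_mul_div, ← hnorm]
  field_simp

lemma iteratedFDeriv_eq_zero_of_norm_snd_lt {f : E × V → F} {A : ℝ}
    (hcone : ∀ p, p.2 ≠ 0 → f p ≠ 0 → ‖p.1‖ ≤ A * ‖p.2‖) {p : E × V} (hp : p.2 ≠ 0)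
    (hlt : A * ‖p.2‖ < ‖p.1‖) : iteratedFDeriv ℝ n f p = 0 := by
  have hclosed : IsClosed {q : E × V | q.2 ≠ 0 → ‖q.1‖ ≤ A * ‖q.2‖} :=
    isClosed_imp (isOpen_ne_fun continuous_snd continuous_const)
      (isClosed_le (by fun_prop) (by fun_prop))
  have hsupp : tsupport f ⊆ {q : E × V | q.2 ≠ 0 → ‖q.1‖ ≤ A * ‖q.2‖} :=
    closure_minimal (fun q hq hq2 => hcone q hq2 hq) hclosed
  by_contra hne
  exact hlt.not_ge (hsupp (support_iteratedFDeriv_subset n hne) hp)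

variable [ProperSpace E] [ProperSpace V]

lemma exists_norm_iteratedFDeriv_le_of_norm_snd_eq_one {f : E × V → F} {A : ℝ}
    (hsmooth : ∀ p, p.2 ≠ 0 → ContDiffAt ℝ n f p)
    (hcone : ∀ p, p.2 ≠ 0 → f p ≠ 0 → ‖p.1‖ ≤ A * ‖p.2‖) :
    ∃ C > 0, ∀ p : E × V, ‖p.2‖ = 1 → ‖iteratedFDeriv ℝ n f p‖ ≤ C := by
  have ne_zero_of_norm {v : V} (hv : ‖v‖ = 1) : v ≠ 0 := norm_ne_zero_iff.1 (by simp [hv])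
  have hcompact : IsCompact (Metric.closedBall (0 : E) A ×ˢ Metric.sphere (0 : V) 1) :=
    (isCompact_closedBall _ _).prod (isCompact_sphere _ _)
  obtain ⟨C, hC⟩ := hcompact.exists_bound_of_continuousOn fun p hp =>
    ((hsmooth p (ne_zero_of_norm (mem_sphere_zero_iff_norm.1 hp.2))).continuousAt_iteratedFDeriv
      le_rfl).continuousWithinAt
  refine ⟨max C 1, by positivity, fun p hp => ?_⟩
  rcases le_or_gt ‖p.1‖ A with hle | hlt
  · exact (hC p ⟨mem_closedBall_zero_iff.2 hle, mem_sphere_zero_iff_norm.2 hp⟩).trans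
      (le_max_left C 1)
  · rw [iteratedFDeriv_eq_zero_of_norm_snd_lt hcone (ne_zero_of_norm hp) (by simpa [hp] using hlt),
      norm_zero]
    positivity

lemma IsPosHomogeneous.exists_norm_iteratedFDeriv_le {f : E × V → F} {A : ℝ}
    (hf : IsPosHomogeneous d f) (hsmooth : ∀ p, p.2 ≠ 0 → ContDiffAt ℝ n f p)
    (hcone : ∀ p, p.2 ≠ 0 → f p ≠ 0 → ‖p.1‖ ≤ A * ‖p.2‖) :
    ∃ C > 0, ∀ p : E × V, p.2 ≠ 0 → ‖iteratedFDeriv ℝ n f p‖ ≤ C * ‖p.2‖ ^ (d - n) := by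
  obtain ⟨C, hC0, hC⟩ := exists_norm_iteratedFDeriv_le_of_norm_snd_eq_one hsmooth hcone
  refine ⟨C, hC0, fun p hp => ?_⟩
  have hpos : 0 < ‖p.2‖ := norm_pos_iff.2 hp
  let q := ‖p.2‖⁻¹ • p
  have hq : ‖q.2‖ = 1 := norm_smul_inv_norm (𝕜 := ℝ) hp
  have hpq : ‖p.2‖ • q = p := smul_inv_smul₀ hpos.ne' p
  calc ‖iteratedFDeriv ℝ n f p‖
      = ‖p.2‖ ^ (d - n) * ‖iteratedFDeriv ℝ n f q‖ := by
        rw [← hf.norm_iteratedFDeriv_smul hpos (hsmooth q (norm_ne_zero_iff.1 (by simp [hq]))), hpq]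
    _ ≤ C * ‖p.2‖ ^ (d - n) := by
        rw [mul_comm]
        gcongr
        exact hC q hq

end PosHomogeneous

section ScaledKernel

variable {E F : Type*} [NormedAddCommGroup E] [NormedSpace ℝ E]
  [NormedAddCommGroup F] [NormedSpace ℝ F]

/-- The kernel `ψ ((z - v) / ‖v‖) / ‖v‖ ^ a`, as a function of the pair `p = (z, v)` so that it can
be differentiated jointly. At `v = 0` it takes a junk value. -/
noncomputable def scaledKernel (a : ℝ) (ψ : E → F) (p : E × E) : F :=
  (‖p.2‖ ^ a)⁻¹ • ψ (‖p.2‖⁻¹ • (p.1 - p.2))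

lemma isPosHomogeneous_scaledKernel (a : ℝ) (ψ : E → F) :
    IsPosHomogeneous (-a) (scaledKernel a ψ) := by
  intro r hr p
  have harg : (r⁻¹ * ‖p.2‖⁻¹) • (r • p.1 - r • p.2) = ‖p.2‖⁻¹ • (p.1 - p.2) := by
    rw [← smul_sub, mul_comm, mul_smul, inv_smul_smul₀ hr.ne']
  simp only [scaledKernel, Prod.smul_fst, Prod.smul_snd, norm_smul, Real.norm_of_nonneg hr.le,
    Real.mul_rpow hr.le (norm_nonneg _), Real.rpow_neg hr.le, mul_inv, harg, smul_smul]

lemma contDiffAt_scaledKernel {n : WithTop ℕ∞} (a : ℝ) {ψ : E → F} {p : E × E} (hp : p.2 ≠ 0)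
    (hnorm : ContDiffAt ℝ n (fun v : E => ‖v‖) p.2)
    (hψ : ContDiffAt ℝ n ψ (‖p.2‖⁻¹ • (p.1 - p.2))) : ContDiffAt ℝ n (scaledKernel a ψ) p := by
  have hne : ‖p.2‖ ≠ 0 := norm_ne_zero_iff.2 hp
  have hnorm_snd : ContDiffAt ℝ n (fun q : E × E => ‖q.2‖) p :=
    ContDiffAt.comp p hnorm contDiffAt_snd
  have hfactor : ContDiffAt ℝ n (fun q : E × E => (‖q.2‖ ^ a)⁻¹) p :=
    (hnorm_snd.rpow_const_of_ne hne).inv (Real.rpow_pos_of_pos (norm_pos_iff.2 hp) a).ne'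
  have harg : ContDiffAt ℝ n (fun q : E × E => ‖q.2‖⁻¹ • (q.1 - q.2)) p :=
    (hnorm_snd.inv hne).smul (contDiffAt_fst.sub contDiffAt_snd)
  exact hfactor.smul (ContDiffAt.comp p hψ harg)

lemma norm_fst_le_of_scaledKernel_ne_zero {a R : ℝ} {ψ : E → F} (hR : ∀ x, ψ x ≠ 0 → ‖x‖ ≤ R)
    {p : E × E} (hp : p.2 ≠ 0) (hne : scaledKernel a ψ p ≠ 0) : ‖p.1‖ ≤ (R + 1) * ‖p.2‖ := by
  have hsub : ‖p.1 - p.2‖ ≤ R * ‖p.2‖ := by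
    have h := hR _ (smul_ne_zero_iff.1 hne).2
    rwa [norm_smul, norm_inv, norm_norm, inv_mul_le_iff₀ (norm_pos_iff.2 hp), mul_comm] at h
  linarith [norm_le_norm_sub_add p.1 p.2]

end ScaledKernel

theorem stmt9_general {E F : Type*} [NormedAddCommGroup E] [NormedSpace ℝ E] [ProperSpace E]
    [NormedAddCommGroup F] [NormedSpace ℝ F] (a : ℝ) (n : ℕ)
    (hnorm : ∀ v : E, v ≠ 0 → ContDiffAt ℝ n (fun w : E => ‖w‖) v) {ψ : E → F}
    (hψ : ContDiff ℝ n ψ) (hsupp : HasCompactSupport ψ) :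
    ∃ C > (0 : ℝ), ∀ z v : E, v ≠ 0 →
      ‖iteratedFDeriv ℝ n (fun w : E => (‖w‖ ^ a)⁻¹ • ψ (‖w‖⁻¹ • (z - w))) v‖
        ≤ C / ‖v‖ ^ (a + n) := by
  obtain ⟨R, hR⟩ := hsupp.isCompact.isBounded.exists_norm_le
  have hsmooth (p : E × E) (hp : p.2 ≠ 0) : ContDiffAt ℝ n (scaledKernel a ψ) p :=
    contDiffAt_scaledKernel a hp (hnorm p.2 hp) hψ.contDiffAt
  obtain ⟨C, hC0, hC⟩ := (isPosHomogeneous_scaledKernel a ψ).exists_norm_iteratedFDeriv_le hsmooth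
    fun p => norm_fst_le_of_scaledKernel_ne_zero fun x hx => hR x (subset_tsupport ψ hx)
  refine ⟨C, hC0, fun z v hv => ?_⟩
  calc ‖iteratedFDeriv ℝ n (fun w => scaledKernel a ψ (z, w)) v‖
      ≤ ‖iteratedFDeriv ℝ n (scaledKernel a ψ) (z, v)‖ :=
        norm_iteratedFDeriv_comp_prodMk_left_le (hsmooth (z, v) hv)
    _ ≤ C * ‖v‖ ^ (-a - n) := hC (z, v) hv
    _ = C / ‖v‖ ^ (a + n) := by
        rw [← neg_add', Real.rpow_neg (norm_nonneg v), div_eq_mul_inv]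

/-- If `ψ : ℂ^m → ℝ` is `C^∞` with compact support, then for every `n ∈ ℕ` there is a
constant `C > 0` (depending only on `ψ`, `m`, `n`) such that for all `z` and all `v ≠ 0`,
the `n`-th real Fréchet derivative in `v` of `v ↦ ψ((z-v)/‖v‖)/‖v‖^{2m}` has norm at most
`C/‖v‖^{2m+n}`. -/
theorem stmt9 (m : ℕ) (ψ : EuclideanSpace ℂ (Fin m) → ℝ)
    (hψ : ContDiff ℝ (⊤ : ℕ∞) ψ) (hsupp : HasCompactSupport ψ) (n : ℕ) :
    ∃ C > (0 : ℝ), ∀ z v : EuclideanSpace ℂ (Fin m), v ≠ 0 →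
      ‖iteratedFDeriv ℝ n
          (fun w : EuclideanSpace ℂ (Fin m) => ψ ((‖w‖⁻¹ : ℝ) • (z - w)) / ‖w‖ ^ (2 * m))
          v‖
        ≤ C / ‖v‖ ^ (2 * m + n) := by
  simpa only [div_eq_inv_mul, smul_eq_mul, ← Nat.cast_add, Real.rpow_natCast] using
    stmt9_general (2 * m : ℕ) n (fun _ => contDiffAt_norm ℂ) (hψ.of_le (mod_cast le_top)) hsupp
end

section
/- Let 𝓜 be a regular sequence and f ∈ C^𝓜(U,X). Then for every open V with compact closure contained in U there exist δ > 0, Q > 0, and a function F : V × ℝ^m → ℂ which is continuous on V × ℝ^m and C^∞ on V × (ℝ^m ∖ {0}), such that F(u,0) = f(u) for all u ∈ V, and for every u ∈ V, every v ∈ ℝ^m with 0 < ‖v‖ < δ, every k ∈ ℕ and every 1 ≤ j ≤ m, |∂F/∂v_j(u,v) − (X_j F(·,v))(u)| ≤ Q^{k+1} m_k ‖v‖^k, where X_j acts on the u-variable. -/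
open scoped BigOperators

/-- Application of the complex vector field with coefficients `A` to `g`:
`(X g)(x) = ∑ l, A_l(x) ∂g/∂x_l (x)`. -/
noncomputable def Xapp {d : ℕ} (A : Fin d → (Fin d → ℝ) → ℂ)
    (g : (Fin d → ℝ) → ℂ) : (Fin d → ℝ) → ℂ :=
  fun x => ∑ l, A l x * fderiv ℝ g x (Pi.single l (1 : ℝ))

/-- `X^α f = X_1^{α_1} ∘ ⋯ ∘ X_m^{α_m} f` for the frame `X_j` with coefficients `a j`. -/
noncomputable def Xmulti {d m : ℕ} (a : Fin m → Fin d → (Fin d → ℝ) → ℂ)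
    (α : Fin m → ℕ) (f : (Fin d → ℝ) → ℂ) : (Fin d → ℝ) → ℂ :=
  ((List.ofFn (fun j : Fin m => (Xapp (a j))^[α j])).foldr (· ∘ ·) id) f

/-- `f ∈ C^𝓜(U, X)`: `f` is smooth on `U` and for every compact `K ⊆ U` there is `C > 0`
with `sup_K ‖X^α f‖ ≤ C^{|α|+1} M_{|α|}` for every multi-index `α`. -/
def CMvector {d m : ℕ} (M : ℕ → ℝ) (U : Set (Fin d → ℝ))
    (a : Fin m → Fin d → (Fin d → ℝ) → ℂ) (f : (Fin d → ℝ) → ℂ) : Prop :=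
  ContDiffOn ℝ (⊤ : ℕ∞) f U ∧
  ∀ K : Set (Fin d → ℝ), IsCompact K → K ⊆ U →
    ∃ C > (0 : ℝ), ∀ (α : Fin m → ℕ) (x : Fin d → ℝ), x ∈ K →
      ‖Xmulti a α f x‖ ≤ C ^ ((∑ j, α j) + 1) * M (∑ j, α j)

/-!
Let `P_N(u, v) = ∑_{|α| = N} (v^α / α!) X^α f(u)`. As the fields commute, `∂P_{N+1}/∂v_j = X_j P_N`,
so `∑_N P_N` formally solves the problem. It need not converge, and is replaced by the Borel sum
`F(u, v) = ∑_N χ(λ_N v) P_N(u, v)` with a cutoff `χ` and `λ_N = E m_{N+1} / m_N` for a large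
constant `E`. In `∂F/∂v_j - X_j F` everything cancels except terms of degree `N` supported where
`χ(λ_N v)` and `χ(λ_{N+1} v)` are not both equal to `1` and not both equal to `0`. There
`1 / λ_{N+1} ≤ ‖v‖ ≤ 2 / λ_N`, which makes the log-convex sequence `k ↦ m_k (E ‖v‖)^k` nearly
minimal at `k = N + 1`. Hence the term of degree `N` is dominated by `m_k (E ‖v‖)^k` for every `k`,
with a factor `2^{-N}` to spare if `E` is large enough.
-/

namespace AlmostAnalytic

open Set Filter Topology

section Weights

/-- The successive ratios `w (k + 1) / w k`; log-convexity of `w` is monotonicity of `ratio w`. -/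
noncomputable def ratio (w : ℕ → ℝ) (k : ℕ) : ℝ := w (k + 1) / w k

/-- The properties of `w = DCm M` that regularity of `M` provides, with conditions (c) and (d)
expressed through the ratios of `w`. The base `B` is a parameter because the scales of the cutoffs
depend on it. -/
structure RegularWeight (w : ℕ → ℝ) (B : ℝ) : Prop where
  pos : ∀ k, 0 < w k
  zero : w 0 = 1
  monotone_ratio : Monotone (ratio w)
  one_le : 1 ≤ B
  ratio_le_pow : ∀ k, ratio w k ≤ B ^ k
  tendsto_ratio : Tendsto (ratio w) atTop atTop

variable {w : ℕ → ℝ}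

lemma ratio_pos (hw : ∀ k, 0 < w k) (k : ℕ) : 0 < ratio w k := div_pos (hw _) (hw _)

lemma succ_eq_ratio_mul (hw : ∀ k, 0 < w k) (k : ℕ) : w (k + 1) = ratio w k * w k :=
  (div_mul_cancel₀ _ (hw k).ne').symm

lemma monotone_ratio_of_sq_le (hw : ∀ k, 0 < w k)
    (h : ∀ k, w (k + 1) ^ 2 ≤ w k * w (k + 2)) : Monotone (ratio w) := by
  refine monotone_nat_of_le_succ fun k => ?_
  rw [ratio, ratio, div_le_div_iff₀ (hw _) (hw _)]
  linarith [h k]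

lemma tendsto_ratio_of_tendsto_root (hw : ∀ k, 0 < w k) (hw0 : w 0 = 1)
    (hmono : Monotone (ratio w))
    (hroot : Tendsto (fun k : ℕ => w k ^ ((1 : ℝ) / k)) atTop atTop) :
    Tendsto (ratio w) atTop atTop := by
  refine (tendsto_atTop_of_monotone hmono).resolve_right ?_
  rintro ⟨l, hl⟩
  have hle (k : ℕ) : ratio w k ≤ l := hmono.ge_of_tendsto hl k
  have hl0 : 0 ≤ l := (ratio_pos hw 0).le.trans (hle 0)
  have hpow (k : ℕ) : w k ≤ l ^ k := by
    have := le_geom hl0 k fun i _ => (succ_eq_ratio_mul hw i).trans_le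
      (mul_le_mul_of_nonneg_right (hle i) (hw i).le)
    rwa [hw0, mul_one] at this
  obtain ⟨k, hlk, hk⟩ := ((hroot.eventually_gt_atTop l).and (eventually_ge_atTop 1)).exists
  refine hlk.not_ge ?_
  calc w k ^ ((1 : ℝ) / k) ≤ (l ^ k) ^ ((1 : ℝ) / k) := by gcongr; exacts [(hw k).le, hpow k]
    _ = l := by rw [one_div, Real.pow_rpow_inv_natCast hl0 (by lia)]

lemma DCm_pos {M : ℕ → ℝ} (h : DCRegular M) (k : ℕ) : 0 < DCm M k := by
  obtain ⟨-, h0, h1, hlc, -, -⟩ := h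
  suffices 0 < DCm M k ∧ 0 < DCm M (k + 1) from this.1
  induction k with
  | zero => simp [h0, h1]
  | succ k ih => exact ⟨ih.2, pos_of_mul_pos_right ((pow_pos ih.2 2).trans_le
      (hlc (k + 1) (by lia))) ih.1.le⟩

lemma exists_regularWeight {M : ℕ → ℝ} (h : DCRegular M) : ∃ B, RegularWeight (DCm M) B := by
  have hpos := DCm_pos h
  obtain ⟨-, h0, h1, hlc, ⟨B, hB⟩, hroot⟩ := h
  have hmono := monotone_ratio_of_sq_le hpos fun k => hlc (k + 1) (by lia)
  refine ⟨max B 1, hpos, h0, hmono, le_max_right _ _, fun k => ?_,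
    tendsto_ratio_of_tendsto_root hpos h0 hmono hroot⟩
  rcases Nat.eq_zero_or_pos k with rfl | hk
  · simp [ratio, h0, h1]
  · have hq := (ratio_pos hpos k).le
    calc ratio (DCm M) k = (ratio (DCm M) k ^ ((1 : ℝ) / k)) ^ k := by
          rw [one_div, Real.rpow_inv_natCast_pow hq hk.ne']
      _ ≤ max B 1 ^ k :=
          pow_le_pow_left₀ (Real.rpow_nonneg hq _) ((hB k hk).trans (le_max_left _ _)) k

lemma succ_mul_pow_succ (hw : ∀ k, 0 < w k) (s : ℝ) (k : ℕ) :
    w (k + 1) * s ^ (k + 1) = s * ratio w k * (w k * s ^ k) := by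
  rw [succ_eq_ratio_mul hw]; ring

lemma mul_pow_le_two_pow_mul (hw : ∀ k, 0 < w k) (hmono : Monotone (ratio w)) {s : ℝ}
    (hs : 0 ≤ s) {N n k : ℕ} (hN : s * ratio w N ≤ 2) (hkn : k ≤ n) (hn : n ≤ N + 1) :
    w n * s ^ n ≤ 2 ^ (n - k) * (w k * s ^ k) := by
  obtain ⟨i, rfl⟩ := Nat.exists_eq_add_of_le hkn
  have := le_geom (u := fun i => w (k + i) * s ^ (k + i)) zero_le_two i fun j hj => by
    rw [← add_assoc, succ_mul_pow_succ hw]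
    have hq : ratio w (k + j) ≤ ratio w N := hmono (by lia)
    have := (hw (k + j)).le
    gcongr
    exact (mul_le_mul_of_nonneg_left hq hs).trans hN
  simpa using this

lemma succ_mul_pow_le_two_pow_mul (hw : ∀ k, 0 < w k) (hmono : Monotone (ratio w)) {s : ℝ}
    (hs : 0 ≤ s) {N : ℕ} (hN : s * ratio w N ≤ 2) (hN' : 1 ≤ s * ratio w (N + 1)) (k : ℕ) :
    w (N + 1) * s ^ (N + 1) ≤ 2 ^ (N + 1) * (w k * s ^ k) := by
  have hnonneg (i : ℕ) : 0 ≤ w i * s ^ i := mul_nonneg (hw i).le (pow_nonneg hs i)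
  rcases le_total k (N + 1) with hk | hk
  · refine (mul_pow_le_two_pow_mul hw hmono hs hN hk le_rfl).trans ?_
    have := hnonneg k
    gcongr
    exacts [one_le_two, Nat.sub_le _ _]
  · have hincr (i : ℕ) : w (N + 1 + i) * s ^ (N + 1 + i) ≤
        w (N + 1 + (i + 1)) * s ^ (N + 1 + (i + 1)) := by
      rw [← add_assoc, succ_mul_pow_succ hw]
      refine le_mul_of_one_le_left (hnonneg _) (hN'.trans ?_)
      exact mul_le_mul_of_nonneg_left (hmono (by lia)) hs
    obtain ⟨i, rfl⟩ := Nat.exists_eq_add_of_le hk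
    exact (monotone_nat_of_le_succ hincr (Nat.zero_le i)).trans
      (le_mul_of_one_le_left (hnonneg _) (one_le_pow₀ one_le_two))

/-- The factor by which the cutoff of the degree `N` Taylor term is dilated: that term is kept where
`dilation w A B N * ‖v‖ ≤ 1` and removed where `2 ≤ dilation w A B N * ‖v‖`. Here `A` is the
exponential rate of the Taylor terms relative to `w`, and `B` that of the ratios of `w`. The
factor `4` lets `(1 / 4) ^ N` beat the `2 ^ N` of `mul_pow_le_two_pow_mul`. -/
noncomputable def dilation (w : ℕ → ℝ) (A B : ℝ) (N : ℕ) : ℝ := 4 * A * B * ratio w N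

variable {A B t : ℝ}

lemma dilation_nonneg (hw : RegularWeight w B) (hA : 0 ≤ A) (N : ℕ) : 0 ≤ dilation w A B N :=
  mul_nonneg (mul_nonneg (by positivity) (zero_le_one.trans hw.one_le)) (ratio_pos hw.pos N).le

lemma monotone_dilation (hw : RegularWeight w B) (hA : 0 ≤ A) : Monotone (dilation w A B) :=
  hw.monotone_ratio.const_mul (mul_nonneg (by positivity) (zero_le_one.trans hw.one_le))

lemma tendsto_dilation (hw : RegularWeight w B) (hA : 0 < A) :
    Tendsto (dilation w A B) atTop atTop :=
  hw.tendsto_ratio.const_mul_atTop (mul_pos (by positivity) (zero_lt_one.trans_le hw.one_le))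

lemma pow_succ_mul_le_geometric (hw : RegularWeight w B) (hA : 0 < A) (ht : 0 ≤ t) {N : ℕ}
    (hN : dilation w A B N * t ≤ 2) : A ^ (N + 1) * (w N * t ^ N) ≤ A * (1 / 2) ^ N := by
  have hB : 0 < B := zero_lt_one.trans_le hw.one_le
  have hscaled : w N * (4 * A * B * t) ^ N ≤ 2 ^ N := by
    simpa [hw.zero] using mul_pow_le_two_pow_mul hw.pos hw.monotone_ratio
      (s := 4 * A * B * t) (by positivity) (hN.trans_eq' (by rw [dilation]; ring))
      (Nat.zero_le N) N.le_succ
  have hwN := (hw.pos N).le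
  calc A ^ (N + 1) * (w N * t ^ N) = A * (w N * (4 * A * t) ^ N) * (1 / 4) ^ N := by
        rw [show 4 * A * t = A * t * 4 by ring, mul_pow _ (4 : ℝ), mul_pow A]
        have : (4 : ℝ) ^ N * (1 / 4) ^ N = 1 := by rw [← mul_pow]; norm_num
        linear_combination (-A ^ (N + 1) * (w N * t ^ N)) * this
    _ ≤ A * (w N * (4 * A * B * t) ^ N) * (1 / 4) ^ N := by
        have : 4 * A ≤ 4 * A * B := le_mul_of_one_le_right (by positivity) hw.one_le
        gcongr
    _ ≤ A * 2 ^ N * (1 / 4) ^ N := by gcongr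
    _ = A * (1 / 2) ^ N := by rw [mul_assoc, ← mul_pow]; norm_num

/-- If the cutoffs of degrees `N` and `N + 1` differ at distance `t` from the origin, then
`s = 4 * A * B * t` lies between `1 / ratio w (N + 1)` and `2 / ratio w N`, so that the log-convex
sequence `k ↦ w k * s ^ k` is nearly minimal at `k = N + 1`. -/
lemma pow_succ_mul_succ_le (hw : RegularWeight w B) (hA : 0 < A) (ht : 0 < t) {N : ℕ}
    (hN : dilation w A B N * t ≤ 2) (hN' : 1 ≤ dilation w A B (N + 1) * t) (k : ℕ) :
    A ^ (N + 1) * (w (N + 1) * t ^ N) ≤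
      (4 * A * B) ^ (k + 1) * (w k * t ^ k) * (1 / 2) ^ (N + 1) := by
  have hB : 0 < B := zero_lt_one.trans_le hw.one_le
  set E := 4 * A * B with hE
  have : 0 < E := by positivity
  have hscaled : w (N + 1) * (E * t) ^ (N + 1) ≤ 2 ^ (N + 1) * (w k * (E * t) ^ k) :=
    succ_mul_pow_le_two_pow_mul hw.pos hw.monotone_ratio (by positivity)
      (hN.trans_eq' (by rw [dilation]; ring)) (hN'.trans_eq (by rw [dilation]; ring)) k
  have hone : 1 ≤ E * B ^ (N + 1) * t :=
    hN'.trans (by rw [dilation]; gcongr; exact hw.ratio_le_pow _)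
  have hwN := (hw.pos (N + 1)).le
  have hquarter : (A * B) ^ (N + 1) = E ^ (N + 1) * (1 / 4) ^ (N + 1) := by
    rw [← mul_pow, hE]; ring
  calc A ^ (N + 1) * (w (N + 1) * t ^ N)
      ≤ A ^ (N + 1) * (w (N + 1) * t ^ N) * (E * B ^ (N + 1) * t) :=
        le_mul_of_one_le_right (by positivity) hone
    _ = E * (A * B) ^ (N + 1) * (w (N + 1) * t ^ (N + 1)) := by ring
    _ = E * (1 / 4) ^ (N + 1) * (w (N + 1) * (E * t) ^ (N + 1)) := by
        rw [hquarter, mul_pow E]; ring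
    _ ≤ E * (1 / 4) ^ (N + 1) * (2 ^ (N + 1) * (w k * (E * t) ^ k)) := by gcongr
    _ = E ^ (k + 1) * (w k * t ^ k) * ((1 / 4) ^ (N + 1) * 2 ^ (N + 1)) := by ring
    _ = E ^ (k + 1) * (w k * t ^ k) * (1 / 2) ^ (N + 1) := by rw [← mul_pow]; norm_num

end Weights

section Cutoff

variable {E : Type*} [NormedAddCommGroup E] [NormedSpace ℝ E]

/-- The fixed cutoff profile, equal to `1` on the unit ball and supported in the ball of
radius `2`. -/
def unitBump (E : Type*) [NormedAddCommGroup E] : ContDiffBump (0 : E) :=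
  ⟨1, 2, one_pos, one_lt_two⟩

variable [HasContDiffBump E]

/-- The cutoff dilated by `r`, at scale `1 / r`. -/
noncomputable def scaledBump (r : ℝ) (v : E) : ℝ := unitBump E (r • v)

variable {r : ℝ} {v : E}

lemma contDiff_scaledBump (r : ℝ) : ContDiff ℝ (⊤ : ℕ∞) (scaledBump r : E → ℝ) :=
  (unitBump E).contDiff.comp (contDiff_const_smul r)

lemma scaledBump_mem_Icc (r : ℝ) (v : E) : scaledBump r v ∈ Icc (0 : ℝ) 1 :=
  ⟨(unitBump E).nonneg, (unitBump E).le_one⟩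

lemma abs_scaledBump_le_one (r : ℝ) (v : E) : |scaledBump r v| ≤ 1 := by
  rw [abs_of_nonneg (scaledBump_mem_Icc r v).1]
  exact (scaledBump_mem_Icc r v).2

lemma abs_scaledBump_sub_le_one (r s : ℝ) (v : E) : |scaledBump r v - scaledBump s v| ≤ 1 := by
  simpa using abs_sub_le_of_le_of_le (scaledBump_mem_Icc r v).1 (scaledBump_mem_Icc r v).2
    (scaledBump_mem_Icc s v).1 (scaledBump_mem_Icc s v).2

lemma scaledBump_eq_one (h : ‖r • v‖ ≤ 1) : scaledBump r v = 1 :=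
  (unitBump E).one_of_mem_closedBall (mem_closedBall_zero_iff.2 h)

lemma scaledBump_eq_zero (h : 2 < ‖r • v‖) : scaledBump r v = 0 :=
  (unitBump E).zero_of_le_dist (by rw [dist_zero_right]; exact h.le)

lemma fderiv_scaledBump (r : ℝ) (v : E) :
    fderiv ℝ (scaledBump r) v = r • fderiv ℝ (unitBump E) (r • v) :=
  fderiv_comp_smul r

lemma fderiv_scaledBump_eq_zero_of_lt_one (h : ‖r • v‖ < 1) :
    fderiv ℝ (scaledBump r) v = 0 := by
  have hone : ⇑(unitBump E) =ᶠ[𝓝 (r • v)] 1 :=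
    (unitBump E).eventuallyEq_one_of_mem_ball (mem_ball_zero_iff.2 h)
  rw [fderiv_scaledBump, hone.fderiv_eq]
  simp

lemma fderiv_scaledBump_eq_zero_of_two_lt (h : 2 < ‖r • v‖) :
    fderiv ℝ (scaledBump r) v = 0 := by
  have hout : r • v ∉ tsupport (unitBump E) := by
    rw [(unitBump E).tsupport_eq, mem_closedBall_zero_iff]
    exact h.not_ge
  rw [fderiv_scaledBump, fderiv_of_notMem_tsupport ℝ hout, smul_zero]

lemma exists_norm_fderiv_scaledBump_le (E : Type*) [NormedAddCommGroup E] [NormedSpace ℝ E]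
    [HasContDiffBump E] [FiniteDimensional ℝ E] :
    ∃ L, ∀ (r : ℝ) (v : E), ‖fderiv ℝ (scaledBump r) v‖ ≤ |r| * L := by
  obtain ⟨L, hL⟩ := ((unitBump E).hasCompactSupport.fderiv ℝ).exists_bound_of_continuous
    ((unitBump E).contDiff.continuous_fderiv one_ne_zero)
  refine ⟨L, fun r v => ?_⟩
  rw [fderiv_scaledBump, norm_smul, Real.norm_eq_abs]
  gcongr
  exact hL _

end Cutoff

section TaylorTerm

variable {ι W : Type*} [DecidableEq ι]

/-- The jet of the `j`-th partial derivative of a function with jet `c`. -/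
def jetShift (j : ι) (c : (ι → ℕ) → W) : (ι → ℕ) → W := fun α => c (α + Pi.single j 1)

lemma jetShift_comm (i j : ι) (c : (ι → ℕ) → W) :
    jetShift i (jetShift j c) = jetShift j (jetShift i c) :=
  funext fun α => congrArg c (add_right_comm α _ _)

variable [Fintype ι]

lemma sum_add_single (α : ι → ℕ) (j : ι) :
    ∑ i, (α + Pi.single j 1 : ι → ℕ) i = ∑ i, α i + 1 := by
  simp [Finset.sum_add_distrib]

variable [NormedAddCommGroup W] [NormedSpace ℝ W]

/-- The homogeneous part `∑_{|α| = N} (v^α / α!) c_α` of degree `N` of the formal power series with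
jet `c`, defined recursively by Euler's identity `(N + 1) P_{N+1} = ∑ i, v_i ∂_i P_{N+1}`. -/
noncomputable def taylorTerm (c : (ι → ℕ) → W) : ℕ → EuclideanSpace ℝ ι → W
  | 0, _ => c 0
  | N + 1, v => ((N : ℝ) + 1)⁻¹ • ∑ i, v i • taylorTerm (jetShift i c) N v

@[simp] lemma taylorTerm_zero (c : (ι → ℕ) → W) (v : EuclideanSpace ℝ ι) :
    taylorTerm c 0 v = c 0 := rfl

lemma taylorTerm_succ (c : (ι → ℕ) → W) (N : ℕ) (v : EuclideanSpace ℝ ι) :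
    taylorTerm c (N + 1) v = ((N : ℝ) + 1)⁻¹ • ∑ i, v i • taylorTerm (jetShift i c) N v := rfl

@[simp] lemma taylorTerm_succ_apply_zero (c : (ι → ℕ) → W) (N : ℕ) :
    taylorTerm c (N + 1) 0 = 0 := by
  simp [taylorTerm_succ]

lemma contDiffOn_taylorTerm {X : Type*} [NormedAddCommGroup X] [NormedSpace ℝ X] {s : Set X}
    {n : WithTop ℕ∞} {g : (ι → ℕ) → X → W} (hg : ∀ α, ContDiffOn ℝ n (g α) s) (N : ℕ) :
    ContDiffOn ℝ n (fun p : X × EuclideanSpace ℝ ι => taylorTerm (fun α => g α p.1) N p.2)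
      (s ×ˢ univ) := by
  induction N generalizing g with
  | zero => exact (hg 0).comp contDiffOn_fst fun p hp => hp.1
  | succ N ih =>
    simp only [taylorTerm_succ]
    refine ContDiffOn.const_smul _ (ContDiffOn.sum fun i _ => ContDiffOn.smul ?_ ?_)
    · exact ((EuclideanSpace.proj i : EuclideanSpace ℝ ι →L[ℝ] ℝ).contDiff.comp
        contDiff_snd).contDiffOn
    · exact ih fun α => hg (α + Pi.single i 1)

lemma contDiff_taylorTerm (c : (ι → ℕ) → W) (N : ℕ) {n : WithTop ℕ∞} :
    ContDiff ℝ n (taylorTerm c N) := by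
  rw [← contDiffOn_univ]
  exact (contDiffOn_taylorTerm (X := ℝ) (s := univ) (g := fun α _ => c α)
    (fun _ => contDiffOn_const) N).comp (contDiffOn_const (c := 0) |>.prodMk contDiffOn_id)
      fun v _ => ⟨mem_univ _, mem_univ v⟩

lemma differentiable_taylorTerm (c : (ι → ℕ) → W) (N : ℕ) : Differentiable ℝ (taylorTerm c N) :=
  (contDiff_taylorTerm c N (n := 1)).differentiable one_ne_zero

lemma fderiv_taylorTerm_zero (c : (ι → ℕ) → W) (v : EuclideanSpace ℝ ι) :
    fderiv ℝ (taylorTerm c 0) v = 0 := fderiv_const_apply _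

lemma smul_fderiv_taylorTerm_succ (c : (ι → ℕ) → W) (N : ℕ) (v : EuclideanSpace ℝ ι) (j : ι) :
    ((N : ℝ) + 1) • fderiv ℝ (taylorTerm c (N + 1)) v (EuclideanSpace.single j 1) =
      taylorTerm (jetShift j c) N v +
        ∑ i, v i • fderiv ℝ (taylorTerm (jetShift i c) N) v (EuclideanSpace.single j 1) := by
  have hcoord (i : ι) : HasFDerivAt (fun v : EuclideanSpace ℝ ι => v i)
      (EuclideanSpace.proj i : EuclideanSpace ℝ ι →L[ℝ] ℝ) v :=
    (EuclideanSpace.proj i : EuclideanSpace ℝ ι →L[ℝ] ℝ).hasFDerivAt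
  have hterm (i : ι) := (differentiable_taylorTerm (jetShift i c) N v).hasFDerivAt
  have hsum : HasFDerivAt (taylorTerm c (N + 1)) _ v :=
    (HasFDerivAt.fun_sum fun i (_ : i ∈ Finset.univ) =>
      (hcoord i).fun_smul (hterm i)).const_smul ((N : ℝ) + 1)⁻¹
  rw [hsum.fderiv, smul_apply, smul_inv_smul₀ (by positivity)]
  simp [Finset.sum_add_distrib, add_comm]

lemma fderiv_taylorTerm_succ (c : (ι → ℕ) → W) (N : ℕ) (v : EuclideanSpace ℝ ι) (j : ι) :
    fderiv ℝ (taylorTerm c (N + 1)) v (EuclideanSpace.single j 1) =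
      taylorTerm (jetShift j c) N v := by
  induction N generalizing c with
  | zero =>
    simpa [fderiv_taylorTerm_zero] using smul_fderiv_taylorTerm_succ c 0 v j
  | succ N ih =>
    have hN : ((N + 1 : ℕ) : ℝ) + 1 ≠ 0 := by positivity
    have hN' : (N : ℝ) + 1 ≠ 0 := by positivity
    have heuler : ∑ i, v i • taylorTerm (jetShift j (jetShift i c)) N v =
        ((N : ℝ) + 1) • taylorTerm (jetShift j c) (N + 1) v := by
      rw [taylorTerm_succ, smul_inv_smul₀ hN']
      simp only [jetShift_comm j]
    refine (smul_right_inj hN).1 ((smul_fderiv_taylorTerm_succ c (N + 1) v j).trans ?_)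
    simp only [ih, heuler]
    push_cast
    module

lemma norm_taylorTerm_le {c : (ι → ℕ) → W} {N : ℕ} {K : ℝ}
    (hc : ∀ α, ∑ i, α i = N → ‖c α‖ ≤ K) (v : EuclideanSpace ℝ ι) :
    ‖taylorTerm c N v‖ ≤ (Fintype.card ι * ‖v‖) ^ N / N.factorial * K := by
  induction N generalizing c with
  | zero => simpa using hc 0 (by simp)
  | succ N ih =>
    have hshift (i : ι) : ‖taylorTerm (jetShift i c) N v‖ ≤
        (Fintype.card ι * ‖v‖) ^ N / N.factorial * K :=
      ih fun α hα => hc _ (by rw [sum_add_single, hα])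
    have hterm (i : ι) : ‖v i • taylorTerm (jetShift i c) N v‖ ≤
        ‖v‖ * ((Fintype.card ι * ‖v‖) ^ N / N.factorial * K) := by
      rw [norm_smul]
      exact mul_le_mul (PiLp.norm_apply_le v i) (hshift i) (norm_nonneg _) (norm_nonneg _)
    rw [taylorTerm_succ, norm_smul, norm_inv, Real.norm_of_nonneg (by positivity)]
    calc ((N : ℝ) + 1)⁻¹ * ‖∑ i, v i • taylorTerm (jetShift i c) N v‖
        ≤ ((N : ℝ) + 1)⁻¹ * ∑ _i : ι, ‖v‖ * ((Fintype.card ι * ‖v‖) ^ N / N.factorial * K) := by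
          gcongr
          exact norm_sum_le_of_le _ fun i _ => hterm i
      _ = (Fintype.card ι * ‖v‖) ^ (N + 1) / (N + 1).factorial * K := by
          rw [Finset.sum_const, Finset.card_univ, nsmul_eq_mul, Nat.factorial_succ]
          push_cast
          field_simp
          ring

/-- The Taylor terms of the jet `c`, and those of its first derivatives, are bounded by the
weights `w` up to the exponential rate `A`. -/
structure HasTaylorBound (w : ℕ → ℝ) (A : ℝ) (c : (ι → ℕ) → W) : Prop where
  norm_le : ∀ N v, ‖taylorTerm c N v‖ ≤ A ^ (N + 1) * (w N * ‖v‖ ^ N)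
  norm_shift_le : ∀ j N v,
    ‖taylorTerm (jetShift j c) N v‖ ≤ A ^ (N + 1) * (w (N + 1) * ‖v‖ ^ N)

-- The factor `2` in the rate absorbs the `N + 1` lost in `M (N + 1) / N! = (N + 1) * m (N + 1)`.
lemma hasTaylorBound_of_norm_le {M : ℕ → ℝ} (hM : ∀ k, 0 ≤ M k) {C : ℝ} (hC : 1 ≤ C)
    {c : (ι → ℕ) → W} (hc : ∀ α, ‖c α‖ ≤ C ^ ((∑ i, α i) + 1) * M (∑ i, α i)) :
    HasTaylorBound (DCm M) (2 * (Fintype.card ι + 1) * C ^ 2) c := by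
  have hm (k : ℕ) : 0 ≤ DCm M k := div_nonneg (hM k) (Nat.cast_nonneg _)
  have hcard (N : ℕ) : (Fintype.card ι : ℝ) ^ N ≤ (Fintype.card ι + 1) ^ (N + 1) :=
    (pow_le_pow_left₀ (Nat.cast_nonneg _) (by linarith) N).trans
      (pow_le_pow_right₀ (by linarith [Nat.cast_nonneg (α := ℝ) (Fintype.card ι)]) N.le_succ)
  have : 0 ≤ C := zero_le_one.trans hC
  have htwo (N : ℕ) : (N : ℝ) + 1 ≤ 2 ^ (N + 1) := by
    exact_mod_cast (Nat.lt_two_pow_self (n := N + 1)).le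
  refine ⟨fun N v => ?_, fun j N v => ?_⟩
  · calc ‖taylorTerm c N v‖
        ≤ (Fintype.card ι * ‖v‖) ^ N / N.factorial * (C ^ (N + 1) * M N) :=
          norm_taylorTerm_le (fun α hα => hα ▸ hc α) v
      _ = 1 * (Fintype.card ι ^ N) * C ^ (N + 1) * (DCm M N * ‖v‖ ^ N) := by
          rw [DCm, mul_pow]; ring
      _ ≤ 2 ^ (N + 1) * (Fintype.card ι + 1) ^ (N + 1) * C ^ (2 * (N + 1)) *
            (DCm M N * ‖v‖ ^ N) := by
          have := hm N
          gcongr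
          exacts [one_le_pow₀ one_le_two, hcard N, by lia]
      _ = (2 * (Fintype.card ι + 1) * C ^ 2) ^ (N + 1) * (DCm M N * ‖v‖ ^ N) := by
          rw [mul_pow, mul_pow, pow_mul]
  · have hshift (α : ι → ℕ) (hα : ∑ i, α i = N) :
        ‖jetShift j c α‖ ≤ C ^ (N + 2) * M (N + 1) :=
      (hc (α + Pi.single j 1)).trans_eq (by rw [sum_add_single, hα])
    calc ‖taylorTerm (jetShift j c) N v‖
        ≤ (Fintype.card ι * ‖v‖) ^ N / N.factorial * (C ^ (N + 2) * M (N + 1)) :=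
          norm_taylorTerm_le hshift v
      _ = (N + 1) * Fintype.card ι ^ N * C ^ (N + 2) * (DCm M (N + 1) * ‖v‖ ^ N) := by
          rw [DCm, mul_pow, Nat.factorial_succ]; push_cast; field_simp
      _ ≤ 2 ^ (N + 1) * (Fintype.card ι + 1) ^ (N + 1) * C ^ (2 * (N + 1)) *
            (DCm M (N + 1) * ‖v‖ ^ N) := by
          have := hm (N + 1)
          gcongr
          exacts [htwo N, hcard N, by lia]
      _ = (2 * (Fintype.card ι + 1) * C ^ 2) ^ (N + 1) * (DCm M (N + 1) * ‖v‖ ^ N) := by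
          rw [mul_pow, mul_pow, pow_mul]

lemma exists_hasTaylorBound {M : ℕ → ℝ} (hM : ∀ k, 0 ≤ M k) (C : ℝ) :
    ∃ A > 0, ∀ {c : (ι → ℕ) → W}, (∀ α, ‖c α‖ ≤ C ^ ((∑ i, α i) + 1) * M (∑ i, α i)) →
      HasTaylorBound (DCm M) A c := by
  refine ⟨2 * (Fintype.card ι + 1) * max |C| 1 ^ 2, by positivity, fun hc =>
    hasTaylorBound_of_norm_le hM (le_max_right _ _) fun α => (hc α).trans ?_⟩
  refine mul_le_mul_of_nonneg_right ?_ (hM _)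
  exact (le_abs_self _).trans ((abs_pow C _).trans_le
    (pow_le_pow_left₀ (abs_nonneg C) (le_max_left _ _) _))

end TaylorTerm

section BorelSum

variable {ι W : Type*} [DecidableEq ι] [Fintype ι] [NormedAddCommGroup W] [NormedSpace ℝ W]
  {r : ℕ → ℝ} {c : (ι → ℕ) → W} {v : EuclideanSpace ℝ ι} {n : ℕ}

/-- Borel's summation of the formal power series with jet `c`: the Taylor term of degree `N` is cut
off at scale `1 / r N`. -/
noncomputable def borelSum (r : ℕ → ℝ) (c : (ι → ℕ) → W) (v : EuclideanSpace ℝ ι) : W :=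
  ∑' N, scaledBump (r N) v • taylorTerm c N v

lemma borelSum_apply_zero (r : ℕ → ℝ) (c : (ι → ℕ) → W) : borelSum r c 0 = c 0 := by
  rw [borelSum, tsum_eq_single 0 fun N hN => ?_, taylorTerm_zero,
    scaledBump_eq_one (by simp), one_smul]
  obtain ⟨N, rfl⟩ := Nat.exists_eq_succ_of_ne_zero hN
  simp

lemma borelSum_eq_sum_range (c : (ι → ℕ) → W) (hn : ∀ N ≥ n, 2 < ‖r N • v‖) :
    borelSum r c v = ∑ N ∈ Finset.range n, scaledBump (r N) v • taylorTerm c N v :=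
  tsum_eq_sum fun N hN => by
    rw [scaledBump_eq_zero (hn N (by simpa using hN)), zero_smul]

lemma exists_eventually_two_lt_norm_smul {E : Type*} [NormedAddCommGroup E] [NormedSpace ℝ E]
    (hr : Tendsto r atTop atTop) {v : E} (hv : v ≠ 0) :
    ∃ n, ∀ᶠ x in 𝓝 v, ∀ N ≥ n, 2 < ‖r N • x‖ := by
  have hv' : 0 < ‖v‖ := norm_pos_iff.2 hv
  obtain ⟨n, hn⟩ := eventually_atTop.1 (hr.eventually_gt_atTop (2 / (‖v‖ / 2)))
  refine ⟨n, ?_⟩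
  filter_upwards [continuous_norm.continuousAt.eventually (lt_mem_nhds (half_lt_self hv'))]
    with x hx N hN
  have hrN := (div_lt_iff₀ (half_pos hv')).1 (hn N hN)
  rw [norm_smul, Real.norm_eq_abs]
  calc 2 < r N * (‖v‖ / 2) := hrN
    _ ≤ |r N| * ‖x‖ := mul_le_mul (le_abs_self _) hx.le (half_pos hv').le (abs_nonneg _)

section Regularity

variable {X : Type*} [NormedAddCommGroup X] [NormedSpace ℝ X] {s : Set X}
  {g : (ι → ℕ) → X → W} {w : ℕ → ℝ} {A B : ℝ}

lemma contDiffOn_scaledBump_smul_taylorTerm {m : ℕ∞} (hg : ∀ α, ContDiffOn ℝ m (g α) s) (ρ : ℝ)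
    (N : ℕ) : ContDiffOn ℝ m (fun p : X × EuclideanSpace ℝ ι =>
      scaledBump ρ p.2 • taylorTerm (fun α => g α p.1) N p.2) (s ×ˢ univ) :=
  (((contDiff_scaledBump ρ).of_le (by exact_mod_cast le_top)).comp contDiff_snd).contDiffOn.smul
    (contDiffOn_taylorTerm hg N)

lemma contDiffOn_borelSum (hr : Tendsto r atTop atTop)
    {m : ℕ∞} (hg : ∀ α, ContDiffOn ℝ m (g α) s) :
    ContDiffOn ℝ m (fun p : X × EuclideanSpace ℝ ι => borelSum r (fun α => g α p.1) p.2)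
      (s ×ˢ {v | v ≠ 0}) := by
  rintro ⟨u, v⟩ ⟨hu, hv⟩
  obtain ⟨n, hn⟩ := exists_eventually_two_lt_norm_smul hr hv
  have hsum : (fun p : X × EuclideanSpace ℝ ι => borelSum r (fun α => g α p.1) p.2)
      =ᶠ[𝓝 (u, v)] fun p => ∑ N ∈ Finset.range n,
        scaledBump (r N) p.2 • taylorTerm (fun α => g α p.1) N p.2 := by
    filter_upwards [continuous_snd.continuousAt.eventually hn] with p hp
    exact borelSum_eq_sum_range _ hp
  have hsmooth := ContDiffOn.sum fun N (_ : N ∈ Finset.range n) =>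
    contDiffOn_scaledBump_smul_taylorTerm hg (r N) N
  exact ((hsmooth.mono (prod_mono_right (subset_univ _))) (u, v) ⟨hu, hv⟩).congr_of_eventuallyEq
    (hsum.filter_mono nhdsWithin_le_nhds) hsum.self_of_nhds

lemma norm_scaledBump_smul_taylorTerm_le (hw : RegularWeight w B) (hA : 0 < A)
    (hc : HasTaylorBound w A c) (N : ℕ) (v : EuclideanSpace ℝ ι) :
    ‖scaledBump (dilation w A B N) v • taylorTerm c N v‖ ≤ A * (1 / 2) ^ N := by
  rcases lt_or_ge 2 ‖dilation w A B N • v‖ with hN | hN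
  · rw [scaledBump_eq_zero hN, zero_smul, norm_zero]
    positivity
  · rw [norm_smul, Real.norm_of_nonneg (dilation_nonneg hw hA.le N)] at hN
    rw [norm_smul, Real.norm_eq_abs]
    calc |scaledBump (dilation w A B N) v| * ‖taylorTerm c N v‖
        ≤ 1 * (A ^ (N + 1) * (w N * ‖v‖ ^ N)) :=
          mul_le_mul (abs_scaledBump_le_one _ _) (hc.norm_le N v) (norm_nonneg _) zero_le_one
      _ ≤ A * (1 / 2) ^ N := by
          rw [one_mul]
          exact pow_succ_mul_le_geometric hw hA (norm_nonneg v) hN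

lemma continuousOn_borelSum [CompleteSpace W] (hw : RegularWeight w B) (hA : 0 < A)
    (hg : ∀ α, ContinuousOn (g α) s) (hc : ∀ u ∈ s, HasTaylorBound w A fun α => g α u) :
    ContinuousOn (fun p : X × EuclideanSpace ℝ ι =>
      borelSum (dilation w A B) (fun α => g α p.1) p.2) (s ×ˢ univ) := by
  refine continuousOn_tsum (fun N => ?_) (summable_geometric_two.mul_left A) fun N p hp =>
    norm_scaledBump_smul_taylorTerm_le hw hA (hc p.1 hp.1) N p.2
  exact (contDiffOn_scaledBump_smul_taylorTerm (m := 0) (fun α => contDiffOn_zero.2 (hg α))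
    (dilation w A B N) N).continuousOn

end Regularity

/-- The contribution of degree `N` to the defect `∂_j F - F_j` between the derivative of the Borel
sum `F` of the jet `c` and the Borel sum `F_j` of the jet of the `j`-th derivative. It is supported
where the cutoffs of degrees `N` and `N + 1` are not both locally constant and equal. -/
noncomputable def borelDefect (r : ℕ → ℝ) (c : (ι → ℕ) → W) (j : ι) (N : ℕ)
    (v : EuclideanSpace ℝ ι) : W :=
  fderiv ℝ (scaledBump (r N)) v (EuclideanSpace.single j 1) • taylorTerm c N v +
    (scaledBump (r (N + 1)) v - scaledBump (r N) v) • taylorTerm (jetShift j c) N v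

lemma sum_scaledBump_smul_fderiv_taylorTerm (c : (ι → ℕ) → W) (j : ι) (hn : 2 < ‖r n • v‖) :
    ∑ N ∈ Finset.range n,
        scaledBump (r N) v • fderiv ℝ (taylorTerm c N) v (EuclideanSpace.single j 1) =
      ∑ N ∈ Finset.range n, scaledBump (r (N + 1)) v • taylorTerm (jetShift j c) N v := by
  have hlast := Finset.sum_range_succ
    (fun N => scaledBump (r N) v • fderiv ℝ (taylorTerm c N) v (EuclideanSpace.single j 1)) n
  rw [Finset.sum_range_succ', scaledBump_eq_zero hn, fderiv_taylorTerm_zero] at hlast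
  simpa [fderiv_taylorTerm_succ] using hlast.symm

lemma fderiv_borelSum_sub (c : (ι → ℕ) → W) (j : ι)
    (hn : ∀ᶠ x in 𝓝 v, ∀ N ≥ n, 2 < ‖r N • x‖) :
    fderiv ℝ (borelSum r c) v (EuclideanSpace.single j 1) - borelSum r (jetShift j c) v =
      ∑ N ∈ Finset.range n, borelDefect r c j N v := by
  have hbump (N : ℕ) : DifferentiableAt ℝ (scaledBump (r N)) v :=
    (contDiff_scaledBump (r N)).contDiffAt.differentiableAt (by simp)
  have hterm (N : ℕ) := differentiable_taylorTerm c N v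
  have hsum : borelSum r c =ᶠ[𝓝 v]
      fun x => ∑ N ∈ Finset.range n, scaledBump (r N) x • taylorTerm c N x :=
    hn.mono fun x hx => borelSum_eq_sum_range c hx
  rw [hsum.fderiv_eq, fderiv_fun_sum fun N _ => (hbump N).fun_smul (hterm N), sum_apply,
    borelSum_eq_sum_range _ hn.self_of_nhds]
  simp only [fderiv_fun_smul (hbump _) (hterm _), add_apply, smul_apply,
    ContinuousLinearMap.smulRight_apply, Finset.sum_add_distrib, borelDefect, sub_smul,
    Finset.sum_sub_distrib,
    sum_scaledBump_smul_fderiv_taylorTerm c j (hn.self_of_nhds n le_rfl)]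
  abel

lemma borelDefect_eq_zero_of_two_lt (c : (ι → ℕ) → W) (j : ι) (hn : 2 < ‖r n • v‖)
    (hn' : 2 < ‖r (n + 1) • v‖) : borelDefect r c j n v = 0 := by
  simp [borelDefect, fderiv_scaledBump_eq_zero_of_two_lt hn, scaledBump_eq_zero hn,
    scaledBump_eq_zero hn']

lemma borelDefect_eq_zero_of_lt_one (c : (ι → ℕ) → W) (j : ι) (hn : ‖r n • v‖ < 1)
    (hn' : ‖r (n + 1) • v‖ < 1) : borelDefect r c j n v = 0 := by
  simp [borelDefect, fderiv_scaledBump_eq_zero_of_lt_one hn, scaledBump_eq_one hn.le,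
    scaledBump_eq_one hn'.le]

variable {w : ℕ → ℝ} {A B L : ℝ}

lemma norm_borelDefect_dilation_le (hw : RegularWeight w B) (hc : HasTaylorBound w A c)
    (hL : ‖fderiv ℝ (scaledBump (dilation w A B n)) v‖ ≤ dilation w A B n * L) (j : ι) :
    ‖borelDefect (dilation w A B) c j n v‖ ≤
      (L * (4 * A * B) + 1) * (A ^ (n + 1) * (w (n + 1) * ‖v‖ ^ n)) := by
  have hderiv : ‖fderiv ℝ (scaledBump (dilation w A B n)) v (EuclideanSpace.single j 1)‖ ≤
      dilation w A B n * L :=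
    (ContinuousLinearMap.le_opNorm _ _).trans (by simpa using hL)
  calc ‖borelDefect (dilation w A B) c j n v‖
      ≤ dilation w A B n * L * (A ^ (n + 1) * (w n * ‖v‖ ^ n)) +
          1 * (A ^ (n + 1) * (w (n + 1) * ‖v‖ ^ n)) := by
        refine (norm_add_le _ _).trans ?_
        rw [norm_smul, norm_smul]
        gcongr
        exacts [(norm_nonneg _).trans hderiv, hc.norm_le n v, abs_scaledBump_sub_le_one _ _ _,
          hc.norm_shift_le j n v]
    _ = (L * (4 * A * B) + 1) * (A ^ (n + 1) * (w (n + 1) * ‖v‖ ^ n)) := by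
        rw [dilation, succ_eq_ratio_mul hw.pos]; ring

lemma norm_borelDefect_dilation_le_geometric (hw : RegularWeight w B) (hA : 0 < A)
    (hc : HasTaylorBound w A c)
    (hL : ∀ (ρ : ℝ) (v : EuclideanSpace ℝ ι), ‖fderiv ℝ (scaledBump ρ) v‖ ≤ |ρ| * L)
    (hv : v ≠ 0) (j : ι) (N k : ℕ) :
    ‖borelDefect (dilation w A B) c j N v‖ ≤
      (L * (4 * A * B) + 1) * ((4 * A * B) ^ (k + 1) * (w k * ‖v‖ ^ k) * (1 / 2) ^ (N + 1)) := by
  have hB : 0 < B := zero_lt_one.trans_le hw.one_le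
  have hL0 : 0 ≤ L := by simpa using (norm_nonneg _).trans (hL 1 v)
  have hwk := (hw.pos k).le
  have hnorm (i : ℕ) : ‖dilation w A B i • v‖ = dilation w A B i * ‖v‖ := by
    rw [norm_smul, Real.norm_of_nonneg (dilation_nonneg hw hA.le i)]
  have hmono : ‖dilation w A B N • v‖ ≤ ‖dilation w A B (N + 1) • v‖ := by
    rw [hnorm, hnorm]
    exact mul_le_mul_of_nonneg_right (monotone_dilation hw hA.le N.le_succ) (norm_nonneg v)
  rcases lt_or_ge 2 ‖dilation w A B N • v‖ with hN | hN
  · rw [borelDefect_eq_zero_of_two_lt c j hN (hN.trans_le hmono), norm_zero]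
    positivity
  rcases lt_or_ge ‖dilation w A B (N + 1) • v‖ 1 with hN' | hN'
  · rw [borelDefect_eq_zero_of_lt_one c j (hmono.trans_lt hN') hN', norm_zero]
    positivity
  rw [hnorm] at hN hN'
  have hLN := hL (dilation w A B N) v
  rw [abs_of_nonneg (dilation_nonneg hw hA.le N)] at hLN
  refine (norm_borelDefect_dilation_le hw hc hLN j).trans ?_
  exact mul_le_mul_of_nonneg_left
    (pow_succ_mul_succ_le hw hA (norm_pos_iff.2 hv) hN hN' k) (by positivity)

lemma norm_fderiv_borelSum_sub_le (hw : RegularWeight w B) (hA : 0 < A)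
    (hc : HasTaylorBound w A c)
    (hL : ∀ (ρ : ℝ) (v : EuclideanSpace ℝ ι), ‖fderiv ℝ (scaledBump ρ) v‖ ≤ |ρ| * L)
    (hv : v ≠ 0) (j : ι) (k : ℕ) :
    ‖fderiv ℝ (borelSum (dilation w A B) c) v (EuclideanSpace.single j 1) -
        borelSum (dilation w A B) (jetShift j c) v‖ ≤
      ((L * (4 * A * B) + 1) * (4 * A * B)) ^ (k + 1) * w k * ‖v‖ ^ k := by
  obtain ⟨n, hn⟩ := exists_eventually_two_lt_norm_smul (tendsto_dilation hw hA) hv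
  have hB : 0 < B := zero_lt_one.trans_le hw.one_le
  have hL0 : 0 ≤ L := by simpa using (norm_nonneg _).trans (hL 1 v)
  have hwk := (hw.pos k).le
  have hgeom : ∑ N ∈ Finset.range n, (1 / 2 : ℝ) ^ (N + 1) ≤ 1 := by
    simp_rw [pow_succ, ← Finset.sum_mul]
    linarith [sum_geometric_two_le n]
  rw [fderiv_borelSum_sub c j hn]
  set E := 4 * A * B with hE
  have hE0 : 0 ≤ E := by positivity
  calc ‖∑ N ∈ Finset.range n, borelDefect (dilation w A B) c j N v‖
      ≤ ∑ N ∈ Finset.range n, (L * E + 1) * (E ^ (k + 1) * (w k * ‖v‖ ^ k) * (1 / 2) ^ (N + 1)) :=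
        norm_sum_le_of_le _ fun N _ =>
          norm_borelDefect_dilation_le_geometric hw hA hc hL hv j N k
    _ = (L * E + 1) * (E ^ (k + 1) * (w k * ‖v‖ ^ k)) *
          ∑ N ∈ Finset.range n, (1 / 2 : ℝ) ^ (N + 1) := by
        rw [Finset.mul_sum]
        exact Finset.sum_congr rfl fun N _ => by ring
    _ ≤ (L * E + 1) ^ (k + 1) * (E ^ (k + 1) * (w k * ‖v‖ ^ k)) * 1 := by
        have hone : 1 ≤ L * E + 1 := le_add_of_nonneg_left (by positivity)
        gcongr
        exact le_self_pow₀ hone k.succ_ne_zero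
    _ = ((L * E + 1) * E) ^ (k + 1) * w k * ‖v‖ ^ k := by rw [mul_pow (L * E + 1) E]; ring

end BorelSum

section VectorField

variable {d m : ℕ} {A : Fin d → (Fin d → ℝ) → ℂ} {g h : (Fin d → ℝ) → ℂ} {U : Set (Fin d → ℝ)}
  {u : Fin d → ℝ}

lemma Xapp_const_smul (hg : DifferentiableAt ℝ g u) (ρ : ℝ) :
    Xapp A (fun u => ρ • g u) u = ρ • Xapp A g u := by
  simp only [Xapp, fderiv_fun_const_smul hg, smul_apply, mul_smul_comm, Finset.smul_sum]

lemma Xapp_sum {κ : Type*} {G : κ → (Fin d → ℝ) → ℂ} (s : Finset κ)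
    (hG : ∀ i ∈ s, DifferentiableAt ℝ (G i) u) :
    Xapp A (fun u => ∑ i ∈ s, G i u) u = ∑ i ∈ s, Xapp A (G i) u := by
  simp only [Xapp, fderiv_fun_sum hG, sum_apply, Finset.mul_sum]
  exact Finset.sum_comm

lemma eqOn_Xapp (hU : IsOpen U) (A : Fin d → (Fin d → ℝ) → ℂ) (hgh : EqOn g h U) :
    EqOn (Xapp A g) (Xapp A h) U := fun x hx => by
  simp only [Xapp, (hgh.eventuallyEq_of_mem (hU.mem_nhds hx)).fderiv_eq]

lemma eqOn_iterate_Xapp (hU : IsOpen U) (A : Fin d → (Fin d → ℝ) → ℂ) (hgh : EqOn g h U) (n : ℕ) :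
    EqOn ((Xapp A)^[n] g) ((Xapp A)^[n] h) U := by
  induction n with
  | zero => exact hgh
  | succ n ih =>
    simp only [Function.iterate_succ_apply']
    exact eqOn_Xapp hU A ih

lemma contDiffOn_Xapp (hU : IsOpen U) (hA : ∀ l, ContDiffOn ℝ (⊤ : ℕ∞) (A l) U)
    (hg : ContDiffOn ℝ (⊤ : ℕ∞) g U) : ContDiffOn ℝ (⊤ : ℕ∞) (Xapp A g) U :=
  ContDiffOn.sum fun l _ => (hA l).mul
    ((hg.fderiv_of_isOpen hU (by simp)).clm_apply contDiffOn_const)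

lemma contDiffOn_iterate_Xapp (hU : IsOpen U) (hA : ∀ l, ContDiffOn ℝ (⊤ : ℕ∞) (A l) U)
    (hg : ContDiffOn ℝ (⊤ : ℕ∞) g U) (n : ℕ) : ContDiffOn ℝ (⊤ : ℕ∞) ((Xapp A)^[n] g) U := by
  induction n with
  | zero => exact hg
  | succ n ih =>
    rw [Function.iterate_succ_apply']
    exact contDiffOn_Xapp hU hA ih

lemma eqOn_Xapp_iterate_Xapp (hU : IsOpen U) {A B : Fin d → (Fin d → ℝ) → ℂ}
    (hA : ∀ l, ContDiffOn ℝ (⊤ : ℕ∞) (A l) U)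
    (hcomm : ∀ g : (Fin d → ℝ) → ℂ, ContDiffOn ℝ (⊤ : ℕ∞) g U →
      ∀ x ∈ U, Xapp B (Xapp A g) x = Xapp A (Xapp B g) x)
    (hg : ContDiffOn ℝ (⊤ : ℕ∞) g U) (n : ℕ) :
    EqOn (Xapp B ((Xapp A)^[n] g)) ((Xapp A)^[n] (Xapp B g)) U := by
  induction n with
  | zero => exact fun x _ => rfl
  | succ n ih =>
    simp only [Function.iterate_succ_apply']
    exact fun x hx => (hcomm _ (contDiffOn_iterate_Xapp hU hA hg n) x hx).trans
      (eqOn_Xapp hU A ih hx)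

variable {f : (Fin d → ℝ) → ℂ}

lemma Xmulti_zero (a : Fin m → Fin d → (Fin d → ℝ) → ℂ) (f : (Fin d → ℝ) → ℂ) :
    Xmulti a 0 f = f := by
  have hid (n : ℕ) : (List.replicate n (id : ((Fin d → ℝ) → ℂ) → _)).foldr (· ∘ ·) id = id := by
    induction n with
    | zero => rfl
    | succ n ih => rw [List.replicate_succ, List.foldr_cons, ih, Function.comp_id]
  simp [Xmulti, List.ofFn_const, hid]

lemma Xmulti_eq_iterate_Xmulti_tail (a : Fin (m + 1) → Fin d → (Fin d → ℝ) → ℂ)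
    (α : Fin (m + 1) → ℕ) (f : (Fin d → ℝ) → ℂ) :
    Xmulti a α f = (Xapp (a 0))^[α 0] (Xmulti (Fin.tail a) (Fin.tail α) f) := by
  simp [Xmulti, List.ofFn_succ, Fin.tail]

lemma contDiffOn_Xmulti (hU : IsOpen U) {a : Fin m → Fin d → (Fin d → ℝ) → ℂ}
    (ha : ∀ j l, ContDiffOn ℝ (⊤ : ℕ∞) (a j l) U) (hf : ContDiffOn ℝ (⊤ : ℕ∞) f U)
    (α : Fin m → ℕ) : ContDiffOn ℝ (⊤ : ℕ∞) (Xmulti a α f) U := by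
  induction m with
  | zero => simpa [Xmulti] using hf
  | succ m ih =>
    rw [Xmulti_eq_iterate_Xmulti_tail]
    exact contDiffOn_iterate_Xapp hU (ha 0) (ih (fun j => ha j.succ) _) _

lemma eqOn_Xapp_Xmulti (hU : IsOpen U) {a : Fin m → Fin d → (Fin d → ℝ) → ℂ}
    (ha : ∀ j l, ContDiffOn ℝ (⊤ : ℕ∞) (a j l) U)
    (hcomm : ∀ (j k : Fin m) (g : (Fin d → ℝ) → ℂ), ContDiffOn ℝ (⊤ : ℕ∞) g U →
      ∀ x ∈ U, Xapp (a j) (Xapp (a k) g) x = Xapp (a k) (Xapp (a j) g) x)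
    (hf : ContDiffOn ℝ (⊤ : ℕ∞) f U) (α : Fin m → ℕ) (j : Fin m) :
    EqOn (Xapp (a j) (Xmulti a α f)) (Xmulti a (α + Pi.single j 1) f) U := by
  induction m with
  | zero => exact j.elim0
  | succ m ih =>
    rw [Xmulti_eq_iterate_Xmulti_tail, Xmulti_eq_iterate_Xmulti_tail]
    cases j using Fin.cases with
    | zero =>
      have htail : Fin.tail (α + Pi.single 0 1 : Fin (m + 1) → ℕ) = Fin.tail α := by
        ext i; simp [Fin.tail]
      rw [htail, Pi.add_apply, Pi.single_eq_same, Function.iterate_succ_apply']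
      exact eqOn_refl _ _
    | succ i =>
      have htail : Fin.tail (α + Pi.single i.succ 1 : Fin (m + 1) → ℕ) =
          Fin.tail α + Pi.single i 1 := by
        ext l; simp [Fin.tail, Pi.single_apply]
      have hhead : (α + Pi.single i.succ 1 : Fin (m + 1) → ℕ) 0 = α 0 := by simp
      rw [htail, hhead]
      have htail_smooth : ContDiffOn ℝ (⊤ : ℕ∞) (Xmulti (Fin.tail a) (Fin.tail α) f) U :=
        contDiffOn_Xmulti hU (fun j => ha j.succ) hf _
      exact (eqOn_Xapp_iterate_Xapp hU (ha 0) (hcomm i.succ 0) htail_smooth _).trans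
        (eqOn_iterate_Xapp hU _ (ih (fun j => ha j.succ) (fun j k => hcomm j.succ k.succ) _ i) _)

variable {ι : Type*} [DecidableEq ι] [Fintype ι] {G : (ι → ℕ) → (Fin d → ℝ) → ℂ}

lemma differentiableAt_taylorTerm (hG : ∀ α, DifferentiableAt ℝ (G α) u) (N : ℕ)
    (v : EuclideanSpace ℝ ι) :
    DifferentiableAt ℝ (fun u => taylorTerm (fun α => G α u) N v) u := by
  induction N generalizing G with
  | zero => exact hG 0
  | succ N ih =>
    simp only [taylorTerm_succ]
    exact (DifferentiableAt.fun_sum fun i _ =>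
      (ih fun α => hG (α + Pi.single i 1)).fun_const_smul (v i)).fun_const_smul _

lemma Xapp_taylorTerm (hG : ∀ α, DifferentiableAt ℝ (G α) u) (N : ℕ) (v : EuclideanSpace ℝ ι) :
    Xapp A (fun u => taylorTerm (fun α => G α u) N v) u =
      taylorTerm (fun α => Xapp A (G α) u) N v := by
  induction N generalizing G with
  | zero => rfl
  | succ N ih =>
    have hshift (i : ι) (α : ι → ℕ) : DifferentiableAt ℝ (G (α + Pi.single i 1)) u := hG _
    have hdiff (i : ι) : DifferentiableAt ℝ
        (fun u => taylorTerm (jetShift i fun α => G α u) N v) u :=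
      differentiableAt_taylorTerm (hshift i) N v
    simp only [taylorTerm_succ]
    rw [Xapp_const_smul (DifferentiableAt.fun_sum fun i _ => (hdiff i).fun_const_smul (v i)),
      Xapp_sum _ fun i _ => (hdiff i).fun_const_smul (v i)]
    congr 1
    exact Finset.sum_congr rfl fun i _ =>
      (Xapp_const_smul (hdiff i) (v i)).trans (congrArg _ (ih (hshift i)))

lemma Xapp_borelSum {r : ℕ → ℝ} (hr : Tendsto r atTop atTop)
    (hG : ∀ α, DifferentiableAt ℝ (G α) u) {v : EuclideanSpace ℝ ι} (hv : v ≠ 0) :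
    Xapp A (fun u => borelSum r (fun α => G α u) v) u =
      borelSum r (fun α => Xapp A (G α) u) v := by
  obtain ⟨n, hn⟩ := exists_eventually_two_lt_norm_smul hr hv
  have hdiff (N : ℕ) := differentiableAt_taylorTerm hG N v
  simp only [borelSum_eq_sum_range _ hn.self_of_nhds]
  rw [Xapp_sum _ fun N _ => (hdiff N).fun_const_smul (scaledBump (r N) v)]
  simp only [Xapp_const_smul (hdiff _), Xapp_taylorTerm hG]

end VectorField

end AlmostAnalytic

open AlmostAnalytic in
theorem stmt10_general {d m : ℕ} {M : ℕ → ℝ} (hreg : DCRegular M)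
    {U : Set (Fin d → ℝ)} (hU : IsOpen U) {a : Fin m → Fin d → (Fin d → ℝ) → ℂ}
    (ha : ∀ j l, ContDiffOn ℝ (⊤ : ℕ∞) (a j l) U)
    (hcomm : ∀ (j k : Fin m) (g : (Fin d → ℝ) → ℂ), ContDiffOn ℝ (⊤ : ℕ∞) g U →
      ∀ x ∈ U, Xapp (a j) (Xapp (a k) g) x = Xapp (a k) (Xapp (a j) g) x)
    {f : (Fin d → ℝ) → ℂ} (hf : ContDiffOn ℝ (⊤ : ℕ∞) f U)
    {V : Set (Fin d → ℝ)} (hVU : V ⊆ U) {C : ℝ}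
    (hC : ∀ (α : Fin m → ℕ), ∀ u ∈ V,
      ‖Xmulti a α f u‖ ≤ C ^ ((∑ j, α j) + 1) * M (∑ j, α j)) :
    ∃ Q > (0 : ℝ), ∃ F : (Fin d → ℝ) → EuclideanSpace ℝ (Fin m) → ℂ,
      ContinuousOn (fun p : (Fin d → ℝ) × EuclideanSpace ℝ (Fin m) => F p.1 p.2)
        (V ×ˢ Set.univ) ∧
      ContDiffOn ℝ (⊤ : ℕ∞) (fun p : (Fin d → ℝ) × EuclideanSpace ℝ (Fin m) => F p.1 p.2)
        (V ×ˢ {v : EuclideanSpace ℝ (Fin m) | v ≠ 0}) ∧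
      (∀ u ∈ V, F u 0 = f u) ∧
      ∀ u ∈ V, ∀ v : EuclideanSpace ℝ (Fin m), v ≠ 0 → ∀ (k : ℕ) (j : Fin m),
        ‖fderiv ℝ (F u) v (EuclideanSpace.single j (1 : ℝ)) -
            Xapp (a j) (fun u' => F u' v) u‖ ≤ Q ^ (k + 1) * DCm M k * ‖v‖ ^ k := by
  obtain ⟨B, hw⟩ := exists_regularWeight hreg
  obtain ⟨L, hL⟩ := exists_norm_fderiv_scaledBump_le (EuclideanSpace ℝ (Fin m))
  have hL0 : 0 ≤ L := by simpa using (norm_nonneg _).trans (hL 1 0)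
  obtain ⟨A, hA, hjet⟩ := exists_hasTaylorBound (ι := Fin m) (W := ℂ) hreg.1 C
  have hbound (u) (hu : u ∈ V) : HasTaylorBound (DCm M) A fun α => Xmulti a α f u :=
    hjet fun α => hC α u hu
  have hB : 0 < B := zero_lt_one.trans_le hw.one_le
  have hsmooth (α : Fin m → ℕ) := contDiffOn_Xmulti hU ha hf α
  refine ⟨(L * (4 * A * B) + 1) * (4 * A * B), by positivity,
    fun u => borelSum (dilation (DCm M) A B) fun α => Xmulti a α f u,
    continuousOn_borelSum hw hA (fun α => (hsmooth α).continuousOn.mono hVU) hbound,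
    contDiffOn_borelSum (tendsto_dilation hw hA) fun α => (hsmooth α).mono hVU,
    fun u _ => (borelSum_apply_zero _ _).trans (by rw [Xmulti_zero]), fun u hu v hv k j => ?_⟩
  have hX : Xapp (a j) (fun u' => borelSum (dilation (DCm M) A B) (fun α => Xmulti a α f u') v) u =
      borelSum (dilation (DCm M) A B) (jetShift j fun α => Xmulti a α f u) v := by
    rw [Xapp_borelSum (tendsto_dilation hw hA) (fun α => ((hsmooth α).contDiffAt
      (hU.mem_nhds (hVU hu))).differentiableAt (by simp)) hv]
    congr 1
    exact funext fun α => eqOn_Xapp_Xmulti hU ha hcomm hf α j (hVU hu)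
  exact hX ▸ norm_fderiv_borelSum_sub_le hw hA (hbound u hu) hL hv j k

/-- Theorem 2.7 (existence of almost analytic extensions along a commuting frame).
If `f ∈ C^𝓜(U,X)` for a commuting system `X = (X_1,…,X_m)` of smooth complex vector
fields on the open neighbourhood `U ⊆ ℝ^d` of `0`, then for every open `V ⋐ U` there are
`δ, Q > 0` and `F : V × ℝ^m → ℂ`, continuous on `V × ℝ^m` and `C^∞` on `V × (ℝ^m∖{0})`,
with `F(u,0) = f(u)` and `|∂F/∂v_j(u,v) − X_j F(·,v)(u)| ≤ Q^{k+1} m_k ‖v‖^k`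
for `u ∈ V`, `0 < ‖v‖ < δ`, `k ∈ ℕ`, `1 ≤ j ≤ m`. -/
theorem stmt10 (d m : ℕ) (M : ℕ → ℝ) (hreg : DCRegular M)
    (U : Set (Fin d → ℝ)) (hU : IsOpen U) (hU0 : (0 : Fin d → ℝ) ∈ U)
    (a : Fin m → Fin d → (Fin d → ℝ) → ℂ)
    (ha : ∀ j l, ContDiffOn ℝ (⊤ : ℕ∞) (a j l) U)
    (hcomm : ∀ (j k : Fin m) (g : (Fin d → ℝ) → ℂ), ContDiffOn ℝ (⊤ : ℕ∞) g U →
      ∀ x ∈ U, Xapp (a j) (Xapp (a k) g) x = Xapp (a k) (Xapp (a j) g) x)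
    (f : (Fin d → ℝ) → ℂ) (hf : CMvector M U a f)
    (V : Set (Fin d → ℝ)) (hV : IsOpen V) (hVc : IsCompact (closure V))
    (hVU : closure V ⊆ U) :
    ∃ δ > (0 : ℝ), ∃ Q > (0 : ℝ),
      ∃ F : (Fin d → ℝ) → EuclideanSpace ℝ (Fin m) → ℂ,
        ContinuousOn (fun p : (Fin d → ℝ) × EuclideanSpace ℝ (Fin m) => F p.1 p.2)
          (V ×ˢ Set.univ) ∧
        ContDiffOn ℝ (⊤ : ℕ∞) (fun p : (Fin d → ℝ) × EuclideanSpace ℝ (Fin m) => F p.1 p.2)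
          (V ×ˢ {v : EuclideanSpace ℝ (Fin m) | v ≠ 0}) ∧
        (∀ u ∈ V, F u 0 = f u) ∧
        (∀ u ∈ V, ∀ v : EuclideanSpace ℝ (Fin m), 0 < ‖v‖ → ‖v‖ < δ →
          ∀ (k : ℕ) (j : Fin m),
            ‖fderiv ℝ (F u) v (EuclideanSpace.single j (1 : ℝ)) -
                Xapp (a j) (fun u' => F u' v) u‖
              ≤ Q ^ (k + 1) * DCm M k * ‖v‖ ^ k) := by
  obtain ⟨C, -, hC⟩ := hf.2 (closure V) hVc hVU
  obtain ⟨Q, hQ, F, hFc, hFs, hF0, hF⟩ := stmt10_general hreg hU ha hcomm hf.1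
    (subset_closure.trans hVU) fun α u hu => hC α u (subset_closure hu)
  exact ⟨1, one_pos, Q, hQ, F, hFc, hFs, hF0, fun u hu v hv _ => hF u hu v (norm_pos_iff.1 hv)⟩
end

section
/- Let Z, z′ ∈ ℂ^m, let v ∈ ℝ^m with v ≠ 0 (viewed inside ℂ^m), let ζ ∈ ℂ^m, let η ∈ ℂ with η² = Σ_j ζ_j², and let κ′ > 0 and c♯ > 0. Assume: (i) Re[ i ζ·(Z − z′) − η·⟨Z − z′⟩² ] ≤ −κ′·‖ζ‖·‖Z − z′‖²; (ii) Re(ζ)·v ≥ c♯·‖v‖·‖ζ‖; (iii) ‖v‖ ≤ κ′c♯/4 and ‖v‖ ≤ c♯/2. Then Re[ i ζ·(Z + iv − z′) − η·⟨Z + iv − z′⟩² ] ≤ −(c♯/4)·‖v‖·‖ζ‖. -/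
open scoped BigOperators

/-- The complex bilinear dot product `a·b = ∑ j, a_j b_j` on `ℂ^m`. -/
noncomputable def cdot {m : ℕ} (a b : EuclideanSpace ℂ (Fin m)) : ℂ := ∑ j, a j * b j

/-!
Moving `w = Z - z'` to `w + iv` changes the phase `iζ·w - η⟨w⟩²` by `-ζ·v`, whose real part is at
most `-c♯‖v‖‖ζ‖`, and by `-η(2i w·v - ⟨v⟩²)`, of modulus at most `‖ζ‖(2‖w‖‖v‖ + ‖v‖²)` since
`‖η‖ ≤ ‖ζ‖`. Young's inequality absorbs `2‖w‖‖v‖` into the Gaussian decay `κ'‖w‖²` at the price of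
`‖v‖²/κ' ≤ (c♯/4)‖v‖`, while `‖v‖² ≤ (c♯/2)‖v‖`; what remains is `-1 + 1/4 + 1/2 = -1/4` times
`c♯‖v‖‖ζ‖`.
-/

section DotProduct

variable {m : ℕ}

theorem norm_cdot_le (a b : EuclideanSpace ℂ (Fin m)) : ‖cdot a b‖ ≤ ‖a‖ * ‖b‖ :=
  calc ‖cdot a b‖ ≤ ∑ j, ‖a j‖ * ‖b j‖ := by
        simpa only [cdot, norm_mul] using norm_sum_le Finset.univ fun j => a j * b j
    _ ≤ √(∑ j, ‖a j‖ ^ 2) * √(∑ j, ‖b j‖ ^ 2) := Real.sum_mul_le_sqrt_mul_sqrt _ _ _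
    _ = ‖a‖ * ‖b‖ := by rw [EuclideanSpace.norm_eq, EuclideanSpace.norm_eq]

theorem norm_le_of_sq_eq_cdot_self {η : ℂ} {ζ : EuclideanSpace ℂ (Fin m)}
    (h : η ^ 2 = cdot ζ ζ) : ‖η‖ ≤ ‖ζ‖ := by
  refine le_of_sq_le_sq ?_ (norm_nonneg ζ)
  calc ‖η‖ ^ 2 = ‖cdot ζ ζ‖ := by rw [← norm_pow, h]
    _ ≤ ‖ζ‖ * ‖ζ‖ := norm_cdot_le ζ ζ
    _ = ‖ζ‖ ^ 2 := (sq ‖ζ‖).symm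

theorem re_cdot_of_im_eq_zero (a : EuclideanSpace ℂ (Fin m)) {b : EuclideanSpace ℂ (Fin m)}
    (hb : ∀ j, (b j).im = 0) : (cdot a b).re = ∑ j, (a j).re * (b j).re := by
  simp only [cdot, Complex.re_sum, Complex.mul_re, hb, mul_zero, sub_zero]

/-- The dot product `cdot` on `ℂ^m` as a bilinear form, obtained from Mathlib's dot product of
functions; its values are definitionally those of `cdot`. -/
noncomputable def cdotForm (m : ℕ) : LinearMap.BilinForm ℂ (EuclideanSpace ℂ (Fin m)) :=
  (dotProductBilin ℂ ℂ).compl₁₂ (WithLp.linearEquiv 2 ℂ (Fin m → ℂ)).toLinearMap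
    (WithLp.linearEquiv 2 ℂ (Fin m → ℂ)).toLinearMap

end DotProduct

section Phase

variable {E : Type*} [AddCommGroup E] [Module ℂ E]

/-- The exponent `iζ·w - η⟨w⟩²` of the Gaussian wave packet `exp (iζ·w - η⟨w⟩²)`, with an arbitrary
complex bilinear form `B` in place of the dot product. -/
noncomputable def quadraticPhase (B : LinearMap.BilinForm ℂ E) (ζ : E) (η : ℂ) (w : E) : ℂ :=
  Complex.I * B ζ w - η * B w w

theorem quadraticPhase_add_I_smul (B : LinearMap.BilinForm ℂ E) (ζ : E) (η : ℂ) (w v : E) :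
    quadraticPhase B ζ η (w + Complex.I • v) =
      quadraticPhase B ζ η w - B ζ v - η * (Complex.I * (B w v + B v w) - B v v) := by
  simp only [quadraticPhase, map_add, map_smul, LinearMap.add_apply, LinearMap.smul_apply,
    smul_eq_mul]
  linear_combination (B ζ v - η * B v v) * Complex.I_sq

end Phase

theorem two_mul_mul_le_of_le_mul {𝕜 : Type*} [Field 𝕜] [LinearOrder 𝕜] [IsStrictOrderedRing 𝕜]
    {κ c t : 𝕜} (w : 𝕜) (hκ : 0 < κ) (ht : 0 ≤ t) (h : t ≤ κ * c) :
    2 * w * t ≤ κ * w ^ 2 + c * t :=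
  calc 2 * w * t ≤ κ * w ^ 2 + κ⁻¹ * t ^ 2 := two_mul_le_add_mul_sq hκ
    _ = κ * w ^ 2 + κ⁻¹ * t * t := by ring
    _ ≤ κ * w ^ 2 + c * t := by gcongr; exact (inv_mul_le_iff₀ hκ).2 h

section BoundedForm

variable {E : Type*} [SeminormedAddCommGroup E] [NormedSpace ℂ E] {B : LinearMap.BilinForm ℂ E}

theorem norm_I_mul_add_sub_le (hB : ∀ x y, ‖B x y‖ ≤ ‖x‖ * ‖y‖) (w v : E) :
    ‖Complex.I * (B w v + B v w) - B v v‖ ≤ 2 * ‖w‖ * ‖v‖ + ‖v‖ ^ 2 :=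
  calc ‖Complex.I * (B w v + B v w) - B v v‖
      ≤ ‖B w v + B v w‖ + ‖B v v‖ := by
        simpa only [norm_mul, Complex.norm_I, one_mul] using
          norm_sub_le (Complex.I * (B w v + B v w)) (B v v)
    _ ≤ (‖w‖ * ‖v‖ + ‖v‖ * ‖w‖) + ‖v‖ * ‖v‖ :=
        add_le_add (norm_add_le_of_le (hB w v) (hB v w)) (hB v v)
    _ = 2 * ‖w‖ * ‖v‖ + ‖v‖ ^ 2 := by ring

theorem re_quadraticPhase_add_I_smul_le (hB : ∀ x y, ‖B x y‖ ≤ ‖x‖ * ‖y‖) {η : ℂ} {ζ : E}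
    (hη : ‖η‖ ≤ ‖ζ‖) (w v : E) :
    (quadraticPhase B ζ η (w + Complex.I • v)).re ≤
      (quadraticPhase B ζ η w).re - (B ζ v).re + ‖ζ‖ * (2 * ‖w‖ * ‖v‖ + ‖v‖ ^ 2) := by
  set e := Complex.I * (B w v + B v w) - B v v with he
  have h_error : -(η * e).re ≤ ‖ζ‖ * (2 * ‖w‖ * ‖v‖ + ‖v‖ ^ 2) :=
    calc -(η * e).re ≤ ‖η * e‖ := (neg_le_abs _).trans (Complex.abs_re_le_norm _)
      _ = ‖η‖ * ‖e‖ := norm_mul η e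
      _ ≤ ‖ζ‖ * (2 * ‖w‖ * ‖v‖ + ‖v‖ ^ 2) := by gcongr; exact norm_I_mul_add_sub_le hB w v
  rw [quadraticPhase_add_I_smul, ← he, Complex.sub_re, Complex.sub_re _ (B ζ v)]
  linarith only [h_error]

theorem stmt16_general (hB : ∀ x y, ‖B x y‖ ≤ ‖x‖ * ‖y‖) {x y v ζ : E} {η : ℂ}
    (hη : ‖η‖ ≤ ‖ζ‖) {κ c : ℝ} (hκ : 0 < κ)
    (h_decay : (quadraticPhase B ζ η (x - y)).re ≤ -κ * ‖ζ‖ * ‖x - y‖ ^ 2)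
    (h_cone : c * ‖v‖ * ‖ζ‖ ≤ (B ζ v).re) (hvκ : ‖v‖ ≤ κ * c / 4) (hvc : ‖v‖ ≤ c / 2) :
    (quadraticPhase B ζ η (x + Complex.I • v - y)).re ≤ -(c / 4) * ‖v‖ * ‖ζ‖ := by
  have h_cross : 2 * ‖x - y‖ * ‖v‖ ≤ κ * ‖x - y‖ ^ 2 + c / 4 * ‖v‖ :=
    two_mul_mul_le_of_le_mul _ hκ (norm_nonneg v) (hvκ.trans_eq (mul_div_assoc κ c 4))
  have h_sq : ‖v‖ ^ 2 ≤ c / 2 * ‖v‖ := by rw [sq]; gcongr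
  rw [add_sub_right_comm]
  calc _ ≤ (quadraticPhase B ζ η (x - y)).re - (B ζ v).re
          + ‖ζ‖ * (2 * ‖x - y‖ * ‖v‖ + ‖v‖ ^ 2) :=
        re_quadraticPhase_add_I_smul_le hB hη _ _
    _ ≤ -κ * ‖ζ‖ * ‖x - y‖ ^ 2 - c * ‖v‖ * ‖ζ‖
          + ‖ζ‖ * ((κ * ‖x - y‖ ^ 2 + c / 4 * ‖v‖) + c / 2 * ‖v‖) := by gcongr
    _ = -(c / 4) * ‖v‖ * ‖ζ‖ := by ring

end BoundedForm

/-- Let `Z, z′ ∈ ℂ^m`, `v ∈ ℝ^m ⊆ ℂ^m` nonzero, `ζ ∈ ℂ^m`, `η² = ⟨ζ⟩²`, `κ′, c♯ > 0`.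
If `Re[iζ·(Z−z′) − η⟨Z−z′⟩²] ≤ −κ′‖ζ‖‖Z−z′‖²`, `Re(ζ)·v ≥ c♯‖v‖‖ζ‖`,
`‖v‖ ≤ κ′c♯/4` and `‖v‖ ≤ c♯/2`, then
`Re[iζ·(Z+iv−z′) − η⟨Z+iv−z′⟩²] ≤ −(c♯/4)‖v‖‖ζ‖`. -/
theorem stmt16 (m : ℕ) (Z z' v ζ : EuclideanSpace ℂ (Fin m))
    (hv : ∀ j, (v j).im = 0) (hv0 : v ≠ 0)
    (η : ℂ) (hη : η ^ 2 = cdot ζ ζ) (κ' cs : ℝ) (hκ' : 0 < κ') (hcs : 0 < cs)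
    (h1 : (Complex.I * cdot ζ (Z - z') - η * cdot (Z - z') (Z - z')).re
        ≤ -κ' * ‖ζ‖ * ‖Z - z'‖ ^ 2)
    (h2 : cs * ‖v‖ * ‖ζ‖ ≤ ∑ j, (ζ j).re * (v j).re)
    (h3 : ‖v‖ ≤ κ' * cs / 4) (h4 : ‖v‖ ≤ cs / 2) :
    (Complex.I * cdot ζ (Z + Complex.I • v - z') -
        η * cdot (Z + Complex.I • v - z') (Z + Complex.I • v - z')).re
      ≤ -(cs / 4) * ‖v‖ * ‖ζ‖ := by
  rw [← re_cdot_of_im_eq_zero ζ hv] at h2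
  exact stmt16_general (B := cdotForm m) norm_cdot_le (norm_le_of_sq_eq_cdot_self hη) hκ'
    h1 h2 h3 h4
end

section
/- Let 𝓜 be a regular sequence, Ω ⊆ ℝ^N an open neighborhood of 0, and for 1 ≤ j ≤ n let L_j = ∂/∂r_j + Σ_{ℓ=1}^N a_{jℓ}(x) ∂/∂x_ℓ be vector fields on Ω × ℝ^n with a_{jℓ} ∈ C¹(Ω,ℂ). Suppose that for each 1 ≤ ℓ ≤ N there exist Z_ℓ ∈ C¹(Ω × ℝ^n, ℂ) and constants Q, δ > 0 with Z_ℓ(x,0) = x_ℓ and |L_j Z_ℓ(x,r)| ≤ Q^{k+1} m_k ‖r‖^k for all x ∈ Ω, 0 < ‖r‖ < δ, k ∈ ℕ, 1 ≤ j ≤ n. Let ξ_0 ∈ ℝ^N ∖ {0} and j_0 ∈ {1,…,n} with Σ_ℓ Im(a_{j_0 ℓ}(0))·ξ_{0,ℓ} < 0, and let Ψ ∈ C¹(Ω × ℝ^n, ℂ) satisfy |L_{j_0} Ψ(x,r)| ≤ Q^{k+1} m_k ‖r‖^k for x ∈ Ω, 0 < ‖r‖ < δ, k ∈ ℕ. Then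 there exist an open cone Γ ⊆ ℝ^N ∖ {0} with ξ_0 ∈ Γ, open neighborhoods V ⋐ U ⋐ Ω of 0, a cutoff χ ∈ C_c^∞(Ω) with χ = 1 on U, and A > 0 such that |ℱ[χ·Ψ_0](x,ξ)| ≤ A^{k+1} M_k / ‖ξ‖^k for all (x,ξ) ∈ V × Γ and all k ∈ ℕ, where Ψ_0(x) := Ψ(x,0). -/
open scoped BigOperators

/-- The Euclidean norm on `ℝ^N`. -/
noncomputable def eNormR (N : ℕ) (x : Fin N → ℝ) : ℝ := Real.sqrt (∑ i, (x i) ^ 2)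

/-- The F.B.I. transform of a (compactly supported, continuous) function `g : ℝ^N → ℂ`:
`ℱ[g](x,ξ) = ∫ e^{i(x−y)·ξ − ‖ξ‖‖x−y‖²} g(y) dy`. -/
noncomputable def FBIT (N : ℕ) (g : (Fin N → ℝ) → ℂ) (x ξ : Fin N → ℝ) : ℂ :=
  ∫ y : Fin N → ℝ,
    Complex.exp (Complex.I * ((∑ i, (x i - y i) * ξ i : ℝ) : ℂ) -
      ((eNormR N ξ * (eNormR N (x - y)) ^ 2 : ℝ) : ℂ)) * g y

/-- The vector field `L_j = ∂/∂r_j + ∑_ℓ a_{jℓ}(x) ∂/∂x_ℓ` applied to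
`H : ℝ^N × ℝ^n → ℂ`. -/
noncomputable def Lop {N n : ℕ} (a : Fin n → Fin N → (Fin N → ℝ) → ℂ) (j : Fin n)
    (H : (Fin N → ℝ) → (Fin n → ℝ) → ℂ) (x : Fin N → ℝ) (r : Fin n → ℝ) : ℂ :=
  fderiv ℝ (fun r' => H x r') r (Pi.single j (1 : ℝ)) +
    ∑ l, a j l x * fderiv ℝ (fun x' => H x' r) x (Pi.single l (1 : ℝ))


open scoped Nat Matrix Topology ContDiff
open Set Filter MeasureTheory

/-!
Put `t = r_{j₀}` and work on the slice where the other `r_j` vanish, in the half-space `t ≤ 0`.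
Let `Φ(z) = exp (i (x - z) · ξ - ‖ξ‖ ∑ (x_l - z_l)²)`, so that `Φ(y)` is the F.B.I. kernel for real
`y`, and let `χ` be a cutoff equal to `1` on `‖y‖ ≤ r` and vanishing for `‖y‖ ≥ 2r`. Since
`Z(0, y) = y`, the F.B.I. transform of `χ Ψ₀` is the integral of the form
`Φ(Z) χ Ψ dZ₁ ∧ … ∧ dZ_N` over the face `t = 0` of `[-T, 0] × {‖y‖ ≤ 2r}`. Stokes' theorem moves it
to the face `t = -T`, at the cost of the integral of `Φ(Z) d(χ Ψ) ∧ dZ₁ ∧ … ∧ dZ_N` over the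
interior.

As `∂Z/∂t = -a(0)` at the origin, `Im Z · ξ ≤ c t ‖ξ‖` for `t ≤ 0` and `ξ` in a cone around `ξ₀`,
so `|Φ(Z)| ≤ exp (c' t ‖ξ‖)` once `T` is small: the face `t = -T` is exponentially small. So is the
interior part with `‖y‖ ≥ r`, thanks to the quadratic term of the phase. Where `χ = 1`, adding
`a_l` times the `∂/∂y_l` column to the `∂/∂t` column of the determinant of `(∇Ψ, ∇Z)` turns the
latter into `(LΨ, LZ)`, which is `O(Q ^ (k + 1) m_k |t| ^ k)`, and
`|t| ^ k exp (c' t ‖ξ‖) ≤ k! / (c' ‖ξ‖) ^ k` gives the bound by `M_k / ‖ξ‖ ^ k`.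
-/

/-! ### Regular sequences and Denjoy–Carleman decay -/

theorem DCRegular.one_le_DCm {M : ℕ → ℝ} (h : DCRegular M) (k : ℕ) : 1 ≤ DCm M k := by
  obtain ⟨-, h_zero, h_one, h_logConvex, -, -⟩ := h
  suffices 1 ≤ DCm M k ∧ DCm M k ≤ DCm M (k + 1) from this.1
  induction k with
  | zero => simp [h_zero, h_one]
  | succ k ih =>
    obtain ⟨one_le, le_succ⟩ := ih
    refine ⟨one_le.trans le_succ, ?_⟩
    have h_sq : DCm M (k + 1) ^ 2 ≤ DCm M k * DCm M (k + 2) := by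
      simpa using h_logConvex (k + 1) (by omega)
    by_contra! h_lt
    nlinarith

theorem DCm_mul_factorial (M : ℕ → ℝ) (k : ℕ) : DCm M k * k ! = M k :=
  div_mul_cancel₀ _ (by positivity)

theorem DCRegular.factorial_le {M : ℕ → ℝ} (h : DCRegular M) (k : ℕ) : (k ! : ℝ) ≤ M k := by
  rw [← DCm_mul_factorial M]
  exact le_mul_of_one_le_left (by positivity) (h.one_le_DCm k)

theorem pow_mul_exp_neg_le {u t : ℝ} (hu : 0 < u) (ht : 0 ≤ t) (k : ℕ) :
    t ^ k * Real.exp (-(u * t)) ≤ k ! / u ^ k := by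
  have h := Real.pow_div_factorial_le_exp (u * t) (by positivity) k
  rw [div_le_iff₀ (by positivity), mul_pow] at h
  rw [Real.exp_neg, ← div_eq_mul_inv, div_le_div_iff₀ (Real.exp_pos _) (by positivity)]
  linarith

/-- Denjoy–Carleman decay of order `M`: `‖F p‖ ≤ A ^ (k + 1) * M k / s p ^ k` on `S`, with one
constant `A` for all `k`. In the F.B.I. estimate `p = (x, ξ)` and `s p` is the norm of `ξ`. -/
def DCDecay {α E : Type*} [Norm E] (M : ℕ → ℝ) (S : Set α) (s : α → ℝ) (F : α → E) : Prop :=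
  ∃ A > (0 : ℝ), ∀ p ∈ S, ∀ k : ℕ, ‖F p‖ ≤ A ^ (k + 1) * M k / s p ^ k

namespace DCDecay

variable {α β E : Type*} [SeminormedAddCommGroup E] {M : ℕ → ℝ} {S S' : Set α} {s : α → ℝ}
  {F F' : α → E}

theorem of_le (hM : ∀ k, 0 ≤ M k) (hs : ∀ p ∈ S, 0 < s p) {K A : ℝ} (hK : 0 ≤ K) (hA : 0 ≤ A)
    (h : ∀ p ∈ S, ∀ k, ‖F p‖ ≤ K * (A ^ k * (M k / s p ^ k))) : DCDecay M S s F := by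
  refine ⟨K + A + 1, by positivity, fun p hp k => (h p hp k).trans ?_⟩
  have := hM k
  have := hs p hp
  calc K * (A ^ k * (M k / s p ^ k))
      ≤ (K + A + 1) * ((K + A + 1) ^ k * (M k / s p ^ k)) := by
        gcongr <;> linarith
    _ = (K + A + 1) ^ (k + 1) * M k / s p ^ k := by ring

theorem congr (h : DCDecay M S s F) (hF : ∀ p ∈ S, F p = F' p) : DCDecay M S s F' := by
  obtain ⟨A, hA, h⟩ := h
  exact ⟨A, hA, fun p hp => hF p hp ▸ h p hp⟩

theorem add (hM : ∀ k, 0 ≤ M k) (hs : ∀ p ∈ S, 0 < s p) (h : DCDecay M S s F)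
    (h' : DCDecay M S s F') : DCDecay M S s fun p => F p + F' p := by
  obtain ⟨A, hA, h⟩ := h
  obtain ⟨A', hA', h'⟩ := h'
  refine ⟨A + A', by positivity, fun p hp k => ?_⟩
  have := hM k
  have := hs p hp
  calc ‖F p + F' p‖
      ≤ A ^ (k + 1) * M k / s p ^ k + A' ^ (k + 1) * M k / s p ^ k :=
        norm_add_le_of_le (h p hp k) (h' p hp k)
    _ = (A ^ (k + 1) + A' ^ (k + 1)) * M k / s p ^ k := by ring
    _ ≤ (A + A') ^ (k + 1) * M k / s p ^ k := by
        gcongr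
        exact pow_add_pow_le hA.le hA'.le k.succ_ne_zero

theorem union (hM : ∀ k, 0 ≤ M k) (hs : ∀ p ∈ S ∪ S', 0 < s p) (h : DCDecay M S s F)
    (h' : DCDecay M S' s F) : DCDecay M (S ∪ S') s F := by
  obtain ⟨A, hA, h⟩ := h
  obtain ⟨A', hA', h'⟩ := h'
  refine ⟨max A A', lt_max_of_lt_left hA, fun p hp k => ?_⟩
  have := hM k
  have := hs p hp
  rcases hp with hp | hp
  · refine (h p hp k).trans ?_
    gcongr
    exact le_max_left A A'
  · refine (h' p hp k).trans ?_
    gcongr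
    exact le_max_right A A'

theorem of_le_exp_neg (hM : ∀ k, (k ! : ℝ) ≤ M k) (hs : ∀ p ∈ S, 0 < s p) {K u : ℝ} (hK : 0 ≤ K)
    (hu : 0 < u) (h : ∀ p ∈ S, ‖F p‖ ≤ K * Real.exp (-(u * s p))) : DCDecay M S s F := by
  refine of_le (fun k => (Nat.cast_nonneg _).trans (hM k)) hs hK (inv_nonneg.2 hu.le)
    fun p hp k => (h p hp).trans ?_
  have := hs p hp
  have h_exp : Real.exp (-(u * s p)) ≤ k ! / (u * s p) ^ k := by
    simpa using pow_mul_exp_neg_le (mul_pos hu this) zero_le_one k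
  calc K * Real.exp (-(u * s p)) ≤ K * (M k / (u * s p) ^ k) := by
        gcongr
        exact h_exp.trans (by gcongr; exact hM k)
    _ = K * (u⁻¹ ^ k * (M k / s p ^ k)) := by
        rw [mul_pow, inv_pow]
        field_simp

theorem of_le_flat_mul_exp_neg (hM : ∀ k, 0 ≤ M k) (hs : ∀ p ∈ S, 0 < s p) {τ : α → ℝ}
    (hτ : ∀ p ∈ S, 0 ≤ τ p) {K Q c : ℝ} (hK : 0 ≤ K) (hQ : 0 < Q) (hc : 0 < c)
    (h : ∀ p ∈ S, ∀ k, ‖F p‖ ≤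
      K * (Q ^ (k + 1) * DCm M k * τ p ^ k) * Real.exp (-(c * τ p * s p))) :
    DCDecay M S s F := by
  refine of_le hM hs (mul_nonneg hK hQ.le) (div_nonneg hQ.le hc.le)
    fun p hp k => (h p hp k).trans ?_
  have := hs p hp
  have hm : 0 ≤ DCm M k := div_nonneg (hM k) (by positivity)
  calc K * (Q ^ (k + 1) * DCm M k * τ p ^ k) * Real.exp (-(c * τ p * s p))
      = K * Q ^ (k + 1) * DCm M k * (τ p ^ k * Real.exp (-(c * s p * τ p))) := by ring_nf
    _ ≤ K * Q ^ (k + 1) * DCm M k * (k ! / (c * s p) ^ k) := by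
        gcongr
        exact pow_mul_exp_neg_le (by positivity) (hτ p hp) k
    _ = K * Q * ((Q / c) ^ k * (DCm M k * k ! / s p ^ k)) := by
        rw [mul_pow, div_pow]
        field_simp
        ring
    _ = K * Q * ((Q / c) ^ k * (M k / s p ^ k)) := by rw [DCm_mul_factorial]

theorem setIntegral {E : Type*} [NormedAddCommGroup E] [NormedSpace ℝ E] [MeasurableSpace β]
    {μ : Measure β} {B : Set β} (hM : ∀ k, 0 ≤ M k) (hs : ∀ p ∈ S, 0 < s p) (hB : μ B < ⊤)
    {F : α × β → E} (h : DCDecay M (S ×ˢ B) (fun q => s q.1) F) :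
    DCDecay M S s fun p => ∫ b in B, F (p, b) ∂μ := by
  obtain ⟨A, hA, h⟩ := h
  refine of_le hM hs (K := A * μ.real B) (by positivity) hA.le fun p hp k => ?_
  have h_bound : ∀ b ∈ B, ‖F (p, b)‖ ≤ A ^ (k + 1) * M k / s p ^ k := fun b hb =>
    h (p, b) ⟨hp, hb⟩ k
  exact (norm_setIntegral_le_of_norm_le_const hB h_bound).trans_eq (by ring)

end DCDecay

/-! ### The Euclidean norm on `Fin N → ℝ` -/

section EuclideanNorm

variable {N : ℕ}

theorem eNormR_eq_norm (x : Fin N → ℝ) : eNormR N x = ‖WithLp.toLp 2 x‖ := by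
  simp [eNormR, EuclideanSpace.norm_eq]

theorem sq_eNormR (x : Fin N → ℝ) : eNormR N x ^ 2 = ∑ i, x i ^ 2 :=
  Real.sq_sqrt (by positivity)

theorem eNormR_nonneg (x : Fin N → ℝ) : 0 ≤ eNormR N x := Real.sqrt_nonneg _

theorem eNormR_pos {x : Fin N → ℝ} (hx : x ≠ 0) : 0 < eNormR N x := by
  rw [eNormR_eq_norm]
  exact norm_pos_iff.2 (by simpa using hx)

theorem eNormR_smul (t : ℝ) (x : Fin N → ℝ) : eNormR N (t • x) = |t| * eNormR N x := by
  rw [eNormR_eq_norm, eNormR_eq_norm, WithLp.toLp_smul, norm_smul, Real.norm_eq_abs]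

theorem eNormR_single (i : Fin N) (t : ℝ) : eNormR N (Pi.single i t) = |t| := by
  rw [eNormR_eq_norm, PiLp.toLp_single, PiLp.norm_single, Real.norm_eq_abs]

theorem continuous_eNormR : Continuous (eNormR N) := by
  unfold eNormR
  fun_prop

theorem dotProduct_le_eNormR_mul_eNormR (x y : Fin N → ℝ) :
    x ⬝ᵥ y ≤ eNormR N x * eNormR N y := by
  simpa [eNormR_eq_norm, PiLp.inner_apply, dotProduct, mul_comm] using
    real_inner_le_norm (WithLp.toLp 2 x) (WithLp.toLp 2 y)

theorem norm_le_eNormR (x : Fin N → ℝ) : ‖x‖ ≤ eNormR N x := by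
  rw [eNormR_eq_norm]
  exact (pi_norm_le_iff_of_nonneg (norm_nonneg _)).2 (PiLp.norm_apply_le (WithLp.toLp 2 x))

theorem sq_eNormR_le (x : Fin N → ℝ) : eNormR N x ^ 2 ≤ N * ‖x‖ ^ 2 := by
  rw [sq_eNormR]
  calc ∑ i, x i ^ 2 ≤ ∑ _i : Fin N, ‖x‖ ^ 2 :=
        Finset.sum_le_sum fun i _ => sq_le_sq.2 (by simpa using norm_le_pi_norm x i)
    _ = N * ‖x‖ ^ 2 := by simp

end EuclideanNorm

/-! ### Bordered determinants -/

theorem norm_det_le_of_mulVec_le {ι 𝕜 : Type*} [Fintype ι] [DecidableEq ι] [NormedField 𝕜]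
    {A : Matrix ι ι 𝕜} {u : ι → 𝕜} {j : ι} (hu : u j = 1) {B d : ℝ} (hA : ∀ i k, ‖A i k‖ ≤ B)
    (hd : ∀ i, ‖(A *ᵥ u) i‖ ≤ d) :
    ‖A.det‖ ≤ (Fintype.card ι)! * (d * B ^ (Fintype.card ι - 1)) := by
  have h_col : A.det = (A.updateCol j (A *ᵥ u)).det := by
    have h := Matrix.det_updateCol_sum A j u
    rw [hu, one_smul] at h
    rw [← h]
    congr 2
    ext i
    simp [Matrix.mulVec, dotProduct, mul_comm]
  have h_term : ∀ σ : Equiv.Perm ι, ‖∏ i, A.updateCol j (A *ᵥ u) (σ i) i‖ ≤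
      d * B ^ (Fintype.card ι - 1) := by
    intro σ
    rw [norm_prod, ← Finset.mul_prod_erase _ _ (Finset.mem_univ j), Matrix.updateCol_self]
    have h_erase : ∏ i ∈ Finset.univ.erase j, ‖A.updateCol j (A *ᵥ u) (σ i) i‖ ≤
        B ^ (Finset.univ.erase j).card := by
      rw [← Finset.prod_const]
      refine Finset.prod_le_prod (fun i _ => norm_nonneg _) fun i hi => ?_
      rw [Matrix.updateCol_ne (Finset.ne_of_mem_erase hi)]
      exact hA _ _
    rw [Finset.card_erase_of_mem (Finset.mem_univ j), Finset.card_univ] at h_erase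
    exact mul_le_mul (hd _) h_erase (by positivity) ((norm_nonneg _).trans (hd j))
  rw [h_col, Matrix.det_apply]
  calc _ ≤ ∑ σ : Equiv.Perm ι, ‖Equiv.Perm.sign σ • ∏ i, A.updateCol j (A *ᵥ u) (σ i) i‖ :=
        norm_sum_le _ _
    _ = ∑ σ : Equiv.Perm ι, ‖∏ i, A.updateCol j (A *ᵥ u) (σ i) i‖ :=
        Finset.sum_congr rfl fun σ _ => by
          rcases Int.units_eq_one_or (Equiv.Perm.sign σ) with h | h <;> simp [h]
    _ ≤ ∑ _σ : Equiv.Perm ι, d * B ^ (Fintype.card ι - 1) :=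
        Finset.sum_le_sum fun σ _ => h_term σ
    _ = (Fintype.card ι)! * (d * B ^ (Fintype.card ι - 1)) := by
        simp [Finset.card_univ, Fintype.card_perm]

/-- The determinant with first row `v` and remaining rows `w`. For `v = ∇f` and `w i = ∇Zᵢ` it is
the density of `df ∧ dZ₁ ∧ … ∧ dZ_N`. -/
def borderedDet {R : Type*} [CommRing R] {n : ℕ} (v : Fin (n + 1) → R)
    (w : Fin n → Fin (n + 1) → R) : R :=
  (Matrix.of (Fin.cons v w : Fin (n + 1) → Fin (n + 1) → R)).det

section BorderedDet

variable {R : Type*} [CommRing R] {n : ℕ}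

theorem borderedDet_eq_sum (v : Fin (n + 1) → R) (w : Fin n → Fin (n + 1) → R) :
    borderedDet v w = ∑ j, v j * borderedDet (Pi.single j 1) w := by
  rw [borderedDet, Matrix.det_eq_sum_mul_adjugate_row _ 0]
  refine Finset.sum_congr rfl fun j _ => ?_
  rw [Matrix.adjugate_apply]
  congr 2
  exact Fin.update_cons_zero (α := fun _ => Fin (n + 1) → R) v w (Pi.single j 1)

theorem borderedDet_single_zero (w : Fin n → Fin (n + 1) → R) :
    borderedDet (Pi.single 0 1) w = (Matrix.of fun i k => w i k.succ).det := by
  rw [borderedDet, Matrix.det_succ_row_zero, Fin.sum_univ_succ]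
  simp [Matrix.submatrix]

theorem borderedDet_smul_add_sum (α : R) (v : Fin (n + 1) → R) (c : Fin n → R)
    (w : Fin n → Fin (n + 1) → R) :
    borderedDet (α • v + ∑ l, c l • w l) w = α * borderedDet v w := by
  have h := Matrix.det_updateRow_sum (Matrix.of (Fin.cons v w : Fin (n + 1) → _)) 0 (Fin.cons α c)
  rw [Fin.cons_zero, smul_eq_mul] at h
  rw [borderedDet, borderedDet, ← h]
  congr 1
  ext i k
  refine Fin.cases ?_ (fun i => ?_) i <;> simp [Fin.sum_univ_succ]

theorem borderedDet_update_eq_sum (v : Fin (n + 1) → R) (w : Fin n → Fin (n + 1) → R) (i : Fin n)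
    (x : Fin (n + 1) → R) :
    borderedDet v (Function.update w i x) =
      ∑ k, x k * borderedDet v (Function.update w i (Pi.single k 1)) := by
  have h_row : ∀ x, borderedDet v (Function.update w i x) =
      ((Matrix.of (Fin.cons v w : Fin (n + 1) → _)).updateRow i.succ x).det := fun x => by
    rw [borderedDet, Fin.cons_update]
    rfl
  simp only [h_row]
  rw [Matrix.det_eq_sum_mul_adjugate_row _ i.succ]
  refine Finset.sum_congr rfl fun k _ => ?_
  rw [Matrix.adjugate_apply, Matrix.updateRow_self, Matrix.updateRow_idem]

theorem borderedDet_single_update_single_comm (w : Fin n → Fin (n + 1) → R) (i : Fin n)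
    (j k : Fin (n + 1)) :
    borderedDet (Pi.single j 1) (Function.update w i (Pi.single k 1)) =
      -borderedDet (Pi.single k 1) (Function.update w i (Pi.single j 1)) := by
  have h := Matrix.detRowAlternating.map_swap
    (Fin.cons (Pi.single k 1) (Function.update w i (Pi.single j 1)) : Fin (n + 1) → _ → R)
    (Fin.succ_ne_zero i).symm
  rw [borderedDet, borderedDet]
  refine Eq.trans (congrArg Matrix.det ?_) h
  ext l m
  refine Fin.cases (by simp [-Fin.cons_update]) (fun l => ?_) l
  obtain rfl | hl := eq_or_ne l i
  · simp [-Fin.cons_update]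
  · simp [hl, Equiv.swap_apply_of_ne_of_ne (Fin.succ_ne_zero l) ((Fin.succ_injective _).ne hl)]

/-- The algebra behind the Piola identity: Hessians are symmetric, determinants antisymmetric. -/
theorem sum_borderedDet_single_update_eq_zero [IsDomain R] [CharZero R]
    (w : Fin n → Fin (n + 1) → R) (i : Fin n) {h : Fin (n + 1) → Fin (n + 1) → R}
    (h_symm : ∀ j k, h j k = h k j) :
    ∑ j, borderedDet (Pi.single j 1) (Function.update w i (h j)) = 0 := by
  rw [← self_eq_neg]
  simp only [fun j => borderedDet_update_eq_sum (Pi.single j 1) w i (h j)]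
  conv_lhs => rw [Finset.sum_comm]
  simp only [← Finset.sum_neg_distrib]
  refine Finset.sum_congr rfl fun j _ => Finset.sum_congr rfl fun k _ => ?_
  rw [h_symm k j, borderedDet_single_update_single_comm w i k j, mul_neg]

theorem continuous_borderedDet [TopologicalSpace R] [IsTopologicalRing R] :
    Continuous fun q : (Fin (n + 1) → R) × (Fin n → Fin (n + 1) → R) => borderedDet q.1 q.2 := by
  refine Continuous.matrix_det (continuous_pi fun i => ?_)
  refine Fin.cases ?_ (fun i => ?_) i
  · exact continuous_fst
  · exact (continuous_apply i).comp continuous_snd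

end BorderedDet

/-! ### Stokes' theorem for `df ∧ dZ₁ ∧ … ∧ dZ_N` -/

/-- `borderedDet v` as a continuous multilinear map of its remaining rows, for differentiation. -/
noncomputable def borderedDetMultilinear {N : ℕ} (v : Fin (N + 1) → ℂ) :
    ContinuousMultilinearMap ℂ (fun _ : Fin N => Fin (N + 1) → ℂ) ℂ where
  toMultilinearMap := Matrix.detRowAlternating.toMultilinearMap.curryLeft v
  cont := continuous_borderedDet.comp (Continuous.prodMk_right v)

/-- The partial derivatives of `f`, as a row vector. -/
noncomputable def partials {n : ℕ} (f : (Fin n → ℝ) → ℂ) (p : Fin n → ℝ) (k : Fin n) : ℂ :=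
  fderiv ℝ f p (Pi.single k 1)

/-- The Jacobian matrix of `Z`; row `i` is the gradient of the component `Z i`. -/
noncomputable def jacobianRows {m n : ℕ} (Z : (Fin n → ℝ) → Fin m → ℂ) (p : Fin n → ℝ)
    (i : Fin m) (k : Fin n) : ℂ :=
  fderiv ℝ Z p (Pi.single k 1) i

section Stokes

variable {m n N : ℕ}

theorem hasFDerivAt_borderedDet (v : Fin (N + 1) → ℂ) (w : Fin N → Fin (N + 1) → ℂ) :
    HasFDerivAt (borderedDet v)
      (((borderedDetMultilinear v).restrictScalars ℝ).linearDeriv w) w :=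
  ((borderedDetMultilinear v).restrictScalars ℝ).hasFDerivAt w

theorem linearDeriv_borderedDetMultilinear (v : Fin (N + 1) → ℂ) (w x : Fin N → Fin (N + 1) → ℂ) :
    ((borderedDetMultilinear v).restrictScalars ℝ).linearDeriv w x =
      ∑ i, borderedDet v (Function.update w i (x i)) := by
  rw [ContinuousMultilinearMap.linearDeriv_apply]
  rfl

theorem continuous_partials {f : (Fin n → ℝ) → ℂ} (hf : ContDiff ℝ 1 f) :
    Continuous (partials f) :=
  continuous_pi fun _ => (hf.continuous_fderiv one_ne_zero).clm_apply continuous_const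

theorem contDiff_jacobianRows {Z : (Fin n → ℝ) → Fin m → ℂ} (hZ : ContDiff ℝ 2 Z) :
    ContDiff ℝ 1 (jacobianRows Z) :=
  contDiff_pi.2 fun i => contDiff_pi.2 fun _ =>
    contDiff_pi.1 ((hZ.fderiv_right (m := 1) le_rfl).clm_apply contDiff_const) i

theorem fderiv_jacobianRows_apply {Z : (Fin n → ℝ) → Fin m → ℂ} (hZ : ContDiff ℝ 2 Z)
    (p x : Fin n → ℝ) (i : Fin m) (k : Fin n) :
    fderiv ℝ (jacobianRows Z) p x i k = fderiv ℝ (fderiv ℝ Z) p x (Pi.single k 1) i := by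
  have h : HasFDerivAt (fderiv ℝ Z) (fderiv ℝ (fderiv ℝ Z) p) p :=
    ((hZ.fderiv_right (m := 1) le_rfl).differentiable one_ne_zero p).hasFDerivAt
  have h_jac : HasFDerivAt (jacobianRows Z) _ p := hasFDerivAt_pi.2 fun i => hasFDerivAt_pi.2
    fun k => hasFDerivAt_pi'.1
      (h.clm_apply (hasFDerivAt_const (Pi.single k (1 : ℝ) : Fin n → ℝ) p)) i
  rw [h_jac.fderiv]
  simp

theorem continuous_jacobianRows {Z : (Fin n → ℝ) → Fin m → ℂ} (hZ : ContDiff ℝ 1 Z) :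
    Continuous (jacobianRows Z) :=
  continuous_pi fun i => continuous_pi fun _ => (continuous_apply i).comp
    ((hZ.continuous_fderiv one_ne_zero).clm_apply continuous_const)

theorem sum_fderiv_borderedDet_jacobianRows_eq_zero {Z : (Fin (N + 1) → ℝ) → Fin N → ℂ}
    (hZ : ContDiff ℝ 2 Z) (p : Fin (N + 1) → ℝ) :
    ∑ j, fderiv ℝ (fun q => borderedDet (Pi.single j 1) (jacobianRows Z q)) p (Pi.single j 1) =
      0 := by
  have h_jac := ((contDiff_jacobianRows hZ).differentiable one_ne_zero p).hasFDerivAt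
  have h_fderiv : ∀ j,
      fderiv ℝ (fun q => borderedDet (Pi.single j 1) (jacobianRows Z q)) p (Pi.single j 1) =
        ∑ i, borderedDet (Pi.single j 1) (Function.update (jacobianRows Z p) i
          (fderiv ℝ (jacobianRows Z) p (Pi.single j 1) i)) := fun j => by
    have h_comp := (hasFDerivAt_borderedDet (Pi.single j 1) (jacobianRows Z p)).comp p h_jac
    rw [Function.comp_def] at h_comp
    rw [h_comp.fderiv, ContinuousLinearMap.comp_apply, linearDeriv_borderedDetMultilinear]
  simp only [h_fderiv]
  rw [Finset.sum_comm]
  refine Finset.sum_eq_zero fun i _ =>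
    sum_borderedDet_single_update_eq_zero (jacobianRows Z p) i fun j k => ?_
  rw [fderiv_jacobianRows_apply hZ, fderiv_jacobianRows_apply hZ]
  exact congrFun ((hZ.contDiffAt.isSymmSndFDerivAt (by simp)) _ _) i

theorem sum_fderiv_mul_borderedDet {f : (Fin (N + 1) → ℝ) → ℂ} (hf : ContDiff ℝ 1 f)
    {Z : (Fin (N + 1) → ℝ) → Fin N → ℂ} (hZ : ContDiff ℝ 2 Z) (p : Fin (N + 1) → ℝ) :
    ∑ j, fderiv ℝ (fun q => f q * borderedDet (Pi.single j 1) (jacobianRows Z q)) p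
      (Pi.single j 1) = borderedDet (partials f p) (jacobianRows Z p) := by
  have h_jac := (contDiff_jacobianRows hZ).differentiable one_ne_zero p
  have h_fderiv : ∀ j,
      fderiv ℝ (fun q => f q * borderedDet (Pi.single j 1) (jacobianRows Z q)) p (Pi.single j 1) =
        f p * fderiv ℝ (fun q => borderedDet (Pi.single j 1) (jacobianRows Z q)) p
          (Pi.single j 1) + partials f p j * borderedDet (Pi.single j 1) (jacobianRows Z p) :=
    fun j => by
      have h_det : DifferentiableAt ℝ
          (fun q => borderedDet (Pi.single j 1) (jacobianRows Z q)) p :=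
        (hasFDerivAt_borderedDet _ _).differentiableAt.comp p h_jac
      rw [fderiv_fun_mul (hf.differentiable one_ne_zero p) h_det]
      simp [partials, mul_comm]
  simp only [h_fderiv, Finset.sum_add_distrib, ← Finset.mul_sum,
    sum_fderiv_borderedDet_jacobianRows_eq_zero hZ, mul_zero, zero_add]
  exact (borderedDet_eq_sum _ _).symm

theorem continuous_borderedDet_jacobianRows {X : Type*} [TopologicalSpace X]
    {v : X → Fin (N + 1) → ℂ} (hv : Continuous v) {Z : (Fin (N + 1) → ℝ) → Fin N → ℂ}
    (hZ : ContDiff ℝ 1 Z) {γ : X → Fin (N + 1) → ℝ} (hγ : Continuous γ) :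
    Continuous fun x => borderedDet (v x) (jacobianRows Z (γ x)) :=
  continuous_borderedDet.comp (hv.prodMk ((continuous_jacobianRows hZ).comp hγ))

theorem setIntegral_borderedDet_eq_sub_of_contDiff_two {f : (Fin (N + 1) → ℝ) → ℂ}
    (hf : ContDiff ℝ 1 f) {Z : (Fin (N + 1) → ℝ) → Fin N → ℂ} (hZ : ContDiff ℝ 2 Z) {s t : ℝ}
    (hst : s ≤ t) {a b : Fin N → ℝ} (hab : a ≤ b)
    (hf_lateral : ∀ p, ∀ i : Fin N, p i.succ ∉ Ioo (a i) (b i) → f p = 0) :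
    ∫ p in Icc (Fin.cons s a : Fin (N + 1) → ℝ) (Fin.cons t b),
        borderedDet (partials f p) (jacobianRows Z p) =
      (∫ y in Icc a b, f (Fin.cons t y) *
        borderedDet (Pi.single 0 1) (jacobianRows Z (Fin.cons t y))) -
      ∫ y in Icc a b, f (Fin.cons s y) *
        borderedDet (Pi.single 0 1) (jacobianRows Z (Fin.cons s y)) := by
  have hZ_one : ContDiff ℝ 1 Z := hZ.of_le one_le_two
  set F : Fin (N + 1) → (Fin (N + 1) → ℝ) → ℂ := fun j p =>
    f p * borderedDet (Pi.single j 1) (jacobianRows Z p) with hF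
  have hF_diff : ∀ j, Differentiable ℝ (F j) := fun j p =>
    (hf.differentiable one_ne_zero p).mul ((hasFDerivAt_borderedDet _ _).differentiableAt.comp p
      ((contDiff_jacobianRows hZ).differentiable one_ne_zero p))
  have h_div : ∀ p, ∑ j, fderiv ℝ (F j) p (Pi.single j 1) =
      borderedDet (partials f p) (jacobianRows Z p) := sum_fderiv_mul_borderedDet hf hZ
  have h_lateral : ∀ (i : Fin N) (c : ℝ), c ∉ Ioo (a i) (b i) → ∀ y,
      F i.succ (Fin.insertNth i.succ c y) = 0 := fun i c hc y => by
    simp only [hF]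
    rw [hf_lateral _ i (by simpa using hc), zero_mul]
  have h_cont : Continuous fun p => borderedDet (partials f p) (jacobianRows Z p) :=
    continuous_borderedDet_jacobianRows (continuous_partials hf) hZ_one continuous_id
  have h_divergence := integral_divergence_of_hasFDerivAt_off_countable'
    (Fin.cons s a : Fin (N + 1) → ℝ) (Fin.cons t b) (Fin.cons_le_cons.2 ⟨hst, hab⟩) F
    (fun j => fderiv ℝ (F j)) ∅ countable_empty (fun j => (hF_diff j).continuous.continuousOn)
    (fun p _ j => (hF_diff j p).hasFDerivAt)
    (by simpa only [h_div] using h_cont.continuousOn.integrableOn_compact isCompact_Icc)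
  simp only [h_div] at h_divergence
  rw [h_divergence, Fin.sum_univ_succ, Finset.sum_eq_zero, add_zero]
  · simp [hF, Function.comp_def]
  · intro i _
    simp [h_lateral]

theorem exists_contDiff_tendsto_fderiv {E F : Type*} [NormedAddCommGroup E] [NormedSpace ℝ E]
    [FiniteDimensional ℝ E] [NormedAddCommGroup F] [NormedSpace ℝ F] [CompleteSpace F]
    {Z : E → F} (hZ : ContDiff ℝ 1 Z) (hZ_supp : HasCompactSupport Z) :
    ∃ (W : ℕ → E → F) (C : ℝ), (∀ n, ContDiff ℝ ∞ (W n)) ∧ (∀ n p, ‖fderiv ℝ (W n) p‖ ≤ C) ∧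
      ∀ p, Tendsto (fun n => fderiv ℝ (W n) p) atTop (𝓝 (fderiv ℝ Z p)) := by
  borelize E
  let μ : Measure E := Measure.addHaar
  let ρ : ℕ → ContDiffBump (0 : E) := fun n =>
    { rIn := 1 / (n + 1 : ℝ) / 2
      rOut := 1 / (n + 1 : ℝ)
      rIn_pos := by positivity
      rIn_lt_rOut := half_lt_self (by positivity) }
  let W : ℕ → E → F := fun n =>
    convolution ((ρ n).normed μ) Z (ContinuousLinearMap.lsmul ℝ ℝ) μ
  have h_dZ : Continuous (fderiv ℝ Z) := hZ.continuous_fderiv one_ne_zero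
  obtain ⟨B, hB⟩ := (hZ_supp.fderiv ℝ).exists_bound_of_continuous h_dZ
  have h_fderiv : ∀ n p, fderiv ℝ (W n) p =
      convolution ((ρ n).normed μ) (fderiv ℝ Z) (ContinuousLinearMap.lsmul ℝ ℝ) μ p := fun n p =>
    (hZ_supp.hasFDerivAt_convolution_right (ContinuousLinearMap.lsmul ℝ ℝ)
      (ρ n).continuous_normed.locallyIntegrable hZ p).fderiv
  refine ⟨W, B + (B + B), fun n => ?_, fun n p => ?_, fun p => ?_⟩
  · exact (ρ n).hasCompactSupport_normed.contDiff_convolution_left _ (ρ n).contDiff_normed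
      hZ.continuous.locallyIntegrable
  · have h_dist := (ρ n).dist_normed_convolution_le (μ := μ) (x₀ := p) (ε := B + B)
      h_dZ.aestronglyMeasurable fun x _ => by
        rw [dist_eq_norm]
        exact norm_sub_le_of_le (hB x) (hB p)
    rw [dist_eq_norm, ← h_fderiv] at h_dist
    exact (norm_le_norm_add_norm_sub' _ _).trans (add_le_add (hB p) h_dist)
  · simp only [h_fderiv]
    exact ContDiffBump.convolution_tendsto_right_of_continuous
      tendsto_one_div_add_atTop_nhds_zero_nat h_dZ p

theorem tendsto_setIntegral_comp {X V E : Type*} [TopologicalSpace X] [T2Space X]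
    [MeasurableSpace X] [OpensMeasurableSpace X] [SecondCountableTopology X] {μ : Measure X}
    [IsFiniteMeasureOnCompacts μ] [NormedAddCommGroup V] [ProperSpace V] [NormedAddCommGroup E]
    [NormedSpace ℝ E] {K : Set X} (hK : IsCompact K) {Φ : V → E} (hΦ : Continuous Φ)
    {G : ℕ → X → V} {G₀ : X → V} (hG : ∀ n, Continuous (G n)) {C : ℝ}
    (hC : ∀ n, ∀ x ∈ K, ‖G n x‖ ≤ C) (h_lim : ∀ x, Tendsto (fun n => G n x) atTop (𝓝 (G₀ x))) :
    Tendsto (fun n => ∫ x in K, Φ (G n x) ∂μ) atTop (𝓝 (∫ x in K, Φ (G₀ x) ∂μ)) := by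
  obtain ⟨B, hB⟩ :=
    (isCompact_closedBall (0 : V) C).exists_bound_of_continuousOn hΦ.continuousOn
  refine tendsto_integral_of_dominated_convergence (fun _ => B)
    (fun n => (hΦ.comp (hG n)).aestronglyMeasurable) ?_ (fun n => ?_) ?_
  · exact integrableOn_const hK.measure_lt_top.ne
  · exact (ae_restrict_iff' hK.measurableSet).2
      (ae_of_all _ fun x hx => hB _ (mem_closedBall_zero_iff.2 (hC n x hx)))
  · exact ae_of_all _ fun x => (hΦ.tendsto _).comp (h_lim x)

theorem continuous_cons_right (s : ℝ) :
    Continuous fun y : Fin N → ℝ => (Fin.cons s y : Fin (N + 1) → ℝ) :=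
  continuous_const.finCons continuous_id

theorem norm_jacobianRows_le (Z : (Fin n → ℝ) → Fin m → ℂ) (p : Fin n → ℝ) :
    ‖jacobianRows Z p‖ ≤ ‖fderiv ℝ Z p‖ := by
  refine (pi_norm_le_iff_of_nonneg (norm_nonneg _)).2 fun i =>
    (pi_norm_le_iff_of_nonneg (norm_nonneg _)).2 fun k => ?_
  refine (norm_le_pi_norm (fderiv ℝ Z p (Pi.single k 1)) i).trans ?_
  simpa [Pi.norm_single] using (fderiv ℝ Z p).le_opNorm (Pi.single k 1)

theorem tendsto_setIntegral_mul_borderedDet {k : ℕ} {K : Set (Fin k → ℝ)} (hK : IsCompact K)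
    {g : (Fin k → ℝ) → ℂ} (hg : Continuous g) {v : (Fin k → ℝ) → Fin (N + 1) → ℂ}
    (hv : Continuous v) {γ : (Fin k → ℝ) → Fin (N + 1) → ℝ} (hγ : Continuous γ)
    {W : ℕ → (Fin (N + 1) → ℝ) → Fin N → ℂ} (hW : ∀ n, ContDiff ℝ 1 (W n)) {C : ℝ}
    (hC : ∀ n p, ‖fderiv ℝ (W n) p‖ ≤ C) {Z : (Fin (N + 1) → ℝ) → Fin N → ℂ}
    (h_lim : ∀ p, Tendsto (fun n => fderiv ℝ (W n) p) atTop (𝓝 (fderiv ℝ Z p))) :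
    Tendsto (fun n => ∫ x in K, g x * borderedDet (v x) (jacobianRows (W n) (γ x))) atTop
      (𝓝 (∫ x in K, g x * borderedDet (v x) (jacobianRows Z (γ x)))) := by
  obtain ⟨B, hB⟩ := hK.exists_bound_of_continuousOn (hg.prodMk hv).continuousOn
  have h_jac : ∀ p, Tendsto (fun n => jacobianRows (W n) p) atTop (𝓝 (jacobianRows Z p)) :=
    fun p => tendsto_pi_nhds.2 fun i => tendsto_pi_nhds.2 fun k =>
      (((ContinuousLinearMap.apply ℝ (Fin N → ℂ) (Pi.single k 1)).continuous.tendsto _).comp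
        (h_lim p)).apply_nhds i
  refine tendsto_setIntegral_comp hK (C := max B C)
    (Φ := fun q : (ℂ × (Fin (N + 1) → ℂ)) × (Fin N → Fin (N + 1) → ℂ) =>
      q.1.1 * borderedDet q.1.2 q.2)
    (G := fun n x => ((g x, v x), jacobianRows (W n) (γ x)))
    (G₀ := fun x => ((g x, v x), jacobianRows Z (γ x))) ?_ (fun n => ?_) (fun n x hx => ?_)
    fun x => tendsto_const_nhds.prodMk_nhds (h_jac _)
  · exact (continuous_fst.comp continuous_fst).mul
      (continuous_borderedDet.comp ((continuous_snd.comp continuous_fst).prodMk continuous_snd))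
  · exact (hg.prodMk hv).prodMk ((continuous_jacobianRows (hW n)).comp hγ)
  · exact max_le_max (hB x hx) ((norm_jacobianRows_le _ _).trans (hC n _))

theorem setIntegral_borderedDet_eq_sub {f : (Fin (N + 1) → ℝ) → ℂ} (hf : ContDiff ℝ 1 f)
    {Z : (Fin (N + 1) → ℝ) → Fin N → ℂ} (hZ : ContDiff ℝ 1 Z) (hZ_supp : HasCompactSupport Z)
    {s t : ℝ} (hst : s ≤ t) {a b : Fin N → ℝ} (hab : a ≤ b)
    (hf_lateral : ∀ p, ∀ i : Fin N, p i.succ ∉ Ioo (a i) (b i) → f p = 0) :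
    ∫ p in Icc (Fin.cons s a : Fin (N + 1) → ℝ) (Fin.cons t b),
        borderedDet (partials f p) (jacobianRows Z p) =
      (∫ y in Icc a b, f (Fin.cons t y) *
        borderedDet (Pi.single 0 1) (jacobianRows Z (Fin.cons t y))) -
      ∫ y in Icc a b, f (Fin.cons s y) *
        borderedDet (Pi.single 0 1) (jacobianRows Z (Fin.cons s y)) := by
  obtain ⟨W, C, hW, hC, h_lim⟩ := exists_contDiff_tendsto_fderiv hZ hZ_supp
  have hW_one : ∀ n, ContDiff ℝ 1 (W n) := fun n => contDiff_infty.1 (hW n) 1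
  have h_face := fun c : ℝ => tendsto_setIntegral_mul_borderedDet (isCompact_Icc (a := a) (b := b))
    (hf.continuous.comp (continuous_cons_right c))
    (continuous_const (y := Pi.single 0 1)) (continuous_cons_right c) hW_one hC h_lim
  have h_interior := tendsto_setIntegral_mul_borderedDet
    (isCompact_Icc (a := (Fin.cons s a : Fin (N + 1) → ℝ)) (b := Fin.cons t b))
    continuous_const (continuous_partials hf) continuous_id hW_one hC h_lim (g := fun _ => 1)
  simp only [one_mul] at h_interior
  refine tendsto_nhds_unique h_interior (((h_face t).sub (h_face s)).congr fun n => ?_)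
  exact (setIntegral_borderedDet_eq_sub_of_contDiff_two hf (contDiff_infty.1 (hW n) 2) hst
    hab hf_lateral).symm

end Stokes

/-! ### The F.B.I. phase -/

/-- The F.B.I. phase `i (x - z)·ξ - ‖ξ‖ (x - z)·(x - z)`, continued to complex `z`. -/
noncomputable def fbiPhase {N : ℕ} (x ξ : Fin N → ℝ) (z : Fin N → ℂ) : ℂ :=
  Complex.I * ∑ i, (x i - z i) * ξ i - eNormR N ξ * ∑ i, (x i - z i) ^ 2

section Phase

variable {N : ℕ}

theorem FBIT_eq_integral_cexp_fbiPhase (g : (Fin N → ℝ) → ℂ) (x ξ : Fin N → ℝ) :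
    FBIT N g x ξ = ∫ y, Complex.exp (fbiPhase x ξ fun i => (y i : ℂ)) * g y := by
  simp [FBIT, fbiPhase, sq_eNormR]

theorem fbiPhase_re (x ξ : Fin N → ℝ) (z : Fin N → ℂ) :
    (fbiPhase x ξ z).re = (Complex.im ∘ z) ⬝ᵥ ξ +
      eNormR N ξ * (eNormR N (Complex.im ∘ z) ^ 2 - eNormR N (x - Complex.re ∘ z) ^ 2) := by
  have h_sq : ∀ i, (((x i : ℂ) - z i) ^ 2).re = (x i - (z i).re) ^ 2 - (z i).im ^ 2 := fun i => by
    simp [pow_two]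
  simp [fbiPhase, sq_eNormR, h_sq, dotProduct]
  ring

theorem contDiff_cexp_fbiPhase (x ξ : Fin N → ℝ) :
    ContDiff ℂ 1 fun z => Complex.exp (fbiPhase x ξ z) := by
  unfold fbiPhase
  fun_prop

theorem borderedDet_partials_comp_mul {Φ : (Fin N → ℂ) → ℂ} {Z : (Fin (N + 1) → ℝ) → Fin N → ℂ}
    {g : (Fin (N + 1) → ℝ) → ℂ} {p : Fin (N + 1) → ℝ} (hΦ : DifferentiableAt ℂ Φ (Z p))
    (hZ : DifferentiableAt ℝ Z p) (hg : DifferentiableAt ℝ g p) :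
    borderedDet (partials (fun q => Φ (Z q) * g q) p) (jacobianRows Z p) =
      Φ (Z p) * borderedDet (partials g p) (jacobianRows Z p) := by
  rw [← borderedDet_smul_add_sum (Φ (Z p)) (partials g p)
    fun l => g p * fderiv ℂ Φ (Z p) (Pi.single l 1)]
  congr 1
  ext k
  have h_fderiv := (((hΦ.hasFDerivAt.restrictScalars ℝ).comp p hZ.hasFDerivAt).mul
    hg.hasFDerivAt).fderiv
  have h_chain : fderiv ℂ Φ (Z p) (fderiv ℝ Z p (Pi.single k 1)) =
      ∑ l, jacobianRows Z p l k * fderiv ℂ Φ (Z p) (Pi.single l 1) := by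
    conv_lhs => rw [pi_eq_sum_univ' (fderiv ℝ Z p (Pi.single k 1)), map_sum]
    simp [jacobianRows]
  calc partials (fun q => Φ (Z q) * g q) p k
      = Φ (Z p) * partials g p k + g p * fderiv ℂ Φ (Z p) (fderiv ℝ Z p (Pi.single k 1)) :=
        congrArg (fun L => L (Pi.single k (1 : ℝ))) h_fderiv
    _ = (Φ (Z p) • partials g p +
          ∑ l, (g p * fderiv ℂ Φ (Z p) (Pi.single l 1)) • jacobianRows Z p l) k := by
        simp only [h_chain, Finset.mul_sum, Pi.add_apply, Pi.smul_apply, Finset.sum_apply,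
          smul_eq_mul, mul_assoc, mul_comm (jacobianRows Z p _ k)]

end Phase

/-! ### Approximate solutions of `∂H/∂t + ∑ aⱼ ∂H/∂yⱼ = 0` -/

/-- The half-cylinder `-T ≤ t ≤ 0`, `‖y‖ ≤ ρ`, where a point of `ℝ^(N+1)` is written
`Fin.cons t y`; the Stokes argument takes place on it. -/
def halfCylinder {N : ℕ} (T ρ : ℝ) : Set (Fin (N + 1) → ℝ) :=
  {p | p 0 ∈ Icc (-T) 0 ∧ ‖(Fin.tail p : Fin N → ℝ)‖ ≤ ρ}

/-- The derivative of `H` along `∂/∂t + ∑ bⱼ ∂/∂yⱼ`. -/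
noncomputable def fieldDeriv {N : ℕ} {F : Type*} [NormedAddCommGroup F] [NormedSpace ℝ F]
    [NormedSpace ℂ F] (b : Fin N → ℂ) (H : (Fin (N + 1) → ℝ) → F) (p : Fin (N + 1) → ℝ) : F :=
  fderiv ℝ H p (Pi.single 0 1) + ∑ j, b j • fderiv ℝ H p (Pi.single j.succ 1)

/-- `H` is annihilated by `∂/∂t + ∑ aⱼ(y) ∂/∂yⱼ` up to an error that is flat of Denjoy–Carleman
order `M` at `t = 0`, on the part `t < 0` of a half-cylinder. -/
def DCFlat {N : ℕ} {F : Type*} [NormedAddCommGroup F] [NormedSpace ℝ F] [NormedSpace ℂ F]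
    (M : ℕ → ℝ) (a : (Fin N → ℝ) → Fin N → ℂ) (Q R : ℝ) (H : (Fin (N + 1) → ℝ) → F) : Prop :=
  ∀ p ∈ halfCylinder R R, p 0 < 0 → ∀ k : ℕ,
    ‖fieldDeriv (a (Fin.tail p)) H p‖ ≤ Q ^ (k + 1) * DCm M k * |p 0| ^ k

section ApproximateSolutions

variable {N : ℕ} {F : Type*} [NormedAddCommGroup F] [NormedSpace ℝ F] [NormedSpace ℂ F]

theorem Icc_neg_eq_setOf_norm_le {ρ : ℝ} (hρ : 0 ≤ ρ) :
    Icc (fun _ : Fin N => -ρ) (fun _ => ρ) = {y | ‖y‖ ≤ ρ} := by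
  ext y
  simp only [mem_Icc, Pi.le_def, mem_ofPred_eq, pi_norm_le_iff_of_nonneg hρ, Real.norm_eq_abs,
    abs_le, forall_and]

theorem halfCylinder_eq_Icc {T ρ : ℝ} (hρ : 0 ≤ ρ) :
    halfCylinder T ρ =
      Icc (Fin.cons (-T) fun _ => -ρ : Fin (N + 1) → ℝ) (Fin.cons 0 fun _ => ρ) := by
  ext p
  have h_tail := Set.ext_iff.1 (Icc_neg_eq_setOf_norm_le (N := N) hρ) (Fin.tail p)
  simp only [mem_Icc, Pi.le_def, mem_ofPred_eq, Fin.tail] at h_tail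
  simp only [halfCylinder, mem_ofPred_eq, mem_Icc, Pi.le_def, Fin.forall_fin_succ, Fin.cons_zero,
    Fin.cons_succ, ← h_tail]
  tauto

theorem isCompact_halfCylinder {T ρ : ℝ} (hρ : 0 ≤ ρ) :
    IsCompact (halfCylinder T ρ : Set (Fin (N + 1) → ℝ)) :=
  halfCylinder_eq_Icc (N := N) (T := T) hρ ▸ isCompact_Icc

theorem halfCylinder_subset_ball {R ρ : ℝ} (h : R < ρ) :
    (halfCylinder R R : Set (Fin (N + 1) → ℝ)) ⊆ Metric.ball 0 ρ := by
  intro p hp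
  have hR : 0 ≤ R := (norm_nonneg _).trans hp.2
  refine mem_ball_zero_iff.2 (lt_of_le_of_lt ?_ h)
  refine (pi_norm_le_iff_of_nonneg hR).2 (Fin.cases ?_ fun i => (norm_le_pi_norm _ i).trans hp.2)
  simpa [abs_of_nonpos hp.1.2] using neg_le.1 hp.1.1

theorem continuous_fieldDeriv (b : Fin N → ℂ) {H : (Fin (N + 1) → ℝ) → F} (hH : ContDiff ℝ 1 H) :
    Continuous (fieldDeriv b H) := by
  have := hH.continuous_fderiv one_ne_zero
  unfold fieldDeriv
  fun_prop

theorem DCFlat.norm_fieldDeriv_le {M : ℕ → ℝ} {a : (Fin N → ℝ) → Fin N → ℂ} {Q R : ℝ}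
    (hR : 0 < R) {H : (Fin (N + 1) → ℝ) → F} (hH : ContDiff ℝ 1 H) (h : DCFlat M a Q R H)
    {p : Fin (N + 1) → ℝ} (hp : p ∈ halfCylinder R R) (k : ℕ) :
    ‖fieldDeriv (a (Fin.tail p)) H p‖ ≤ Q ^ (k + 1) * DCm M k * |p 0| ^ k := by
  obtain h_neg | h_zero := hp.1.2.lt_or_eq
  · exact h p hp h_neg k
  set γ : ℝ → Fin (N + 1) → ℝ := fun t => Fin.cons t (Fin.tail p) with hγ
  have hγ_cont : Continuous γ := Continuous.finCons continuous_id continuous_const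
  have hγ_zero : γ 0 = p := by rw [hγ, ← h_zero]; exact Fin.cons_self_tail p
  have h_le : ∀ᶠ t in 𝓝[<] 0,
      ‖fieldDeriv (a (Fin.tail p)) H (γ t)‖ ≤ Q ^ (k + 1) * DCm M k * |t| ^ k := by
    filter_upwards [Ico_mem_nhdsLT (neg_lt_zero.2 hR)] with t ht
    exact h (γ t) ⟨Ico_subset_Icc_self ht, hp.2⟩ ht.2 k
  have h_left : Continuous fun t => ‖fieldDeriv (a (Fin.tail p)) H (γ t)‖ :=
    ((continuous_fieldDeriv _ hH).comp hγ_cont).norm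
  have h_right : Continuous fun t : ℝ => Q ^ (k + 1) * DCm M k * |t| ^ k := by fun_prop
  have h_limit : ‖fieldDeriv (a (Fin.tail p)) H (γ 0)‖ ≤ Q ^ (k + 1) * DCm M k * |(0 : ℝ)| ^ k :=
    le_of_tendsto_of_tendsto h_left.continuousWithinAt h_right.continuousWithinAt h_le
  rwa [hγ_zero, ← h_zero] at h_limit

theorem fderiv_cons_zero_single_succ {Z : (Fin (N + 1) → ℝ) → Fin N → ℂ} {y : Fin N → ℝ}
    (hZ : DifferentiableAt ℝ Z (Fin.cons 0 y))
    (h_zero : ∀ᶠ y' in 𝓝 y, Z (Fin.cons 0 y') = fun l => (y' l : ℂ)) (j : Fin N) :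
    fderiv ℝ Z (Fin.cons 0 y) (Pi.single j.succ 1) = Pi.single j 1 := by
  have h_cons : HasFDerivAt (fun y' : Fin N → ℝ => (Fin.cons 0 y' : Fin (N + 1) → ℝ)) _ y :=
    (ContinuousLinearMap.finCons (M := fun _ => ℝ) 0 (.id ℝ (Fin N → ℝ))).hasFDerivAt
  have h_ofReal : HasFDerivAt (fun (y' : Fin N → ℝ) l => (y' l : ℂ)) _ y :=
    hasFDerivAt_pi.2 fun l => Complex.ofRealCLM.hasFDerivAt.comp y (hasFDerivAt_apply l y)
  have h_unique := (hZ.hasFDerivAt.comp y h_cons).unique (h_ofReal.congr_of_eventuallyEq h_zero)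
  have h_single : (Fin.cons 0 (Pi.single j 1) : Fin (N + 1) → ℝ) = Pi.single j.succ 1 := by
    ext k
    refine Fin.cases ?_ (fun k => ?_) k <;> simp [Pi.single_apply, (Fin.succ_ne_zero j).symm]
  rw [← h_single]
  refine (congrArg (fun L => L (Pi.single j (1 : ℝ))) h_unique).trans ?_
  ext l
  simp [Pi.single_apply, apply_ite]

theorem borderedDet_single_zero_jacobianRows_cons_zero {Z : (Fin (N + 1) → ℝ) → Fin N → ℂ}
    {y : Fin N → ℝ} (hZ : DifferentiableAt ℝ Z (Fin.cons 0 y))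
    (h_zero : ∀ᶠ y' in 𝓝 y, Z (Fin.cons 0 y') = fun l => (y' l : ℂ)) :
    borderedDet (Pi.single 0 1) (jacobianRows Z (Fin.cons 0 y)) = 1 := by
  rw [borderedDet_single_zero, ← Matrix.det_one (n := Fin N)]
  congr 1
  ext i k
  simp [jacobianRows, fderiv_cons_zero_single_succ hZ h_zero, Matrix.one_apply, Pi.single_apply]

theorem DCFlat.fderiv_zero_single_zero {M : ℕ → ℝ} {a : (Fin N → ℝ) → Fin N → ℂ} {Q R : ℝ}
    (hR : 0 < R) {Z : (Fin (N + 1) → ℝ) → Fin N → ℂ} (hZ : ContDiff ℝ 1 Z) (h : DCFlat M a Q R Z)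
    (h_zero : ∀ᶠ y in 𝓝 0, Z (Fin.cons 0 y) = fun l => (y l : ℂ)) :
    fderiv ℝ Z 0 (Pi.single 0 1) = -a 0 := by
  have h_cons : (Fin.cons 0 0 : Fin (N + 1) → ℝ) = 0 := Fin.cons_self_tail 0
  have h_single := fderiv_cons_zero_single_succ (hZ.differentiable one_ne_zero _) h_zero
  have h_tail : Fin.tail (0 : Fin (N + 1) → ℝ) = 0 := rfl
  have h_mem : (0 : Fin (N + 1) → ℝ) ∈ halfCylinder R R := by simp [halfCylinder, h_tail, hR.le]
  have h_field : fieldDeriv (a 0) Z 0 = 0 := norm_le_zero_iff.1 <| by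
    simpa [h_tail] using h.norm_fieldDeriv_le hR hZ h_mem 1
  rw [h_cons] at h_single
  simp only [fieldDeriv, h_single, ← pi_eq_sum_univ' (a 0)] at h_field
  exact eq_neg_of_add_eq_zero_left h_field

theorem norm_borderedDet_le_of_fieldDeriv {f : (Fin (N + 1) → ℝ) → ℂ}
    {Z : (Fin (N + 1) → ℝ) → Fin N → ℂ} {p : Fin (N + 1) → ℝ} {B d : ℝ} (b : Fin N → ℂ)
    (hf : ‖fderiv ℝ f p‖ ≤ B) (hZ : ‖fderiv ℝ Z p‖ ≤ B) (hf_field : ‖fieldDeriv b f p‖ ≤ d)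
    (hZ_field : ‖fieldDeriv b Z p‖ ≤ d) :
    ‖borderedDet (partials f p) (jacobianRows Z p)‖ ≤ (N + 1)! * (d * B ^ N) := by
  have h := norm_det_le_of_mulVec_le (u := Fin.cons 1 b) (j := 0) (B := B) (d := d)
    (A := Matrix.of (Fin.cons (partials f p) (jacobianRows Z p) : Fin (N + 1) → _))
    rfl (fun i k => ?_) fun i => ?_
  · simpa [borderedDet] using h
  · refine Fin.cases ?_ (fun i => ?_) i
    · refine le_trans ?_ hf
      simpa [partials, Pi.norm_single] using (fderiv ℝ f p).le_opNorm (Pi.single k 1)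
    · exact (norm_le_pi_norm (jacobianRows Z p i) k).trans
        ((norm_le_pi_norm _ i).trans ((norm_jacobianRows_le Z p).trans hZ))
  · refine Fin.cases ?_ (fun i => ?_) i
    · refine le_of_eq_of_le ?_ hf_field
      simp [Matrix.mulVec, dotProduct, Fin.sum_univ_succ, fieldDeriv, partials, mul_comm]
    · refine le_of_eq_of_le ?_ ((norm_le_pi_norm _ i).trans hZ_field)
      simp [Matrix.mulVec, dotProduct, Fin.sum_univ_succ, fieldDeriv, jacobianRows, mul_comm]

end ApproximateSolutions

/-! ### Decay of the phase on the half-cylinder -/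

/-- The open cone of the directions `w` that make an acute angle with `β`, quantified by `c`. -/
def directionCone {N : ℕ} (β : Fin N → ℝ) (c : ℝ) : Set (Fin N → ℝ) :=
  {w | c * eNormR N w < β ⬝ᵥ w}

/-- For `x` near `0` and directions `ξ ∈ Γ`, the exponential of the F.B.I. phase at `Z p` decays
like `exp (c t ‖ξ‖)` at the times `-T ≤ t ≤ 0`, and like `exp (-r² ‖ξ‖ / 4)` away from `0`. -/
structure PhaseDecay {N : ℕ} (Z : (Fin (N + 1) → ℝ) → Fin N → ℂ) (Γ : Set (Fin N → ℝ))
    (r T c : ℝ) : Prop where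
  re_le : ∀ x ∈ Metric.ball 0 (r / 4), ∀ ξ ∈ Γ, ∀ p ∈ halfCylinder T (2 * r),
    (fbiPhase x ξ (Z p)).re ≤ c * p 0 * eNormR N ξ
  re_le_of_le_norm : ∀ x ∈ Metric.ball 0 (r / 4), ∀ ξ ∈ Γ, ∀ p ∈ halfCylinder T (2 * r),
    r ≤ ‖(Fin.tail p : Fin N → ℝ)‖ → (fbiPhase x ξ (Z p)).re ≤ -(r ^ 2 / 4 * eNormR N ξ)

section PhaseDecay

variable {N : ℕ} {β w ξ : Fin N → ℝ} {c : ℝ} {Z : (Fin (N + 1) → ℝ) → Fin N → ℂ}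

theorem isOpen_directionCone : IsOpen (directionCone β c) :=
  isOpen_lt (continuous_const.mul continuous_eNormR)
    (continuous_const.dotProduct continuous_id)

theorem smul_mem_directionCone (hw : w ∈ directionCone β c) {t : ℝ} (ht : 0 < t) :
    t • w ∈ directionCone β c := by
  simp only [directionCone, mem_ofPred_eq, eNormR_smul, abs_of_pos ht, dotProduct_smul, smul_eq_mul]
  calc c * (t * eNormR N w) = t * (c * eNormR N w) := by ring
    _ < t * (β ⬝ᵥ w) := mul_lt_mul_of_pos_left hw ht

theorem ne_zero_of_mem_directionCone (hw : w ∈ directionCone β c) : w ≠ 0 := by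
  rintro rfl
  simp [directionCone, eNormR] at hw

theorem exists_mem_directionCone (h : 0 < β ⬝ᵥ w) : ∃ c > 0, w ∈ directionCone β c := by
  have h_lim : Tendsto (fun c => c * eNormR N w) (𝓝[>] 0) (𝓝 0) :=
    ((continuous_id.mul continuous_const).tendsto' 0 0 (zero_mul _)).mono_left nhdsWithin_le_nhds
  obtain ⟨c, h_lt, hc⟩ := ((h_lim.eventually_lt_const h).and self_mem_nhdsWithin).exists
  exact ⟨c, hc, h_lt⟩

theorem eventually_le_dotProduct_of_mem_directionCone {c' : ℝ} (hc : c' < c) :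
    ∀ᶠ v in 𝓝 β, ∀ ξ ∈ directionCone β c, c' * eNormR N ξ ≤ v ⬝ᵥ ξ := by
  have h_lim : Tendsto (fun v => eNormR N (β - v)) (𝓝 β) (𝓝 0) :=
    (continuous_eNormR.comp (continuous_const.sub continuous_id)).tendsto' β 0 (by simp [eNormR])
  filter_upwards [h_lim.eventually_lt_const (sub_pos.2 hc)] with v hv ξ hξ
  have h_diff : β ⬝ᵥ ξ - v ⬝ᵥ ξ ≤ (c - c') * eNormR N ξ := by
    rw [← sub_dotProduct]
    exact (dotProduct_le_eNormR_mul_eNormR _ _).trans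
      (mul_le_mul_of_nonneg_right hv.le (eNormR_nonneg ξ))
  have h_cone : c * eNormR N ξ < β ⬝ᵥ ξ := hξ
  linarith

theorem im_dotProduct_cons_le (hZ : Differentiable ℝ Z) {y : Fin N → ℝ} {κ T t : ℝ}
    (h_zero : Z (Fin.cons 0 y) = fun l => (y l : ℂ))
    (h_deriv : ∀ s ∈ Icc (-T) 0,
      κ ≤ (Complex.im ∘ fderiv ℝ Z (Fin.cons s y) (Pi.single 0 1)) ⬝ᵥ ξ)
    (ht : t ∈ Icc (-T) 0) : (Complex.im ∘ Z (Fin.cons t y)) ⬝ᵥ ξ ≤ κ * t := by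
  set u : ℝ → ℝ := fun s => (Complex.im ∘ Z (Fin.cons s y)) ⬝ᵥ ξ
  have h_cons : ∀ s, HasDerivAt (fun s => (Fin.cons s y : Fin (N + 1) → ℝ)) (Pi.single 0 1) s :=
    fun s => hasDerivAt_pi.2 <| Fin.cases (by simpa using hasDerivAt_id' s)
      fun k => by simpa using hasDerivAt_const s (y k)
  have hu : ∀ s,
      HasDerivAt u ((Complex.im ∘ fderiv ℝ Z (Fin.cons s y) (Pi.single 0 1)) ⬝ᵥ ξ) s := fun s =>
    HasDerivAt.fun_sum fun l _ => (Complex.imCLM.hasFDerivAt.comp_hasDerivAt s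
      (hasDerivAt_pi.1 ((hZ _).hasFDerivAt.comp_hasDerivAt s (h_cons s)) l)).mul_const _
  have h_growth := (convex_Icc (-T) 0).mul_sub_le_image_sub_of_le_deriv
    (fun s _ => (hu s).continuousAt.continuousWithinAt)
    (fun s _ => (hu s).differentiableAt.differentiableWithinAt)
    (fun s hs => (h_deriv s (interior_subset hs)).trans_eq (hu s).deriv.symm)
    t ht 0 ⟨ht.1.trans ht.2, le_rfl⟩ ht.2
  have hu_zero : u 0 = 0 := by simp [u, h_zero, dotProduct]
  linarith

theorem norm_sub_ofReal_tail_le {C : NNReal} (hZ : LipschitzWith C Z) {p : Fin (N + 1) → ℝ}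
    (h_zero : Z (Fin.cons 0 (Fin.tail p)) = fun l => ((Fin.tail p : Fin N → ℝ) l : ℂ)) :
    ‖Z p - fun l => ((Fin.tail p : Fin N → ℝ) l : ℂ)‖ ≤ C * |p 0| := by
  have h_dist : dist p (Fin.cons 0 (Fin.tail p)) ≤ |p 0| :=
    (dist_pi_le_iff (abs_nonneg _)).2 <| Fin.cases (by simp) fun k => by simp [Fin.tail]
  rw [← h_zero, ← dist_eq_norm]
  exact (hZ.dist_le_mul _ _).trans (mul_le_mul_of_nonneg_left h_dist C.2)

theorem fbiPhase_re_le {x y : Fin N → ℝ} {z : Fin N → ℂ} {C τ : ℝ} (hτ : 0 ≤ τ)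
    (h_im : (Complex.im ∘ z) ⬝ᵥ ξ ≤ -(2 * c * τ) * eNormR N ξ)
    (h_dist : ‖z - fun l => (y l : ℂ)‖ ≤ C * τ) (h_small : N * C ^ 2 * τ ≤ c) :
    (fbiPhase x ξ z).re ≤
      -(c * τ) * eNormR N ξ - eNormR N ξ * eNormR N (x - Complex.re ∘ z) ^ 2 := by
  have h_norm : ‖Complex.im ∘ z‖ ≤ C * τ :=
    (pi_norm_le_iff_of_nonneg ((norm_nonneg _).trans h_dist)).2 fun l => by
      simpa using (Complex.abs_im_le_norm _).trans ((norm_le_pi_norm _ l).trans h_dist)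
  have h_sq : eNormR N (Complex.im ∘ z) ^ 2 ≤ c * τ :=
    calc eNormR N (Complex.im ∘ z) ^ 2 ≤ N * ‖Complex.im ∘ z‖ ^ 2 := sq_eNormR_le _
      _ ≤ N * (C * τ) ^ 2 := by gcongr
      _ = N * C ^ 2 * τ * τ := by ring
      _ ≤ c * τ := mul_le_mul_of_nonneg_right h_small hτ
  have h_mul := mul_le_mul_of_nonneg_left h_sq (eNormR_nonneg ξ)
  rw [fbiPhase_re]
  linarith

theorem half_le_eNormR_sub_re {x y : Fin N → ℝ} {z : Fin N → ℂ} {r : ℝ}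
    (hx : ‖x‖ ≤ r / 4) (hy : r ≤ ‖y‖) (h_dist : ‖z - fun l => (y l : ℂ)‖ ≤ r / 4) :
    r / 2 ≤ eNormR N (x - Complex.re ∘ z) := by
  have h_re : ‖Complex.re ∘ z - y‖ ≤ r / 4 :=
    (pi_norm_le_iff_of_nonneg ((norm_nonneg _).trans h_dist)).2 fun l => by
      simpa using (Complex.abs_re_le_norm _).trans ((norm_le_pi_norm _ l).trans h_dist)
  have h_triangle : ‖y‖ ≤ ‖x‖ + ‖x - Complex.re ∘ z‖ + ‖Complex.re ∘ z - y‖ :=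
    calc ‖y‖ = ‖x - (x - Complex.re ∘ z) - (Complex.re ∘ z - y)‖ := by abel_nf
      _ ≤ _ := (norm_sub_le _ _).trans (add_le_add_left (norm_sub_le _ _) _)
  linarith [norm_le_eNormR (x - Complex.re ∘ z)]

theorem phaseDecay_of_lipschitzWith {Γ : Set (Fin N → ℝ)} {r T : ℝ} {C : NNReal}
    (hc : 0 ≤ c) (hZ : LipschitzWith C Z)
    (h_zero : ∀ y : Fin N → ℝ, ‖y‖ ≤ 2 * r → Z (Fin.cons 0 y) = fun l => (y l : ℂ))
    (h_im : ∀ ξ ∈ Γ, ∀ p ∈ halfCylinder T (2 * r),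
      (Complex.im ∘ Z p) ⬝ᵥ ξ ≤ 2 * c * p 0 * eNormR N ξ)
    (hT : N * (C : ℝ) ^ 2 * T ≤ c) (hT' : C * T ≤ r / 4) : PhaseDecay Z Γ r T c := by
  have h_dist : ∀ p ∈ halfCylinder T (2 * r),
      ‖Z p - fun l => ((Fin.tail p : Fin N → ℝ) l : ℂ)‖ ≤ C * -p 0 := fun p hp => by
    simpa [abs_of_nonpos hp.1.2] using norm_sub_ofReal_tail_le hZ (h_zero _ hp.2)
  have h_re : ∀ x, ∀ ξ ∈ Γ, ∀ p ∈ halfCylinder T (2 * r), (fbiPhase x ξ (Z p)).re ≤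
      c * p 0 * eNormR N ξ - eNormR N ξ * eNormR N (x - Complex.re ∘ Z p) ^ 2 := by
    intro x ξ hξ p hp
    have h_small : N * (C : ℝ) ^ 2 * -p 0 ≤ c :=
      (mul_le_mul_of_nonneg_left (neg_le.1 hp.1.1) (by positivity)).trans hT
    refine (fbiPhase_re_le (neg_nonneg.2 hp.1.2) ((h_im ξ hξ p hp).trans_eq (by ring))
      (h_dist p hp) h_small).trans_eq (by ring)
  refine ⟨fun x _ ξ hξ p hp => ?_, fun x hx ξ hξ p hp hp_ge => ?_⟩
  · exact (h_re x ξ hξ p hp).trans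
      (sub_le_self _ (mul_nonneg (eNormR_nonneg ξ) (sq_nonneg _)))
  · have h_near : ‖Z p - fun l => ((Fin.tail p : Fin N → ℝ) l : ℂ)‖ ≤ r / 4 :=
      (h_dist p hp).trans <| (mul_le_mul_of_nonneg_left (neg_le.1 hp.1.1) C.2).trans hT'
    have h_far : r / 2 ≤ eNormR N (x - Complex.re ∘ Z p) :=
      half_le_eNormR_sub_re (mem_ball_zero_iff.1 hx).le hp_ge h_near
    have hr : 0 ≤ r / 2 := by linarith [(norm_nonneg _).trans h_near]
    have h_sq : eNormR N ξ * (r / 2) ^ 2 ≤ eNormR N ξ * eNormR N (x - Complex.re ∘ Z p) ^ 2 :=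
      mul_le_mul_of_nonneg_left (pow_le_pow_left₀ hr h_far 2) (eNormR_nonneg ξ)
    have h_time : c * p 0 * eNormR N ξ ≤ 0 :=
      mul_nonpos_of_nonpos_of_nonneg (mul_nonpos_of_nonneg_of_nonpos hc hp.1.2) (eNormR_nonneg ξ)
    linarith [h_re x ξ hξ p hp]

theorem exists_pos_mul_le (K L : ℝ) {ε ε' ε'' : ℝ} (hε : 0 < ε) (hε' : 0 < ε') (hε'' : 0 < ε'') :
    ∃ T > 0, T ≤ ε ∧ K * T ≤ ε' ∧ L * T ≤ ε'' := by
  have h_small : ∀ (K : ℝ) {ε : ℝ}, 0 < ε → ∀ᶠ T in 𝓝[>] 0, K * T ≤ ε := fun K ε hε =>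
    ((continuous_const_mul K).tendsto' 0 0 (mul_zero K)).mono_left nhdsWithin_le_nhds
      |>.eventually_le_const hε
  obtain ⟨T, ⟨h, h', h''⟩, hT⟩ := ((h_small 1 hε).and ((h_small K hε').and (h_small L hε''))).and
    self_mem_nhdsWithin |>.exists
  exact ⟨T, hT, by simpa using h, h', h''⟩

theorem exists_phaseDecay (hZ : ContDiff ℝ 1 Z) (hZ_supp : HasCompactSupport Z) {R : ℝ}
    (hR : 0 < R) (h_zero : ∀ y : Fin N → ℝ, ‖y‖ ≤ R → Z (Fin.cons 0 y) = fun l => (y l : ℂ))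
    (hβ : Complex.im ∘ fderiv ℝ Z 0 (Pi.single 0 1) = β) (hc : 0 < c) :
    ∃ r T, 0 < r ∧ 2 * r < R ∧ 0 < T ∧ T ≤ r ∧ PhaseDecay Z (directionCone β c) r T (c / 4) := by
  have h_cont : Continuous fun p => Complex.im ∘ fderiv ℝ Z p (Pi.single 0 1) :=
    continuous_pi fun l => Complex.continuous_im.comp <| (continuous_apply l).comp <|
      (hZ.continuous_fderiv one_ne_zero).clm_apply continuous_const
  have h_near := (h_cont.tendsto' 0 β hβ).eventually
    (eventually_le_dotProduct_of_mem_directionCone (half_lt_self hc))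
  obtain ⟨ρ, hρ, h_near⟩ := Metric.eventually_nhds_iff_ball.1 h_near
  obtain ⟨C, hC⟩ := hZ.lipschitzWith_of_hasCompactSupport hZ_supp one_ne_zero
  obtain ⟨r, hr, h_lt⟩ : ∃ r > 0, 2 * r < min ρ R :=
    ⟨min ρ R / 4, by positivity, by linarith [lt_min hρ hR]⟩
  obtain ⟨hrρ, hrR⟩ := lt_min_iff.1 h_lt
  obtain ⟨T, hT, hTr, hT_small, hT_small'⟩ := exists_pos_mul_le (N * (C : ℝ) ^ 2) C hr
    (show 0 < c / 4 by positivity) (show 0 < r / 4 by positivity)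
  refine ⟨r, T, hr, hrR, hT, hTr, phaseDecay_of_lipschitzWith (by positivity) hC
    (fun y hy => h_zero y (hy.trans hrR.le)) (fun ξ hξ p hp => ?_) hT_small hT_small'⟩
  have h_mem : ∀ s ∈ Icc (-T) 0, (Fin.cons s (Fin.tail p) : Fin (N + 1) → ℝ) ∈ Metric.ball 0 ρ := by
    refine fun s hs => halfCylinder_subset_ball hrρ ⟨⟨?_, hs.2⟩, by simpa using hp.2⟩
    exact (neg_le_neg (hTr.trans (by linarith))).trans hs.1
  have h_im := im_dotProduct_cons_le (hZ.differentiable one_ne_zero)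
    (h_zero _ (hp.2.trans hrR.le)) (fun s hs => h_near _ (h_mem s hs) ξ hξ) hp.1
  rw [Fin.cons_self_tail] at h_im
  exact h_im.trans_eq (by ring)

end PhaseDecay

/-! ### Decay of the F.B.I. transform of the trace at `t = 0` -/

section TraceDecay

variable {N : ℕ} {Z : (Fin (N + 1) → ℝ) → Fin N → ℂ} {g : (Fin (N + 1) → ℝ) → ℂ}

theorem FBIT_eq_setIntegral_add {T ρ : ℝ} (hT : 0 ≤ T) (hρ : 0 ≤ ρ) (hZ : ContDiff ℝ 1 Z)
    (hZ_supp : HasCompactSupport Z) (hg : ContDiff ℝ 1 g)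
    (hg_zero : ∀ p, ρ ≤ ‖(Fin.tail p : Fin N → ℝ)‖ → g p = 0)
    (h_zero : ∀ y : Fin N → ℝ, ‖y‖ ≤ ρ → ∀ᶠ y' in 𝓝 y, Z (Fin.cons 0 y') = fun l => (y' l : ℂ))
    (x ξ : Fin N → ℝ) :
    FBIT N (fun y => g (Fin.cons 0 y)) x ξ =
      (∫ p in halfCylinder T ρ, Complex.exp (fbiPhase x ξ (Z p)) *
        borderedDet (partials g p) (jacobianRows Z p)) +
      ∫ y in {y : Fin N → ℝ | ‖y‖ ≤ ρ}, Complex.exp (fbiPhase x ξ (Z (Fin.cons (-T) y))) *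
        (g (Fin.cons (-T) y) *
          borderedDet (Pi.single 0 1) (jacobianRows Z (Fin.cons (-T) y))) := by
  set Φ : (Fin N → ℂ) → ℂ := fun z => Complex.exp (fbiPhase x ξ z)
  have hΦ : ContDiff ℂ 1 Φ := contDiff_cexp_fbiPhase x ξ
  have h_stokes := setIntegral_borderedDet_eq_sub (f := fun p => Φ (Z p) * g p)
    (((hΦ.restrict_scalars ℝ).comp hZ).mul hg) hZ hZ_supp (neg_nonpos.2 hT)
    (a := fun _ => -ρ) (b := fun _ => ρ) (fun _ => neg_le_self hρ) fun p i hi => by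
      have h_le : ρ ≤ |p i.succ| := not_lt.1 fun h => hi (abs_lt.1 h)
      simp [hg_zero p (h_le.trans (norm_le_pi_norm (Fin.tail p : Fin N → ℝ) i))]
  rw [← halfCylinder_eq_Icc hρ, Icc_neg_eq_setOf_norm_le hρ] at h_stokes
  have h_trace : FBIT N (fun y => g (Fin.cons 0 y)) x ξ =
      ∫ y in {y : Fin N → ℝ | ‖y‖ ≤ ρ}, Φ (Z (Fin.cons 0 y)) * g (Fin.cons 0 y) *
        borderedDet (Pi.single 0 1) (jacobianRows Z (Fin.cons 0 y)) := by
    rw [FBIT_eq_integral_cexp_fbiPhase, ← setIntegral_eq_integral_of_forall_compl_eq_zero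
      (s := {y : Fin N → ℝ | ‖y‖ ≤ ρ}) fun y hy => by
        simp [hg_zero (Fin.cons 0 y) (by simpa using (not_le.1 hy).le)]]
    refine setIntegral_congr_fun (isClosed_le continuous_norm continuous_const).measurableSet
      fun y hy => ?_
    simp only [borderedDet_single_zero_jacobianRows_cons_zero (hZ.differentiable one_ne_zero _)
      (h_zero y hy), (h_zero y hy).self_of_nhds, mul_one, Φ]
  have h_interior : ∀ p, borderedDet (partials (fun p => Φ (Z p) * g p) p) (jacobianRows Z p) =
      Φ (Z p) * borderedDet (partials g p) (jacobianRows Z p) := fun p =>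
    borderedDet_partials_comp_mul (hΦ.differentiable one_ne_zero _)
      (hZ.differentiable one_ne_zero _) (hg.differentiable one_ne_zero _)
  simp only [h_interior] at h_stokes
  rw [h_trace, h_stokes]
  simp only [Φ, mul_assoc, sub_add_cancel]

variable {M : ℕ → ℝ} {Γ : Set (Fin N → ℝ)} {r T c : ℝ}

theorem PhaseDecay.dcDecay_face (hM : ∀ k, (k ! : ℝ) ≤ M k) (hT : 0 < T) (hc : 0 < c)
    (hΓ : ∀ ξ ∈ Γ, ξ ≠ 0) (h : PhaseDecay Z Γ r T c) (hZ : ContDiff ℝ 1 Z)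
    (hg : ContDiff ℝ 1 g) :
    DCDecay M ((Metric.ball 0 (r / 4) ×ˢ Γ) ×ˢ {y : Fin N → ℝ | ‖y‖ ≤ 2 * r})
      (fun q => eNormR N q.1.2) fun q =>
        Complex.exp (fbiPhase q.1.1 q.1.2 (Z (Fin.cons (-T) q.2))) * (g (Fin.cons (-T) q.2) *
          borderedDet (Pi.single 0 1) (jacobianRows Z (Fin.cons (-T) q.2))) := by
  have h_cont : Continuous fun y : Fin N → ℝ => g (Fin.cons (-T) y) *
      borderedDet (Pi.single 0 1) (jacobianRows Z (Fin.cons (-T) y)) :=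
    (hg.continuous.comp (continuous_cons_right _)).mul
      (continuous_borderedDet_jacobianRows continuous_const hZ (continuous_cons_right _))
  obtain ⟨K, hK⟩ := (isCompact_closedBall (0 : Fin N → ℝ) (2 * r)).exists_bound_of_continuousOn
    h_cont.continuousOn
  refine .of_le_exp_neg hM (fun q hq => eNormR_pos (hΓ _ hq.1.2)) (abs_nonneg K)
    (mul_pos hc hT) ?_
  rintro ⟨⟨x, ξ⟩, y⟩ ⟨⟨hx, hξ⟩, hy⟩
  have h_mem : (Fin.cons (-T) y : Fin (N + 1) → ℝ) ∈ halfCylinder T (2 * r) :=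
    ⟨⟨le_rfl, neg_nonpos.2 hT.le⟩, hy⟩
  rw [norm_mul, Complex.norm_exp, mul_comm]
  refine mul_le_mul ((hK y (mem_closedBall_zero_iff.2 hy)).trans (le_abs_self K))
    (Real.exp_le_exp.2 ((h.re_le x hx ξ hξ _ h_mem).trans_eq ?_)) (Real.exp_pos _).le
    (abs_nonneg K)
  simp

theorem PhaseDecay.dcDecay_of_le_norm (hM : ∀ k, (k ! : ℝ) ≤ M k) (hr : 0 < r)
    (hΓ : ∀ ξ ∈ Γ, ξ ≠ 0) (h : PhaseDecay Z Γ r T c) (hZ : ContDiff ℝ 1 Z)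
    (hg : ContDiff ℝ 1 g) :
    DCDecay M ((Metric.ball 0 (r / 4) ×ˢ Γ) ×ˢ
        {p | p ∈ halfCylinder T (2 * r) ∧ r ≤ ‖(Fin.tail p : Fin N → ℝ)‖})
      (fun q => eNormR N q.1.2) fun q => Complex.exp (fbiPhase q.1.1 q.1.2 (Z q.2)) *
        borderedDet (partials g q.2) (jacobianRows Z q.2) := by
  obtain ⟨K, hK⟩ := (isCompact_halfCylinder (T := T) (ρ := 2 * r)
    (by positivity)).exists_bound_of_continuousOn (continuous_borderedDet_jacobianRows
      (continuous_partials hg) hZ continuous_id).continuousOn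
  refine .of_le_exp_neg hM (fun q hq => eNormR_pos (hΓ _ hq.1.2)) (abs_nonneg K)
    (show 0 < r ^ 2 / 4 by positivity) ?_
  rintro ⟨⟨x, ξ⟩, p⟩ ⟨⟨hx, hξ⟩, hp, hp_ge⟩
  rw [norm_mul, Complex.norm_exp, mul_comm]
  exact mul_le_mul ((hK p hp).trans (le_abs_self K))
    (Real.exp_le_exp.2 (h.re_le_of_le_norm x hx ξ hξ p hp hp_ge)) (Real.exp_pos _).le
    (abs_nonneg K)

theorem PhaseDecay.dcDecay_of_dcFlat (hM : ∀ k, 0 ≤ M k) (hr : 0 < r) (hTr : T ≤ r) (hc : 0 < c)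
    (hΓ : ∀ ξ ∈ Γ, ξ ≠ 0) (h : PhaseDecay Z Γ r T c) {a : (Fin N → ℝ) → Fin N → ℂ} {Q : ℝ}
    (hQ : 0 < Q) (hZ : ContDiff ℝ 1 Z) (hZ_flat : DCFlat M a Q r Z) (hg : ContDiff ℝ 1 g)
    (hg_flat : DCFlat M a Q r g) :
    DCDecay M ((Metric.ball 0 (r / 4) ×ˢ Γ) ×ˢ halfCylinder T r) (fun q => eNormR N q.1.2)
      fun q => Complex.exp (fbiPhase q.1.1 q.1.2 (Z q.2)) *
        borderedDet (partials g q.2) (jacobianRows Z q.2) := by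
  obtain ⟨B, hB⟩ := (isCompact_halfCylinder (T := T) hr.le).exists_bound_of_continuousOn
    ((hg.continuous_fderiv one_ne_zero).prodMk (hZ.continuous_fderiv one_ne_zero)).continuousOn
  refine .of_le_flat_mul_exp_neg hM (fun q hq => eNormR_pos (hΓ _ hq.1.2))
    (τ := fun q => |q.2 0|) (fun _ _ => abs_nonneg _) (K := (N + 1)! * |B| ^ N)
    (by positivity) hQ hc ?_
  rintro ⟨⟨x, ξ⟩, p⟩ ⟨⟨hx, hξ⟩, hp⟩ k
  have h_mem : p ∈ halfCylinder r r := ⟨⟨(neg_le_neg hTr).trans hp.1.1, hp.1.2⟩, hp.2⟩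
  have h_mem' : p ∈ halfCylinder T (2 * r) := ⟨hp.1, by linarith [hp.2]⟩
  have h_bound := norm_prod_le_iff.1 ((hB p hp).trans (le_abs_self B))
  have h_det : ‖borderedDet (partials g p) (jacobianRows Z p)‖ ≤
      (N + 1)! * |B| ^ N * (Q ^ (k + 1) * DCm M k * |p 0| ^ k) :=
    (norm_borderedDet_le_of_fieldDeriv (a (Fin.tail p)) h_bound.1 h_bound.2
      (hg_flat.norm_fieldDeriv_le hr hg h_mem k)
      (hZ_flat.norm_fieldDeriv_le hr hZ h_mem k)).trans_eq (by ring)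
  have h_exp : Real.exp (fbiPhase x ξ (Z p)).re ≤ Real.exp (-(c * |p 0| * eNormR N ξ)) :=
    Real.exp_le_exp.2 ((h.re_le x hx ξ hξ p h_mem').trans_eq (by
      rw [abs_of_nonpos hp.1.2]; ring))
  rw [norm_mul, Complex.norm_exp, mul_comm]
  exact mul_le_mul h_det h_exp (Real.exp_pos _).le ((norm_nonneg _).trans h_det)

theorem PhaseDecay.dcDecay_interior (hM : ∀ k, (k ! : ℝ) ≤ M k) (hr : 0 < r) (hTr : T ≤ r)
    (hc : 0 < c) (hΓ : ∀ ξ ∈ Γ, ξ ≠ 0) (h : PhaseDecay Z Γ r T c)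
    {a : (Fin N → ℝ) → Fin N → ℂ} {Q : ℝ} (hQ : 0 < Q) (hZ : ContDiff ℝ 1 Z)
    (hZ_flat : DCFlat M a Q r Z) (hg : ContDiff ℝ 1 g) (hg_flat : DCFlat M a Q r g) :
    DCDecay M ((Metric.ball 0 (r / 4) ×ˢ Γ) ×ˢ halfCylinder T (2 * r))
      (fun q => eNormR N q.1.2) fun q => Complex.exp (fbiPhase q.1.1 q.1.2 (Z q.2)) *
        borderedDet (partials g q.2) (jacobianRows Z q.2) := by
  have hM_nonneg : ∀ k, 0 ≤ M k := fun k => (Nat.cast_nonneg _).trans (hM k)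
  have h_split : (halfCylinder T (2 * r) : Set (Fin (N + 1) → ℝ)) =
      halfCylinder T r ∪ {p | p ∈ halfCylinder T (2 * r) ∧ r ≤ ‖(Fin.tail p : Fin N → ℝ)‖} := by
    ext p
    refine ⟨fun hp => (le_total _ r).imp (fun hp_le => ⟨hp.1, hp_le⟩) fun hp_ge => ⟨hp, hp_ge⟩, ?_⟩
    rintro (hp | hp)
    · exact ⟨hp.1, by linarith [hp.2]⟩
    · exact hp.1
  rw [h_split, prod_union]
  exact (h.dcDecay_of_dcFlat hM_nonneg hr hTr hc hΓ hQ hZ hZ_flat hg hg_flat).union hM_nonneg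
    (fun q hq => eNormR_pos (hΓ _ (hq.elim (fun h => h.1.2) fun h => h.1.2)))
    (h.dcDecay_of_le_norm hM hr hΓ hZ hg)

theorem PhaseDecay.dcDecay_FBIT (hM : ∀ k, (k ! : ℝ) ≤ M k) (hr : 0 < r) (hT : 0 < T)
    (hTr : T ≤ r) (hc : 0 < c) (hΓ : ∀ ξ ∈ Γ, ξ ≠ 0) (h : PhaseDecay Z Γ r T c)
    {a : (Fin N → ℝ) → Fin N → ℂ} {Q : ℝ} (hQ : 0 < Q) (hZ : ContDiff ℝ 1 Z)
    (hZ_supp : HasCompactSupport Z) (hZ_flat : DCFlat M a Q r Z)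
    (h_zero : ∀ y : Fin N → ℝ, ‖y‖ ≤ 2 * r →
      ∀ᶠ y' in 𝓝 y, Z (Fin.cons 0 y') = fun l => (y' l : ℂ))
    (hg : ContDiff ℝ 1 g) (hg_flat : DCFlat M a Q r g)
    (hg_zero : ∀ p, 2 * r ≤ ‖(Fin.tail p : Fin N → ℝ)‖ → g p = 0) :
    DCDecay M (Metric.ball 0 (r / 4) ×ˢ Γ) (fun q => eNormR N q.2) fun q =>
      FBIT N (fun y => g (Fin.cons 0 y)) q.1 q.2 := by
  have hr' : 0 ≤ 2 * r := by positivity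
  have hM_nonneg : ∀ k, 0 ≤ M k := fun k => (Nat.cast_nonneg _).trans (hM k)
  have h_pos : ∀ q ∈ Metric.ball (0 : Fin N → ℝ) (r / 4) ×ˢ Γ, 0 < eNormR N q.2 := fun q hq =>
    eNormR_pos (hΓ _ hq.2)
  have h_finite : volume {y : Fin N → ℝ | ‖y‖ ≤ 2 * r} < ⊤ := by
    rw [← Icc_neg_eq_setOf_norm_le hr']
    exact isCompact_Icc.measure_lt_top
  have h_interior := (h.dcDecay_interior hM hr hTr hc hΓ hQ hZ hZ_flat hg hg_flat).setIntegral
    (μ := volume) hM_nonneg h_pos (isCompact_halfCylinder hr').measure_lt_top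
  have h_face := (h.dcDecay_face hM hT hc hΓ hZ hg).setIntegral hM_nonneg h_pos h_finite
  have h_stokes := FBIT_eq_setIntegral_add hT.le hr' hZ hZ_supp hg hg_zero h_zero
  exact (h_interior.add hM_nonneg h_pos h_face).congr fun q _ => (h_stokes q.1 q.2).symm

end TraceDecay

section DCFlat

variable {N : ℕ} {M : ℕ → ℝ} {a : (Fin N → ℝ) → Fin N → ℂ} {Q R : ℝ}

theorem DCFlat.of_eventuallyEq {F : Type*} [NormedAddCommGroup F] [NormedSpace ℝ F]
    [NormedSpace ℂ F] {H H' : (Fin (N + 1) → ℝ) → F} {R' : ℝ} (h : DCFlat M a Q R H)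
    (hR : R' ≤ R) (h_eq : ∀ p ∈ halfCylinder R' R', H' =ᶠ[𝓝 p] H) : DCFlat M a Q R' H' := by
  intro p hp hp_neg k
  rw [fieldDeriv, (h_eq p hp).fderiv_eq]
  exact h p ⟨⟨(neg_le_neg hR).trans hp.1.1, hp.1.2⟩, hp.2.trans hR⟩ hp_neg k

theorem DCFlat.pi {ι : Type*} [Fintype ι] {H : (Fin (N + 1) → ℝ) → ι → ℂ} (hM : ∀ k, 0 ≤ M k)
    (hQ : 0 ≤ Q) (hH : Differentiable ℝ H) (h : ∀ i, DCFlat M a Q R fun p => H p i) :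
    DCFlat M a Q R H := by
  intro p hp hp_neg k
  have hm : 0 ≤ DCm M k := div_nonneg (hM k) (by positivity)
  refine (pi_norm_le_iff_of_nonneg (by positivity)).2 fun i => ?_
  have h_apply : fieldDeriv (a (Fin.tail p)) H p i =
      fieldDeriv (a (Fin.tail p)) (fun p => H p i) p := by
    simp [fieldDeriv, fderiv_apply (hH p)]
  exact h_apply ▸ h i p hp hp_neg k

end DCFlat

/-- The inclusion `(t, y) ↦ (y, t eⱼ)` of the slice on which `r` runs along the `j`-th axis. -/
noncomputable def sliceMap {N n : ℕ} (j : Fin n) :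
    (Fin (N + 1) → ℝ) →L[ℝ] (Fin N → ℝ) × (Fin n → ℝ) :=
  (ContinuousLinearMap.pi fun i => .proj i.succ).prod
    ((ContinuousLinearMap.single ℝ (fun _ => ℝ) j).comp (.proj 0))

/-- The restriction of `H` to the `j`-th slice, cut off by `θ` so as to be defined globally. -/
noncomputable def sliceCutoff {N n : ℕ} {F : Type*} [NormedAddCommGroup F] [NormedSpace ℝ F]
    (j : Fin n) (θ : ContDiffBump (0 : Fin (N + 1) → ℝ))
    (H : (Fin N → ℝ) × (Fin n → ℝ) → F) (p : Fin (N + 1) → ℝ) : F :=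
  θ p • H (sliceMap j p)

section SliceCutoff

variable {N n : ℕ} {F : Type*} [NormedAddCommGroup F] [NormedSpace ℝ F] {j : Fin n}
  {θ : ContDiffBump (0 : Fin (N + 1) → ℝ)} {H : (Fin N → ℝ) × (Fin n → ℝ) → F}
  {Ω : Set (Fin N → ℝ)}

theorem sliceMap_apply (j : Fin n) (p : Fin (N + 1) → ℝ) :
    sliceMap j p = (Fin.tail p, Pi.single j (p 0)) := rfl

theorem hasCompactSupport_sliceCutoff : HasCompactSupport (sliceCutoff j θ H) :=
  θ.hasCompactSupport.smul_right

theorem contDiff_sliceCutoff (hΩ : IsOpen Ω) (hθ : Metric.closedBall 0 θ.rOut ⊆ Ω)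
    (hH : ContDiffOn ℝ 1 H (Ω ×ˢ univ)) : ContDiff ℝ 1 (sliceCutoff j θ H) := by
  refine contDiff_iff_contDiffAt.2 fun p => ?_
  by_cases hp : p ∈ tsupport (sliceCutoff j θ H)
  · have h_norm : ‖p‖ ≤ θ.rOut :=
      mem_closedBall_zero_iff.1 (θ.tsupport_eq ▸ tsupport_smul_subset_left _ _ hp)
    have h_tail : ‖(Fin.tail p : Fin N → ℝ)‖ ≤ ‖p‖ :=
      (pi_norm_le_iff_of_nonneg (norm_nonneg _)).2 fun i => norm_le_pi_norm p i.succ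
    have h_mem : sliceMap j p ∈ Ω ×ˢ univ :=
      ⟨hθ (mem_closedBall_zero_iff.2 (h_tail.trans h_norm)), mem_univ _⟩
    exact θ.contDiff.contDiffAt.smul ((hH.contDiffAt ((hΩ.prod isOpen_univ).mem_nhds h_mem)).comp p
      (sliceMap j).contDiff.contDiffAt)
  · exact contDiffAt_const.congr_of_eventuallyEq (notMem_tsupport_iff_eventuallyEq.1 hp)

theorem sliceCutoff_eventuallyEq {p : Fin (N + 1) → ℝ} (hp : p ∈ Metric.ball 0 θ.rIn) :
    sliceCutoff j θ H =ᶠ[𝓝 p] H ∘ sliceMap j := by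
  filter_upwards [θ.eventuallyEq_one_of_mem_ball hp] with q hq
  simp [sliceCutoff, hq]

theorem sliceCutoff_cons_zero {y : Fin N → ℝ} (hy : ‖y‖ < θ.rIn) :
    sliceCutoff j θ H (Fin.cons 0 y) = H (y, 0) := by
  have h_mem : (Fin.cons 0 y : Fin (N + 1) → ℝ) ∈ halfCylinder ‖y‖ ‖y‖ := by simp [halfCylinder]
  simp [(sliceCutoff_eventuallyEq (halfCylinder_subset_ball hy h_mem)).self_of_nhds,
    sliceMap_apply]

theorem fieldDeriv_comp_sliceMap {a : Fin n → Fin N → (Fin N → ℝ) → ℂ}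
    {H : (Fin N → ℝ) → (Fin n → ℝ) → ℂ} {p : Fin (N + 1) → ℝ}
    (hH : DifferentiableAt ℝ (fun q : (Fin N → ℝ) × (Fin n → ℝ) => H q.1 q.2) (sliceMap j p)) :
    fieldDeriv (fun l => a j l (Fin.tail p)) ((fun q => H q.1 q.2) ∘ sliceMap j) p =
      Lop a j H (Fin.tail p) (Pi.single j (p 0)) := by
  set y : Fin N → ℝ := Fin.tail p
  set e : Fin n → ℝ := Pi.single j (p 0)
  set D := fderiv ℝ (fun q : (Fin N → ℝ) × (Fin n → ℝ) => H q.1 q.2) (y, e)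
  have h_deriv : HasFDerivAt (fun q : (Fin N → ℝ) × (Fin n → ℝ) => H q.1 q.2) D (y, e) :=
    hH.hasFDerivAt
  have h_comp : fderiv ℝ ((fun q => H q.1 q.2) ∘ sliceMap j) p = D.comp (sliceMap j) :=
    (hH.hasFDerivAt.comp p (sliceMap j).hasFDerivAt).fderiv
  have h_fst : fderiv ℝ (fun y' => H y' e) y = D.comp (.inl ℝ _ _) :=
    (h_deriv.comp (f := fun y' => (y', e)) y (hasFDerivAt_prodMk_left y e)).fderiv
  have h_snd : fderiv ℝ (H y) e = D.comp (.inr ℝ _ _) :=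
    (h_deriv.comp (f := fun e' => (y, e')) e (hasFDerivAt_prodMk_right y e)).fderiv
  have h_zero : sliceMap j (Pi.single 0 1 : Fin (N + 1) → ℝ) = (0, Pi.single j 1) := by
    rw [sliceMap_apply, Pi.single_eq_same]; rfl
  have h_succ : ∀ l : Fin N,
      sliceMap j (Pi.single l.succ 1 : Fin (N + 1) → ℝ) = (Pi.single l 1, 0) := by
    intro l
    rw [sliceMap_apply, Pi.single_eq_of_ne (Fin.succ_ne_zero l).symm, Pi.single_zero]
    ext i <;> simp [Fin.tail, Pi.single_apply]
  simp [fieldDeriv, Lop, h_comp, h_fst, h_snd, h_zero, h_succ]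

theorem dcFlat_sliceCutoff {M : ℕ → ℝ} {Q R : ℝ} {a : Fin n → Fin N → (Fin N → ℝ) → ℂ}
    {H : (Fin N → ℝ) → (Fin n → ℝ) → ℂ} (hΩ : IsOpen Ω) (hRΩ : Metric.closedBall 0 R ⊆ Ω)
    (hRθ : R < θ.rIn)
    (hH : ContDiffOn ℝ 1 (fun q : (Fin N → ℝ) × (Fin n → ℝ) => H q.1 q.2) (Ω ×ˢ univ))
    (h : ∀ y ∈ Ω, ∀ t ∈ Ico (-R) 0, ∀ k,
      ‖Lop a j H y (Pi.single j t)‖ ≤ Q ^ (k + 1) * DCm M k * |t| ^ k) :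
    DCFlat M (fun y l => a j l y) Q R (sliceCutoff j θ fun q => H q.1 q.2) := by
  intro p hp hp_neg k
  have h_mem : Fin.tail p ∈ Ω := hRΩ (mem_closedBall_zero_iff.2 hp.2)
  have h_diff : DifferentiableAt ℝ (fun q : (Fin N → ℝ) × (Fin n → ℝ) => H q.1 q.2)
      (sliceMap j p) :=
    (hH.contDiffAt ((hΩ.prod isOpen_univ).mem_nhds ⟨h_mem, mem_univ _⟩)).differentiableAt
      one_ne_zero
  rw [fieldDeriv, (sliceCutoff_eventuallyEq (halfCylinder_subset_ball hRθ hp)).fderiv_eq,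
    ← fieldDeriv, fieldDeriv_comp_sliceMap h_diff]
  exact h _ h_mem _ ⟨hp.1.1, hp_neg⟩ k

end SliceCutoff

/-! ### Microlocal decay -/

section MicrolocalDecay

variable {N : ℕ} {M : ℕ → ℝ} {a : (Fin N → ℝ) → Fin N → ℂ} {Q R : ℝ}

theorem DCFlat.bump_smul {H : (Fin (N + 1) → ℝ) → ℂ} (h : DCFlat M a Q R H) {r : ℝ} (hr : r ≤ R)
    {χ : ContDiffBump (0 : Fin N → ℝ)} (hχ : r < χ.rIn) :
    DCFlat M a Q r fun p => χ (Fin.tail p) • H p := by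
  refine h.of_eventuallyEq hr fun p hp => ?_
  have h_mem : (Fin.tail p : Fin N → ℝ) ∈ Metric.ball 0 χ.rIn :=
    mem_ball_zero_iff.2 (hp.2.trans_lt hχ)
  have h_tail : Continuous (Fin.tail : (Fin (N + 1) → ℝ) → Fin N → ℝ) := by
    unfold Fin.tail
    fun_prop
  filter_upwards [h_tail.continuousAt.eventually (χ.eventuallyEq_one_of_mem_ball h_mem)] with q hq
  simp [hq]

theorem exists_dcDecay_FBIT (hM : ∀ k, (k ! : ℝ) ≤ M k) (hR : 0 < R) (hQ : 0 < Q)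
    {Z : (Fin (N + 1) → ℝ) → Fin N → ℂ} (hZ : ContDiff ℝ 1 Z) (hZ_supp : HasCompactSupport Z)
    (hZ_flat : DCFlat M a Q R Z)
    (h_zero : ∀ y : Fin N → ℝ, ‖y‖ ≤ R → Z (Fin.cons 0 y) = fun l => (y l : ℂ))
    {H : (Fin (N + 1) → ℝ) → ℂ} (hH : ContDiff ℝ 1 H) (hH_flat : DCFlat M a Q R H)
    {c : ℝ} (hc : 0 < c) :
    ∃ r > 0, 2 * r < R ∧ ∀ χ : ContDiffBump (0 : Fin N → ℝ), r < χ.rIn → χ.rOut ≤ 2 * r →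
      DCDecay M (Metric.ball 0 (r / 4) ×ˢ directionCone (-(Complex.im ∘ a 0)) c)
        (fun q => eNormR N q.2) fun q => FBIT N (fun y => χ y • H (Fin.cons 0 y)) q.1 q.2 := by
  have h_zero_near : ∀ y : Fin N → ℝ, ‖y‖ < R →
      ∀ᶠ y' in 𝓝 y, Z (Fin.cons 0 y') = fun l => (y' l : ℂ) := fun y hy => by
    filter_upwards [continuous_norm.continuousAt.eventually_lt_const hy] with y' hy'
    exact h_zero y' hy'.le
  have h_fderiv : Complex.im ∘ fderiv ℝ Z 0 (Pi.single 0 1) = -(Complex.im ∘ a 0) := by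
    rw [hZ_flat.fderiv_zero_single_zero hR hZ (h_zero_near 0 (by simpa using hR))]
    ext l
    simp
  obtain ⟨r, T, hr, hrR, hT, hTr, h_phase⟩ := exists_phaseDecay hZ hZ_supp hR h_zero h_fderiv hc
  refine ⟨r, hr, hrR, fun χ hχ_in hχ_out => ?_⟩
  have hr_le : r ≤ R := by linarith
  have h_tail : ContDiff ℝ 1 (Fin.tail : (Fin (N + 1) → ℝ) → Fin N → ℝ) := by
    unfold Fin.tail
    fun_prop
  exact h_phase.dcDecay_FBIT hM hr hT hTr (by positivity)
    (fun ξ hξ => ne_zero_of_mem_directionCone hξ) hQ hZ hZ_supp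
    (hZ_flat.of_eventuallyEq hr_le fun _ _ => .rfl) (fun y hy => h_zero_near y (hy.trans_lt hrR))
    ((χ.contDiff.comp h_tail).smul hH) (hH_flat.bump_smul hr_le hχ_in) fun p hp => by
      simp [χ.zero_of_le_dist ((hχ_out.trans hp).trans_eq (dist_zero_right _).symm)]

theorem exists_closedBall_three_mul_subset {X : Type*} [PseudoMetricSpace X] {x : X}
    {Ω : Set X} (hΩ : Ω ∈ 𝓝 x) {δ : ℝ} (hδ : 0 < δ) :
    ∃ R > 0, R < δ ∧ Metric.closedBall x (3 * R) ⊆ Ω := by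
  obtain ⟨ε, hε, hεΩ⟩ := Metric.nhds_basis_closedBall.mem_iff.1 hΩ
  refine ⟨min (ε / 3) (δ / 2), by positivity, (min_le_right _ _).trans_lt (half_lt_self hδ),
    (Metric.closedBall_subset_closedBall ?_).trans hεΩ⟩
  linarith [min_le_left (ε / 3) (δ / 2)]

theorem exists_dcDecay_FBIT_of_Lop (hM : ∀ k, (k ! : ℝ) ≤ M k) {Ω : Set (Fin N → ℝ)}
    (hΩ : IsOpen Ω) (hR : 0 < R) (hRΩ : Metric.closedBall 0 (3 * R) ⊆ Ω) {n : ℕ}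
    {a : Fin n → Fin N → (Fin N → ℝ) → ℂ} {j : Fin n} (hQ : 0 < Q)
    {Zf : Fin N → (Fin N → ℝ) → (Fin n → ℝ) → ℂ}
    (hZC1 : ∀ l, ContDiffOn ℝ 1
      (fun p : (Fin N → ℝ) × (Fin n → ℝ) => Zf l p.1 p.2) (Ω ×ˢ univ))
    (hZ0 : ∀ l, ∀ x ∈ Ω, Zf l x 0 = (x l : ℂ))
    (hZest : ∀ l, ∀ x ∈ Ω, ∀ t ∈ Ico (-R) 0, ∀ k,
      ‖Lop a j (Zf l) x (Pi.single j t)‖ ≤ Q ^ (k + 1) * DCm M k * |t| ^ k)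
    {Ψ : (Fin N → ℝ) → (Fin n → ℝ) → ℂ}
    (hΨC1 : ContDiffOn ℝ 1
      (fun p : (Fin N → ℝ) × (Fin n → ℝ) => Ψ p.1 p.2) (Ω ×ˢ univ))
    (hΨest : ∀ x ∈ Ω, ∀ t ∈ Ico (-R) 0, ∀ k,
      ‖Lop a j Ψ x (Pi.single j t)‖ ≤ Q ^ (k + 1) * DCm M k * |t| ^ k)
    {c : ℝ} (hc : 0 < c) :
    ∃ r > 0, 2 * r < R ∧ ∀ χ : ContDiffBump (0 : Fin N → ℝ), r < χ.rIn → χ.rOut ≤ 2 * r →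
      DCDecay M (Metric.ball 0 (r / 4) ×ˢ directionCone (fun l => -(a j l 0).im) c)
        (fun q => eNormR N q.2) fun q => FBIT N (fun y => χ y * Ψ y 0) q.1 q.2 := by
  let θ : ContDiffBump (0 : Fin (N + 1) → ℝ) := ⟨2 * R, 3 * R, by positivity, by linarith⟩
  have hRθ : R < θ.rIn := show R < 2 * R by linarith
  have hRΩ' : Metric.closedBall 0 R ⊆ Ω :=
    (Metric.closedBall_subset_closedBall (by linarith)).trans hRΩ
  set Z := sliceCutoff j θ fun q l => Zf l q.1 q.2
  have hZ : ContDiff ℝ 1 Z := contDiff_sliceCutoff hΩ hRΩ (contDiffOn_pi.2 hZC1)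
  have hZ_flat : DCFlat M (fun y l => a j l y) Q R Z :=
    .pi (fun k => (Nat.cast_nonneg _).trans (hM k)) hQ.le (hZ.differentiable one_ne_zero)
      fun l => dcFlat_sliceCutoff hΩ hRΩ' hRθ (hZC1 l) (hZest l)
  have h_zero : ∀ y : Fin N → ℝ, ‖y‖ ≤ R → Z (Fin.cons 0 y) = fun l => (y l : ℂ) := fun y hy =>
    (sliceCutoff_cons_zero (hy.trans_lt hRθ)).trans <| funext fun l =>
      hZ0 l y (hRΩ' (mem_closedBall_zero_iff.2 hy))
  obtain ⟨r, hr, hrR, h_decay⟩ := exists_dcDecay_FBIT hM hR hQ hZ hasCompactSupport_sliceCutoff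
    hZ_flat h_zero (contDiff_sliceCutoff (θ := θ) hΩ hRΩ hΨC1)
    (dcFlat_sliceCutoff hΩ hRΩ' hRθ hΨC1 hΨest) hc
  refine ⟨r, hr, hrR, fun χ hχ_in hχ_out => (h_decay χ hχ_in hχ_out).congr fun q _ => ?_⟩
  congr 1
  ext y
  obtain hy | hy := lt_or_ge ‖y‖ χ.rOut
  · simp [sliceCutoff_cons_zero (j := j) (hy.trans_le (hχ_out.trans (hrR.le.trans hRθ.le)))]
  · simp [χ.zero_of_le_dist (hy.trans_eq (dist_zero_right y).symm)]

end MicrolocalDecay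

theorem stmt17_general {N n : ℕ} {M : ℕ → ℝ} (hM : ∀ k, (k ! : ℝ) ≤ M k)
    {Ω : Set (Fin N → ℝ)} (hΩ : IsOpen Ω) (hΩ0 : (0 : Fin N → ℝ) ∈ Ω)
    (a : Fin n → Fin N → (Fin N → ℝ) → ℂ) (j0 : Fin n) {Q δ : ℝ} (hQ : 0 < Q) (hδ : 0 < δ)
    (Zf : Fin N → (Fin N → ℝ) → (Fin n → ℝ) → ℂ)
    (hZC1 : ∀ l, ContDiffOn ℝ 1
      (fun p : (Fin N → ℝ) × (Fin n → ℝ) => Zf l p.1 p.2) (Ω ×ˢ Set.univ))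
    (hZ0 : ∀ l, ∀ x ∈ Ω, Zf l x 0 = (x l : ℂ))
    (hZest : ∀ l, ∀ x ∈ Ω, ∀ t ∈ Ioo (-δ) 0, ∀ k,
      ‖Lop a j0 (Zf l) x (Pi.single j0 t)‖ ≤ Q ^ (k + 1) * DCm M k * |t| ^ k)
    {ξ0 : Fin N → ℝ} (hchar : ∑ l, (a j0 l 0).im * ξ0 l < 0)
    (Ψ : (Fin N → ℝ) → (Fin n → ℝ) → ℂ)
    (hΨC1 : ContDiffOn ℝ 1
      (fun p : (Fin N → ℝ) × (Fin n → ℝ) => Ψ p.1 p.2) (Ω ×ˢ Set.univ))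
    (hΨest : ∀ x ∈ Ω, ∀ t ∈ Ioo (-δ) 0, ∀ k,
      ‖Lop a j0 Ψ x (Pi.single j0 t)‖ ≤ Q ^ (k + 1) * DCm M k * |t| ^ k) :
    ∃ Γ : Set (Fin N → ℝ), IsOpen Γ ∧ ξ0 ∈ Γ ∧
      (∀ w ∈ Γ, ∀ t : ℝ, 0 < t → t • w ∈ Γ) ∧ (∀ w ∈ Γ, w ≠ 0) ∧
    ∃ V UU : Set (Fin N → ℝ), IsOpen V ∧ IsOpen UU ∧
      (0 : Fin N → ℝ) ∈ V ∧ closure V ⊆ UU ∧ IsCompact (closure V) ∧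
      closure UU ⊆ Ω ∧ IsCompact (closure UU) ∧
    ∃ χ : (Fin N → ℝ) → ℝ, ContDiff ℝ (⊤ : ℕ∞) χ ∧ HasCompactSupport χ ∧
      tsupport χ ⊆ Ω ∧ (∀ x ∈ UU, χ x = 1) ∧
    ∃ A > (0 : ℝ), ∀ x ∈ V, ∀ ξ ∈ Γ, ∀ k : ℕ,
      ‖FBIT N (fun y => (χ y : ℂ) * Ψ y 0) x ξ‖ ≤ A ^ (k + 1) * M k / (eNormR N ξ) ^ k := by
  obtain ⟨R, hR, hRδ, hRΩ⟩ := exists_closedBall_three_mul_subset (hΩ.mem_nhds hΩ0) hδ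
  have h_time : Ico (-R) 0 ⊆ Ioo (-δ) 0 := fun t ht => ⟨(neg_lt_neg hRδ).trans_le ht.1, ht.2⟩
  have h_angle : 0 < (fun l => -(a j0 l 0).im) ⬝ᵥ ξ0 := by simpa [dotProduct] using hchar
  obtain ⟨c, hc, hξ0⟩ := exists_mem_directionCone h_angle
  obtain ⟨r, hr, hrR, h_decay⟩ := exists_dcDecay_FBIT_of_Lop hM hΩ hR hRΩ hQ hZC1 hZ0
    (fun l x hx t ht => hZest l x hx t (h_time ht)) hΨC1
    (fun x hx t ht => hΨest x hx t (h_time ht)) hc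
  let χ : ContDiffBump (0 : Fin N → ℝ) := ⟨3 * r / 2, 2 * r, by positivity, by linarith⟩
  obtain ⟨A, hA, h_le⟩ := h_decay χ (show r < 3 * r / 2 by linarith) le_rfl
  have h_closure : ∀ s : ℝ, closure (Metric.ball (0 : Fin N → ℝ) s) ⊆ Metric.closedBall 0 s :=
    fun s => Metric.closure_ball_subset_closedBall
  have h_ball : Metric.closedBall 0 (2 * r) ⊆ Ω :=
    (Metric.closedBall_subset_closedBall (by linarith)).trans hRΩ
  exact ⟨_, isOpen_directionCone, hξ0, fun w hw t ht => smul_mem_directionCone hw ht,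
    fun w hw => ne_zero_of_mem_directionCone hw, Metric.ball 0 (r / 4), Metric.ball 0 r,
    Metric.isOpen_ball, Metric.isOpen_ball, Metric.mem_ball_self (by positivity),
    (h_closure _).trans (Metric.closedBall_subset_ball (by linarith)),
    Metric.isBounded_ball.isCompact_closure,
    (h_closure _).trans ((Metric.closedBall_subset_closedBall (by linarith)).trans h_ball),
    Metric.isBounded_ball.isCompact_closure, χ, χ.contDiff, χ.hasCompactSupport,
    χ.tsupport_eq.trans_subset h_ball, fun x hx => χ.one_of_mem_closedBall
      (Metric.ball_subset_closedBall (Metric.ball_subset_ball (show r ≤ 3 * r / 2 by linarith) hx)),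
    A, hA, fun x hx ξ hξ k => h_le (x, ξ) ⟨hx, hξ⟩ k⟩

/-- Lemma 3.4 of the paper: approximate solutions `Z_ℓ` of the system `L_j` together with
an approximately `L_{j_0}`-flat function `Ψ` yield Denjoy–Carleman decay of the F.B.I.
transform of `Ψ(·,0)` in the direction `ξ_0` whenever `Im a_{j_0}(0)·ξ_0 < 0`. -/
theorem stmt17 (N n : ℕ) (M : ℕ → ℝ) (hreg : DCRegular M)
    (Ω : Set (Fin N → ℝ)) (hΩ : IsOpen Ω) (hΩ0 : (0 : Fin N → ℝ) ∈ Ω)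
    (a : Fin n → Fin N → (Fin N → ℝ) → ℂ)
    (ha : ∀ j l, ContDiffOn ℝ 1 (a j l) Ω)
    (Q δ : ℝ) (hQ : 0 < Q) (hδ : 0 < δ)
    (Zf : Fin N → (Fin N → ℝ) → (Fin n → ℝ) → ℂ)
    (hZC1 : ∀ l, ContDiffOn ℝ 1
      (fun p : (Fin N → ℝ) × (Fin n → ℝ) => Zf l p.1 p.2) (Ω ×ˢ Set.univ))
    (hZ0 : ∀ l, ∀ x ∈ Ω, Zf l x 0 = (x l : ℂ))
    (hZest : ∀ (l : Fin N) (j : Fin n) (x : Fin N → ℝ) (r : Fin n → ℝ), x ∈ Ω →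
      0 < eNormR n r → eNormR n r < δ → ∀ k : ℕ,
        ‖Lop a j (Zf l) x r‖ ≤ Q ^ (k + 1) * DCm M k * (eNormR n r) ^ k)
    (ξ0 : Fin N → ℝ) (hξ0 : ξ0 ≠ 0) (j0 : Fin n)
    (hchar : ∑ l, (a j0 l 0).im * ξ0 l < 0)
    (Ψ : (Fin N → ℝ) → (Fin n → ℝ) → ℂ)
    (hΨC1 : ContDiffOn ℝ 1
      (fun p : (Fin N → ℝ) × (Fin n → ℝ) => Ψ p.1 p.2) (Ω ×ˢ Set.univ))
    (hΨest : ∀ (x : Fin N → ℝ) (r : Fin n → ℝ), x ∈ Ω →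
      0 < eNormR n r → eNormR n r < δ → ∀ k : ℕ,
        ‖Lop a j0 Ψ x r‖ ≤ Q ^ (k + 1) * DCm M k * (eNormR n r) ^ k) :
    ∃ Γ : Set (Fin N → ℝ), IsOpen Γ ∧ ξ0 ∈ Γ ∧
      (∀ w ∈ Γ, ∀ t : ℝ, 0 < t → t • w ∈ Γ) ∧ (∀ w ∈ Γ, w ≠ 0) ∧
    ∃ V UU : Set (Fin N → ℝ), IsOpen V ∧ IsOpen UU ∧
      (0 : Fin N → ℝ) ∈ V ∧ closure V ⊆ UU ∧ IsCompact (closure V) ∧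
      closure UU ⊆ Ω ∧ IsCompact (closure UU) ∧
    ∃ χ : (Fin N → ℝ) → ℝ, ContDiff ℝ (⊤ : ℕ∞) χ ∧ HasCompactSupport χ ∧
      tsupport χ ⊆ Ω ∧ (∀ x ∈ UU, χ x = 1) ∧
    ∃ A > (0 : ℝ), ∀ x ∈ V, ∀ ξ ∈ Γ, ∀ k : ℕ,
      ‖FBIT N (fun y => (χ y : ℂ) * Ψ y 0) x ξ‖ ≤ A ^ (k + 1) * M k / (eNormR N ξ) ^ k := by
  have h_axis : ∀ t ∈ Ioo (-δ) 0,
      0 < eNormR n (Pi.single j0 t) ∧ eNormR n (Pi.single j0 t) < δ := fun t ht => by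
    rw [eNormR_single, abs_of_neg ht.2]
    exact ⟨neg_pos.2 ht.2, neg_lt.1 ht.1⟩
  refine stmt17_general hreg.factorial_le hΩ hΩ0 a j0 hQ hδ Zf hZC1 hZ0
    (fun l x hx t ht k => ?_) hchar Ψ hΨC1 fun x hx t ht k => ?_
  · simpa only [eNormR_single] using hZest l j0 x _ hx (h_axis t ht).1 (h_axis t ht).2 k
  · simpa only [eNormR_single] using hΨest x _ hx (h_axis t ht).1 (h_axis t ht).2 k
end
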